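/- For every positive integer m, every weak Jacobi form φ of weight 1 and index m with optimal growth (i.e. C_φ(Δ,ℓ) = 0 for all Δ < −1) vanishes identically. -/

import Mathlib

noncomputable section

open Complex Filter Topology MeasureTheory
open scoped Classical

/-- `ee x = e^{2πix}`. -/
def ee (x : ℂ) : ℂ := Complex.exp (2 * (Real.pi : ℂ) * Complex.I * x)

/-- The index-`m` elliptic transformation law on `ℍ × ℂ`. -/
def EllipticLaw (m : ℕ) (φ : ℂ → ℂ → ℂ) : Prop :=
  ∀ τ : ℂ, 0 < τ.im → ∀ z : ℂ, ∀ lam mu : ℤ,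
    φ τ (z + (lam : ℂ) * τ + (mu : ℂ)) =
      ee (-(m : ℂ) * ((lam : ℂ) ^ 2 * τ + 2 * (lam : ℂ) * z)) * φ τ z

/-- The weight-`k` index-`m` modular transformation law on `ℍ × ℂ`. -/
def ModularLaw (k : ℤ) (m : ℕ) (φ : ℂ → ℂ → ℂ) : Prop :=
  ∀ τ : ℂ, 0 < τ.im → ∀ z : ℂ, ∀ a b c d : ℤ, a * d - b * c = 1 →
    φ (((a : ℂ) * τ + (b : ℂ)) / ((c : ℂ) * τ + (d : ℂ))) (z / ((c : ℂ) * τ + (d : ℂ))) =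
      ((c : ℂ) * τ + (d : ℂ)) ^ k *
        ee ((m : ℂ) * (c : ℂ) * z ^ 2 / ((c : ℂ) * τ + (d : ℂ))) * φ τ z

/-- The theta function `θ_{m,ℓ}(τ,z) = ∑_{r ≡ ℓ (mod 2m)} q^{r²/4m} y^r`. -/
def jTheta (m : ℕ) (l : ℤ) (τ z : ℂ) : ℂ :=
  ∑' n : ℤ, ee (((l : ℂ) + 2 * (m : ℂ) * (n : ℂ)) ^ 2 / (4 * (m : ℂ)) * τ +
      ((l : ℂ) + 2 * (m : ℂ) * (n : ℂ)) * z)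

/-- The point `z_s = ατ + β` for `s = (α,β) ∈ ℚ²`. -/
def zpt (s : ℚ × ℚ) (τ : ℂ) : ℂ := (s.1 : ℚ) * τ + (s.2 : ℚ)

/-- A holomorphic function on `ℍ × ℂ` satisfying the index-`m` elliptic transformation law,
together with its Fourier coefficient data `coeff Δ ℓ = C(Δ,ℓ)` (so that
`c(n,r) = C(4nm - r², r)`, `C(Δ,ℓ)` depends on `ℓ` only modulo `2m`, and `C(Δ,ℓ) = 0` on
pairs with `Δ + ℓ² ≢ 0 (mod 4m)`). -/
structure EllFormData (m : ℕ) where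
  toFun : ℂ → ℂ → ℂ
  coeff : ℤ → ℤ → ℂ
  holo : ∀ τ z : ℂ, 0 < τ.im → DifferentiableAt ℂ (fun p : ℂ × ℂ => toFun p.1 p.2) (τ, z)
  elliptic : EllipticLaw m toFun
  expansion : ∀ τ z : ℂ, 0 < τ.im →
    HasSum (fun p : ℤ × ℤ => coeff (4 * (m : ℤ) * p.1 - p.2 ^ 2) p.2 *
      ee ((p.1 : ℂ) * τ + (p.2 : ℂ) * z)) (toFun τ z)
  periodic : ∀ Δ l : ℤ, coeff Δ (l + 2 * (m : ℤ)) = coeff Δ l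
  support : ∀ Δ l : ℤ, ¬ (4 * (m : ℤ)) ∣ (Δ + l ^ 2) → coeff Δ l = 0

/-- An elliptic form is weak if `c(n,r) = 0` for `n < 0`. -/
def IsWeakC (m : ℕ) (C : ℤ → ℤ → ℂ) : Prop :=
  ∀ n r : ℤ, n < 0 → C (4 * (m : ℤ) * n - r ^ 2) r = 0

/-- Even coefficients: `C(Δ,-ℓ) = C(Δ,ℓ)`. -/
def IsEvenC (C : ℤ → ℤ → ℂ) : Prop := ∀ Δ l : ℤ, C Δ (-l) = C Δ l

/-- Holomorphic (as opposed to weak): `C(Δ,ℓ) = 0` for `Δ < 0`. -/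
def IsHolC (C : ℤ → ℤ → ℂ) : Prop := ∀ Δ l : ℤ, Δ < 0 → C Δ l = 0

/-- Cuspidal: `C(Δ,ℓ) = 0` for `Δ ≤ 0`. -/
def IsCuspC (C : ℤ → ℤ → ℂ) : Prop := ∀ Δ l : ℤ, Δ ≤ 0 → C Δ l = 0

/-- Optimal growth: `C(Δ,ℓ) = 0` for `Δ < -1`. -/
def IsOGC (C : ℤ → ℤ → ℂ) : Prop := ∀ Δ l : ℤ, Δ < -1 → C Δ l = 0

lemma ee_add (x y : ℂ) : ee (x + y) = ee x * ee y := by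
  simp only [ee, ← Complex.exp_add]; ring_nf
lemma ee_zero : ee 0 = 1 := by simp [ee]
lemma ee_ne (x : ℂ) : ee x ≠ 0 := by simp [ee]
lemma ee_int (n : ℤ) : ee n = 1 := by
  rw [ee, Complex.exp_eq_one_iff]; exact ⟨n, by ring⟩
lemma ee_neg (x : ℂ) : ee (-x) = (ee x)⁻¹ := by
  simp only [ee, ← Complex.exp_neg]; ring_nf
lemma ee_sub (x y : ℂ) : ee (x - y) = ee x * (ee y)⁻¹ := by
  rw [sub_eq_add_neg, ee_add, ee_neg]
lemma ee_add_int (x : ℂ) (n : ℤ) : ee (x + n) = ee x := by rw [ee_add, ee_int, mul_one]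
lemma ee_congr {x y : ℂ} (n : ℤ) (h : x = y + n) : ee x = ee y := by rw [h, ee_add_int]
lemma ee_nsmul (n : ℕ) (x : ℂ) : ee (n * x) = ee x ^ n := by
  simp only [ee, ← Complex.exp_nat_mul]; ring_nf
lemma norm_ee (x : ℂ) : ‖ee x‖ = Real.exp (-2 * Real.pi * x.im) := by
  rw [ee, Complex.norm_exp]; congr 1; simp [Complex.mul_re, Complex.mul_im]
lemma norm_ee_real (x : ℝ) : ‖ee x‖ = 1 := by simp [norm_ee]
lemma ee_eq_one_iff (x : ℂ) : ee x = 1 ↔ ∃ n : ℤ, x = n := by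
  rw [ee, Complex.exp_eq_one_iff]
  have : (2 * (Real.pi : ℂ) * I) ≠ 0 := Complex.two_pi_I_ne_zero
  constructor
  · rintro ⟨n, h⟩; refine ⟨n, ?_⟩
    apply mul_left_cancel₀ this; rw [h]; ring
  · rintro ⟨n, h⟩; exact ⟨n, by rw [h]; ring⟩
lemma continuous_ee : Continuous ee := by unfold ee; fun_prop
lemma differentiable_ee : Differentiable ℂ ee := by unfold ee; fun_prop

lemma integral_ee (k : ℤ) : ∫ x in (0:ℝ)..1, ee ((k:ℂ) * (x:ℂ)) = if k = 0 then 1 else 0 := by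
  split_ifs with h
  · subst h; simp [ee]
  · have hc : (2 * (Real.pi : ℂ) * I * k) ≠ 0 := by
      simp [h, Real.pi_ne_zero]
    have := integral_exp_mul_complex (a := 0) (b := 1) hc
    simp only [ee, ← mul_assoc]
    rw [this]
    have h1 : Complex.exp (2 * (Real.pi : ℂ) * I * k * (1:ℝ)) = 1 := by
      have := ee_int k; simpa [ee] using this
    rw [h1]; simp

/-- uniqueness of absolutely convergent Fourier series -/
lemma fourier_unique (a : ℤ → ℂ) (ha : Summable a)
    (h : ∀ x : ℝ, ∑' n : ℤ, a n * ee ((n:ℂ) * (x:ℂ)) = 0) : a = 0 := by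
  have ha := ha.norm
  funext k
  have hs := intervalIntegral.hasSum_integral_of_dominated_convergence
    (μ := volume) (a := 0) (b := 1)
    (F := fun n x => a n * ee ((n:ℂ) * (x:ℂ)) * ee (((-k : ℤ):ℂ) * (x:ℂ))) (f := fun _ => 0)
    (bound := fun n _ => ‖a n‖)
    (fun n => by
      apply Continuous.aestronglyMeasurable
      have := continuous_ee
      fun_prop)
    (fun n => by
      filter_upwards with x hx
      have e1 := norm_ee_real (n * x)
      have e2 := norm_ee_real ((-k:ℤ) * x)
      push_cast at e1 e2 ⊢
      rw [norm_mul, norm_mul, e1, e2]; simp)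
    (by filter_upwards with x hx using ha)
    (by simp)
    (by
      filter_upwards with x hx
      have hsum : Summable (fun n : ℤ => a n * ee ((n:ℂ) * (x:ℂ))) := by
        apply Summable.of_norm
        convert ha using 2 with n
        have e1 := norm_ee_real (n * x)
        push_cast at e1
        rw [norm_mul, e1, mul_one]
      have := hsum.hasSum.mul_right (ee (((-k : ℤ):ℂ) * (x:ℂ)))
      rw [h x, zero_mul] at this
      exact this)
  have hi : ∀ n : ℤ, ∫ x in (0:ℝ)..1, a n * ee ((n:ℂ) * (x:ℂ)) * ee (((-k : ℤ):ℂ) * (x:ℂ))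
      = if n = k then a k else 0 := by
    intro n
    have : ∀ x : ℝ, a n * ee ((n:ℂ) * (x:ℂ)) * ee (((-k : ℤ):ℂ) * (x:ℂ)) =
        a n * ee (((n - k : ℤ):ℂ) * (x:ℂ)) := by
      intro x; rw [mul_assoc, ← ee_add]; push_cast; ring_nf
    simp_rw [this]
    rw [intervalIntegral.integral_const_mul, integral_ee]
    by_cases hk : n = k
    · simp [hk]
    · simp [hk, sub_eq_zero]
  simp_rw [hi] at hs
  have h2 := hasSum_ite_eq k (a k)
  simp only [intervalIntegral.integral_zero] at hs
  simpa using h2.unique hs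

def Gs (c : ℤ × ℤ → ℂ) (τ z : ℂ) : ℂ := ∑' p : ℤ × ℤ, c p * ee ((p.1:ℂ) * τ + (p.2:ℂ) * z)

structure FS (M : ℕ) (c : ℤ × ℤ → ℂ) : Prop where
  summ : ∀ τ z : ℂ, 0 < τ.im → Summable fun p : ℤ × ℤ => c p * ee ((p.1:ℂ) * τ + (p.2:ℂ) * z)
  S : ∀ τ z : ℂ, 0 < τ.im → Gs c (-1/τ) (z/τ) = τ * ee (M * z^2/τ) * Gs c τ z

/-- uniqueness, double series -/
lemma Gs_unique (c : ℤ × ℤ → ℂ)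
    (hs : ∀ τ z : ℂ, 0 < τ.im → Summable fun p : ℤ × ℤ => c p * ee ((p.1:ℂ) * τ + (p.2:ℂ) * z))
    (h : ∀ τ z : ℂ, 0 < τ.im → Gs c τ z = 0) : c = 0 := by
  have hI : (0:ℝ) < (I).im := by simp
  -- inner
  have key : ∀ r : ℤ, ∀ x : ℝ, ∑' n : ℤ, c (n, r) * ee ((n:ℂ) * ((x:ℂ) + I)) = 0 := by
    intro r x
    have hx : 0 < ((x:ℂ) + I).im := by simp
    have hsx := hs (x + I) 0 hx
    simp only [mul_zero, add_zero] at hsx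
    have hsw : Summable (fun p : ℤ × ℤ => c (p.2, p.1) * ee ((p.2:ℂ) * ((x:ℂ) + I))) :=
      (Equiv.prodComm ℤ ℤ).summable_iff.mpr hsx
    have := fourier_unique (fun r => ∑' n : ℤ, c (n, r) * ee ((n:ℂ) * ((x:ℂ) + I))) hsw.prod
      (by
        intro y
        have h0 := h (x + I) y hx
        unfold Gs at h0
        rw [← (Equiv.prodComm ℤ ℤ).tsum_eq, Summable.tsum_prod] at h0
        · rw [← h0]; congr 1; funext r
          rw [← tsum_mul_right]; congr 1; funext n
          simp only [Equiv.prodComm_apply, Prod.swap]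
          rw [ee_add]; ring
        · exact (Equiv.prodComm ℤ ℤ).summable_iff.mpr (hs (x+I) y hx))
    exact congrFun this r
  funext ⟨n, r⟩
  have h1 := fourier_unique (fun n => c (n, r) * ee ((n:ℂ) * I))
    (by
      have := hs I 0 hI
      simp only [mul_zero, add_zero] at this
      exact this.comp_injective (i := fun n : ℤ => (n, r)) (fun a b h => by simpa using h))
    (by
      intro x
      rw [← key r x]; congr 1; funext n
      rw [mul_add, ee_add]; ring)
  have := congrFun h1 n
  simpa [ee_ne] using this

lemma Gs_T (c : ℤ × ℤ → ℂ) (τ z : ℂ) (b : ℤ) : Gs c (τ + b) z = Gs c τ z := by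
  unfold Gs; congr 1; funext p
  congr 1; apply ee_congr (p.1 * b); push_cast; ring

lemma im_neg_inv {τ : ℂ} (h : 0 < τ.im) : 0 < (-1/τ).im := by
  have h0 : τ ≠ 0 := by rintro rfl; simp at h
  have := Complex.normSq_pos.mpr h0
  rw [neg_div, one_div, Complex.neg_im, Complex.inv_im]
  rw [neg_div, neg_neg]; positivity

lemma ne_zero_of_im {τ : ℂ} (h : 0 < τ.im) : τ ≠ 0 := by rintro rfl; simp at h

def QA (M : ℕ) (f : ℂ → ℂ → ℂ) (A : Matrix.SpecialLinearGroup (Fin 2) ℤ) : Prop :=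
  ∀ τ z : ℂ, 0 < τ.im →
    f (((A 0 0 : ℤ) * τ + (A 0 1 : ℤ)) / ((A 1 0 : ℤ) * τ + (A 1 1 : ℤ))) (z / ((A 1 0 : ℤ) * τ + (A 1 1 : ℤ)))
     = ((A 1 0 : ℤ) * τ + (A 1 1 : ℤ)) * ee (M * (A 1 0 : ℤ) * z^2 / ((A 1 0 : ℤ) * τ + (A 1 1 : ℤ))) * f τ z

lemma den_ne {τ : ℂ} (h : 0 < τ.im) {a b c d : ℤ} (hd : a * d - b * c = 1) :
    (c:ℂ) * τ + d ≠ 0 := by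
  intro h0
  have him : ((c:ℂ) * τ + d).im = 0 := by rw [h0]; simp
  have hre : ((c:ℂ) * τ + d).re = 0 := by rw [h0]; simp
  simp at him hre
  have hc : c = 0 := by
    rcases him with h1 | h1
    · exact h1
    · exact absurd h1 h.ne'
  subst hc
  simp at hre
  subst hre; simp at hd

lemma moeb_im {τ : ℂ} (h : 0 < τ.im) {a b c d : ℤ} (hd : a * d - b * c = 1) :
    0 < (((a:ℂ) * τ + b) / ((c:ℂ) * τ + d)).im := by
  have hne := den_ne h hd
  have hn := Complex.normSq_pos.mpr hne
  have : (((a:ℂ) * τ + b) / ((c:ℂ) * τ + d)).im = τ.im / Complex.normSq ((c:ℂ) * τ + d) := by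
    rw [Complex.div_im]
    simp
    have hd' : (a:ℝ) * d - b * c = 1 := by exact_mod_cast hd
    rw [← sub_div]; congr 1
    linear_combination τ.im * hd'
  rw [this]; positivity

lemma det2 (A : Matrix.SpecialLinearGroup (Fin 2) ℤ) : A 0 0 * A 1 1 - A 0 1 * A 1 0 = 1 := by
  have := A.det_coe; rwa [Matrix.det_fin_two] at this

lemma QA_mul {M : ℕ} {f : ℂ → ℂ → ℂ} {A B : Matrix.SpecialLinearGroup (Fin 2) ℤ}
    (hA : QA M f A) (hB : QA M f B) : QA M f (A * B) := by
  intro τ z hτ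
  have e : ∀ i j, (A * B) i j = A i 0 * B 0 j + A i 1 * B 1 j := by
    intro i j; simp [Matrix.mul_apply, Fin.sum_univ_two]
  have dA := det2 A
  have dB := det2 B
  have dAB := det2 (A * B)
  have h1 := hB τ z hτ
  have hτ' := moeb_im hτ dB
  have h2 := hA _ (z / ((B 1 0 : ℤ) * τ + (B 1 1 : ℤ))) hτ'
  have n1 := den_ne hτ dB
  have n2 := den_ne hτ' dA
  have n3 := den_ne hτ dAB
  simp only [e] at n3 ⊢
  generalize A 0 0 = a at *; generalize A 0 1 = b at *; generalize A 1 0 = c at *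
  generalize A 1 1 = d at *
  generalize B 0 0 = a' at *; generalize B 0 1 = b' at *; generalize B 1 0 = c' at *
  generalize B 1 1 = d' at *
  push_cast at n3 ⊢
  have dB' : (a':ℂ) * d' - b' * c' = 1 := by exact_mod_cast dB
  obtain ⟨j, hj⟩ : ∃ j : ℂ, j = c' * τ + d' := ⟨_, rfl⟩
  obtain ⟨k, hk⟩ : ∃ k : ℂ, k = (c * a' + d * c') * τ + (c * b' + d * d') := ⟨_, rfl⟩
  rw [← hj] at h1 h2 n1 n2
  rw [← hk] at n3 ⊢
  have key : (c:ℂ) * ((a' * τ + b') / j) + d = k / j := by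
    field_simp; rw [hj, hk]; ring
  rw [key] at h2 n2
  rw [h1] at h2
  have e1 : (((a:ℂ) * a' + b * c') * τ + (a * b' + b * d')) / k
      = (a * ((a' * τ + b') / j) + b) / (k / j) := by
    field_simp; rw [hj]; ring
  have e2 : z / k = z / j / (k / j) := by field_simp
  rw [e1, e2, h2]
  have e3 : ee (M * (c * a' + d * c') * z ^ 2 / k) =
      ee (M * c * (z / j) ^ 2 / (k / j)) * ee (M * c' * z ^ 2 / j) := by
    rw [← ee_add]; congr 1
    field_simp
    rw [hj, hk]
    linear_combination (M:ℂ) * z^2 * (c:ℂ) * dB'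
  rw [e3]; field_simp

lemma QA_inv {M : ℕ} {f : ℂ → ℂ → ℂ} {A : Matrix.SpecialLinearGroup (Fin 2) ℤ}
    (hA : QA M f A) : QA M f A⁻¹ := by
  intro τ z hτ
  have dA := det2 A
  have e00 : A⁻¹ 0 0 = A 1 1 := by simp [Matrix.SpecialLinearGroup.coe_inv, Matrix.adjugate_fin_two]
  have e01 : A⁻¹ 0 1 = -A 0 1 := by simp [Matrix.SpecialLinearGroup.coe_inv, Matrix.adjugate_fin_two]
  have e10 : A⁻¹ 1 0 = -A 1 0 := by simp [Matrix.SpecialLinearGroup.coe_inv, Matrix.adjugate_fin_two]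
  have e11 : A⁻¹ 1 1 = A 0 0 := by simp [Matrix.SpecialLinearGroup.coe_inv, Matrix.adjugate_fin_two]
  have dI := det2 A⁻¹
  have hτ' := moeb_im hτ dI
  have n1 := den_ne hτ dI
  have h2 := hA _ (z / ((A⁻¹ 1 0 : ℤ) * τ + (A⁻¹ 1 1 : ℤ))) hτ'
  have n2 := den_ne hτ' dA
  rw [e00, e01, e10, e11] at *
  generalize A 0 0 = a at *; generalize A 0 1 = b at *; generalize A 1 0 = c at *
  generalize A 1 1 = d at *
  push_cast at *
  have dA' : (a:ℂ) * d - b * c = 1 := by exact_mod_cast dA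
  obtain ⟨j, hj⟩ : ∃ j : ℂ, j = -c * τ + a := ⟨_, rfl⟩
  rw [← hj] at h2 n1 n2 ⊢
  have key : (c:ℂ) * ((d * τ + -b) / j) + d = 1 / j := by
    field_simp; rw [hj]; linear_combination dA'
  rw [key] at h2
  have k2 : (a * (((d:ℂ) * τ + -b) / j) + b) / (1 / j) = τ := by
    field_simp; rw [hj]; linear_combination τ * dA'
  rw [k2] at h2
  have k3 : z / j / (1 / j) = z := by field_simp
  rw [k3] at h2
  rw [h2]
  have k4 : (M:ℂ) * c * (z / j) ^ 2 / (1 / j) = -(M * -c * z ^ 2 / j) := by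
    field_simp
  rw [k4, ee_neg]
  have := ee_ne (M * -c * z ^ 2 / j)
  generalize ee (M * -c * z ^ 2 / j) = w at *
  field_simp

lemma QA_all {M : ℕ} {f : ℂ → ℂ → ℂ}
    (hS : ∀ τ z : ℂ, 0 < τ.im → f (-1/τ) (z/τ) = τ * ee (M * z^2/τ) * f τ z)
    (hT : ∀ τ z : ℂ, 0 < τ.im → f (τ + 1) z = f τ z)
    (A : Matrix.SpecialLinearGroup (Fin 2) ℤ) : QA M f A := by
  have hmem : A ∈ Subgroup.closure {ModularGroup.S, ModularGroup.T} := by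
    rw [SpecialLinearGroup.SL2Z_generators]; trivial
  induction hmem using Subgroup.closure_induction with
  | mem x hx =>
    rcases hx with rfl | rfl
    · intro τ z hτ
      have := hS τ z hτ
      simpa [ModularGroup.S] using this
    · intro τ z hτ
      have := hT τ z hτ
      simpa [ModularGroup.T, ee_zero] using this
  | one => intro τ z hτ; simp [ee_zero]
  | mul x y _ _ hx hy => exact QA_mul hx hy
  | inv x _ hx => exact QA_inv hx

lemma FS.modular {M : ℕ} {c : ℤ × ℤ → ℂ} (h : FS M c) {τ z : ℂ} (hτ : 0 < τ.im)
   {a b c' d : ℤ} (hd : a * d - b * c' = 1) :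
   Gs c (((a : ℂ) * τ + b) / ((c' : ℂ) * τ + d)) (z / ((c' : ℂ) * τ + d)) =
      ((c' : ℂ) * τ + d) * ee ((M : ℂ) * c' * z ^ 2 / ((c' : ℂ) * τ + d)) * Gs c τ z := by
  have := QA_all h.S (fun τ z _ => by simpa using Gs_T c τ z 1)
    ⟨!![a, b; c', d], by rw [Matrix.det_fin_two_of]; exact hd⟩ τ z hτ
  simpa using this

lemma sum_ee_range (N : ℕ) (hN : 0 < N) (n : ℤ) :
    ∑ b ∈ Finset.range N, ee ((n:ℂ) * (b:ℂ) / N) = if (N:ℤ) ∣ n then (N:ℂ) else 0 := by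
  have hN' : (N:ℂ) ≠ 0 := by exact_mod_cast hN.ne'
  have e : ∀ b : ℕ, ee ((n:ℂ) * (b:ℂ) / N) = ee ((n:ℂ) / N) ^ b := by
    intro b; rw [← ee_nsmul]; congr 1; field_simp
  simp_rw [e]
  split_ifs with h
  · obtain ⟨k, rfl⟩ := h
    have : ee (((N * k : ℤ):ℂ) / N) = 1 := by
      rw [ee_eq_one_iff]; exact ⟨k, by push_cast; field_simp⟩
    rw [this]; simp
  · have hne : ee ((n:ℂ) / N) ≠ 1 := by
      rw [Ne, ee_eq_one_iff]; rintro ⟨k, hk⟩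
      apply h; refine ⟨k, ?_⟩
      rw [div_eq_iff hN'] at hk
      have : (n:ℂ) = ((N * k : ℤ):ℂ) := by rw [hk]; push_cast; ring
      exact_mod_cast this
    rw [geom_sum_eq hne, ← ee_nsmul]
    have : ee ((N:ℂ) * ((n:ℂ)/N)) = 1 := by
      rw [mul_div_cancel₀ _ hN']; exact ee_int n
    rw [this]; simp

lemma sum_Icc_shift (k : ℕ) (g : ℤ → ℂ) :
    ∑ x ∈ Finset.Icc (-(k:ℤ)) k, g x = ∑ j ∈ Finset.range (2 * k + 1), g ((j:ℤ) - k) := by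
  symm
  apply Finset.sum_nbij (fun j : ℕ => (j:ℤ) - k)
  · intro j hj; simp at hj ⊢; omega
  · intro a _ b _ h; simp at h; omega
  · intro x hx; simp at hx ⊢
    exact ⟨(x + k).toNat, by omega, by omega⟩
  · intros; rfl

lemma sum_ee_Icc (k : ℕ) (n : ℤ) :
    ∑ b ∈ Finset.Icc (-(k:ℤ)) k, ee ((n:ℂ) * (b:ℂ) / (2 * k + 1 : ℕ)) =
      if ((2 * k + 1 : ℕ):ℤ) ∣ n then ((2 * k + 1 : ℕ):ℂ) else 0 := by
  rw [sum_Icc_shift k (fun b => ee ((n:ℂ) * (b:ℂ) / (2 * k + 1 : ℕ)))]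
  have hN' : ((2 * k + 1 : ℕ):ℂ) ≠ 0 := by exact_mod_cast (Nat.succ_ne_zero (2*k))
  have h1 := sum_ee_range (2 * k + 1) (Nat.succ_pos _) n
  have : ∀ j : ℕ, ee ((n:ℂ) * (((j:ℤ) - k : ℤ):ℂ) / (2 * k + 1 : ℕ)) =
     ee (-((n:ℂ) * k / (2 * k + 1 : ℕ))) * ee ((n:ℂ) * (j:ℂ) / (2 * k + 1 : ℕ)) := by
    intro j; rw [← ee_add]; congr 1; push_cast; ring
  simp_rw [this]
  rw [← Finset.mul_sum, h1]
  split_ifs with h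
  · obtain ⟨l, rfl⟩ := h
    have : ee (-((((2 * k + 1 : ℕ) * l : ℤ):ℂ) * k / (2 * k + 1 : ℕ))) = 1 := by
      rw [ee_eq_one_iff]; refine ⟨-(l * k), ?_⟩
      rw [Int.cast_mul, Int.cast_natCast, mul_assoc, mul_div_cancel_left₀ _ hN']
      push_cast; ring
    rw [this, one_mul]
  · simp

lemma FS.hasSum {M : ℕ} {c : ℤ × ℤ → ℂ} (h : FS M c) {τ : ℂ} (hτ : 0 < τ.im) (z : ℂ) :
    HasSum (fun p : ℤ × ℤ => c p * ee ((p.1:ℂ) * τ + (p.2:ℂ) * z)) (Gs c τ z) :=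
  (h.summ τ z hτ).hasSum

def Vc (p : ℕ) (c : ℤ × ℤ → ℂ) : ℤ × ℤ → ℂ := fun x =>
  c (p * x.1, x.2) + if (p:ℤ) ∣ x.1 ∧ (p:ℤ) ∣ x.2 then c (x.1 / p, x.2 / p) else 0

lemma im_pos_nat_mul {τ : ℂ} (hτ : 0 < τ.im) {p : ℕ} (hp : 0 < p) : 0 < ((p:ℂ) * τ).im := by
  have : (0:ℝ) < p := by exact_mod_cast hp
  simp; positivity
lemma im_pos_div_nat {τ : ℂ} (hτ : 0 < τ.im) {p : ℕ} (hp : 0 < p) (b : ℂ) (hb : b.im = 0) :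
    0 < ((τ + b) / p).im := by
  have : (0:ℝ) < p := by exact_mod_cast hp
  rw [Complex.div_natCast_im, Complex.add_im, hb, add_zero]; positivity

lemma Vc_hasSum {M : ℕ} {c : ℤ × ℤ → ℂ} (h : FS M c) {p : ℕ} (hp : 0 < p) {τ : ℂ} (hτ : 0 < τ.im) (z : ℂ) :
    HasSum (fun x : ℤ × ℤ => Vc p c x * ee ((x.1:ℂ) * τ + (x.2:ℂ) * z))
     ((p:ℂ)⁻¹ * ∑ b ∈ Finset.range p, Gs c ((τ + (b:ℤ)) / p) z + Gs c (p * τ) (p * z)) := by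
  have hp' : (p:ℂ) ≠ 0 := by exact_mod_cast hp.ne'
  have hpz : (p:ℤ) ≠ 0 := by exact_mod_cast hp.ne'
  simp only [Vc, add_mul]
  apply HasSum.add
  · have h1 : HasSum (fun x : ℤ × ℤ => (p:ℂ)⁻¹ * ∑ b ∈ Finset.range p,
        c x * ee ((x.1:ℂ) * ((τ + (b:ℤ)) / p) + (x.2:ℂ) * z))
        ((p:ℂ)⁻¹ * ∑ b ∈ Finset.range p, Gs c ((τ + (b:ℤ)) / p) z) := by
      apply HasSum.mul_left
      apply hasSum_sum
      intro b _
      exact h.hasSum (im_pos_div_nat hτ hp _ (by simp)) z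
    have h2 : ∀ x : ℤ × ℤ, (p:ℂ)⁻¹ * ∑ b ∈ Finset.range p,
        c x * ee ((x.1:ℂ) * ((τ + (b:ℤ)) / p) + (x.2:ℂ) * z) =
        if (p:ℤ) ∣ x.1 then c x * ee ((x.1:ℂ) * (τ / p) + (x.2:ℂ) * z) else 0 := by
      intro x
      have e : ∀ b : ℕ, c x * ee ((x.1:ℂ) * ((τ + (b:ℤ)) / p) + (x.2:ℂ) * z) =
         c x * ee ((x.1:ℂ) * (τ / p) + (x.2:ℂ) * z) * ee ((x.1:ℂ) * (b:ℂ) / p) := by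
        intro b; rw [mul_assoc, ← ee_add]; congr 2; push_cast; ring
      simp_rw [e]
      rw [← Finset.mul_sum, sum_ee_range p hp]
      split_ifs
      · field_simp
      · simp
    simp_rw [h2] at h1
    have inj : Function.Injective (fun x : ℤ × ℤ => ((p:ℤ) * x.1, x.2)) := by
      rintro ⟨a, b⟩ ⟨a', b'⟩ hh; simp at hh; simp; omega
    rw [← inj.hasSum_iff] at h1
    · convert h1 using 1
      funext x
      simp only [Function.comp, dvd_mul_right, if_true]
      congr 2; push_cast; field_simp
    · rintro ⟨a, b⟩ hx
      rw [if_neg]; rintro ⟨k, hk⟩; apply hx; exact ⟨(k, b), by simp at hk; simp [hk]⟩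
  · have h1 := h.hasSum (im_pos_nat_mul hτ hp) (p * z)
    have inj : Function.Injective (fun x : ℤ × ℤ => ((p:ℤ) * x.1, (p:ℤ) * x.2)) := by
      rintro ⟨a, b⟩ ⟨a', b'⟩ hh; simp [hp.ne'] at hh; simp [hh]
    rw [← inj.hasSum_iff]
    · convert h1 using 1
      funext x
      simp only [Function.comp, dvd_mul_right, and_self, if_true]
      rw [Int.mul_ediv_cancel_left _ hpz, Int.mul_ediv_cancel_left _ hpz]
      congr 2; push_cast; ring
    · rintro ⟨a, b⟩ hx
      rw [if_neg, zero_mul]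
      rintro ⟨⟨k, hk⟩, ⟨l, hl⟩⟩; apply hx; exact ⟨(k, l), by simp at hk hl; simp [hk, hl]⟩

lemma sum_range_zmod (p : ℕ) [NeZero p] (g : ℕ → ℂ) :
    ∑ b ∈ Finset.range p, g b = ∑ b : ZMod p, g b.val := by
  symm
  apply Finset.sum_nbij (fun b : ZMod p => b.val)
  · intro b _; simp [ZMod.val_lt]
  · intro a _ b _ h; exact ZMod.val_injective p h
  · intro x hx; simp at hx; exact ⟨(x : ZMod p), by simp, by simp [ZMod.val_natCast_of_lt hx]⟩
  · intros; rfl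

lemma Vc_FS {M : ℕ} {c : ℤ × ℤ → ℂ} (h : FS M c) {p : ℕ} (hp : p.Prime) : FS (M * p) (Vc p c) := by
  have hp0 := hp.pos
  have : Fact p.Prime := ⟨hp⟩
  have hp' : (p:ℂ) ≠ 0 := by exact_mod_cast hp.ne_zero
  refine ⟨fun τ z hτ => (Vc_hasSum h hp0 hτ z).summable, fun τ z hτ => ?_⟩
  have hτ0 := ne_zero_of_im hτ
  have e1 : Gs (Vc p c) τ z = _ := (Vc_hasSum h hp0 hτ z).tsum_eq
  have e2 : Gs (Vc p c) (-1/τ) (z/τ) = _ := (Vc_hasSum h hp0 (im_neg_inv hτ) (z/τ)).tsum_eq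
  rw [e1, e2, sum_range_zmod p (fun b => Gs c ((τ + (b:ℤ)) / p) z),
    sum_range_zmod p (fun b => Gs c ((-1/τ + (b:ℤ)) / p) (z/τ))]
  rw [← Finset.add_sum_erase _ _ (Finset.mem_univ (0 : ZMod p)),
    ← Finset.add_sum_erase _ _ (Finset.mem_univ (0 : ZMod p))]
  have t1 : Gs c ((p:ℂ) * (-1/τ)) ((p:ℂ) * (z/τ)) =
      (p:ℂ)⁻¹ * (τ * ee ((M * p : ℕ) * z^2/τ) * Gs c (τ/p) z) := by
    have := h.S (τ/p) z (by simpa using im_pos_div_nat hτ hp0 0 rfl)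
    have a1 : (p:ℂ) * (-1/τ) = -1/(τ/p) := by field_simp
    have a2 : (p:ℂ) * (z/τ) = z/(τ/p) := by field_simp
    rw [a1, a2, this]
    have a3 : (M:ℂ) * z^2/(τ/p) = (M * p : ℕ) * z^2/τ := by push_cast; field_simp
    rw [a3]; field_simp
  have t2 : Gs c ((-1/τ)/p) (z/τ) = p * (τ * ee ((M * p : ℕ) * z^2/τ) * Gs c (p * τ) (p * z)) := by
    have := h.S (p * τ) (p * z) (im_pos_nat_mul hτ hp0)
    have a1 : (-1/τ)/p = -1/(p * τ) := by field_simp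
    have a2 : (z/τ) = p * z/(p * τ) := by field_simp
    rw [a1, a2, this]
    have a3 : (M:ℂ) * (p * z)^2/(p * τ) = (M * p : ℕ) * z^2/τ := by push_cast; field_simp
    rw [a3]; field_simp
  have t3 : ∑ x ∈ Finset.univ.erase (0 : ZMod p), Gs c ((-1/τ + ((x.val:ℕ):ℤ)) / p) (z/τ) =
      τ * ee ((M * p : ℕ) * z^2/τ) * ∑ x ∈ Finset.univ.erase (0 : ZMod p), Gs c ((τ + ((x.val:ℕ):ℤ)) / p) z := by
    rw [Finset.mul_sum]
    apply Finset.sum_nbij' (fun x : ZMod p => -x⁻¹) (fun x : ZMod p => -x⁻¹)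
    · intro x hx; simpa using hx
    · intro x hx; simpa using hx
    · intro x hx; simp [inv_neg]
    · intro x hx; simp [inv_neg]
    · intro x hx
      have hx0 : x ≠ 0 := by simpa using hx
      obtain ⟨y, hy⟩ : ∃ y, y = -x⁻¹ := ⟨_, rfl⟩
      rw [← hy]
      have hdvd : (p:ℤ) ∣ (x.val:ℤ) * (y.val:ℤ) + 1 := by
        rw [← ZMod.intCast_zmod_eq_zero_iff_dvd]
        push_cast; rw [ZMod.natCast_zmod_val, ZMod.natCast_zmod_val, hy]
        field_simp; ring
      obtain ⟨q, hq⟩ := hdvd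
      generalize (x.val:ℤ) = b at *
      generalize (y.val:ℤ) = b' at *
      have := h.modular (τ := (τ + b')/p) (z := z) (im_pos_div_nat hτ hp0 _ (by simp))
        (a := b) (b := -q) (c' := p) (d := -b') (by linear_combination -hq)
      have hq' : (b:ℂ) * b' + 1 = p * q := by exact_mod_cast hq
      push_cast at this
      have a0 : (p:ℂ) * ((τ + b')/p) + -b' = τ := by field_simp; ring
      have a1 : ((b:ℂ) * ((τ + b')/p) + -q) / τ = (-1/τ + b)/p := by
        field_simp; linear_combination hq'
      rw [a0, a1] at this
      rw [this]; push_cast; rfl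
  rw [t3]
  simp only [ZMod.val_zero, Nat.cast_zero, Int.cast_zero, add_zero]
  rw [t1, t2]; field_simp; ring

def Wc (m k : ℕ) (c : ℤ × ℤ → ℂ) : ℤ × ℤ → ℂ := fun x =>
  ∑ l ∈ Finset.Icc (-(k:ℤ)) k, c (x.1 - x.2 * l + m * l^2, (2 * k + 1 : ℕ) * (x.2 - 2 * m * l))

lemma Wc_hasSum {m k : ℕ} {c : ℤ × ℤ → ℂ} (h : FS (m * (2 * k + 1)^2) c) {τ : ℂ} (hτ : 0 < τ.im) (z : ℂ) :
    HasSum (fun x : ℤ × ℤ => Wc m k c x * ee ((x.1:ℂ) * τ + (x.2:ℂ) * z))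
     (∑ l ∈ Finset.Icc (-(k:ℤ)) k, (((2 * k + 1 : ℕ):ℂ)⁻¹ * ∑ μ ∈ Finset.Icc (-(k:ℤ)) k,
       (ee (m * ((l:ℂ)^2 * τ + 2 * l * z)) * Gs c τ ((z + l * τ + μ) / (2 * k + 1 : ℕ))))) := by
  obtain ⟨p, hpk⟩ : ∃ p : ℕ, p = 2 * k + 1 := ⟨_, rfl⟩
  have hp : 0 < p := by omega
  have hp' : (p:ℂ) ≠ 0 := by exact_mod_cast hp.ne'
  have hpz : (p:ℤ) ≠ 0 := by exact_mod_cast hp.ne'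
  simp only [Wc, Finset.sum_mul]
  simp only [← hpk] at h ⊢
  apply hasSum_sum
  intro l _
  have h1 : HasSum (fun x : ℤ × ℤ => (p:ℂ)⁻¹ * ∑ μ ∈ Finset.Icc (-(k:ℤ)) k,
       (ee (m * ((l:ℂ)^2 * τ + 2 * l * z)) * (c x * ee ((x.1:ℂ) * τ + (x.2:ℂ) * ((z + l * τ + μ) / p)))))
       ((p:ℂ)⁻¹ * ∑ μ ∈ Finset.Icc (-(k:ℤ)) k,
       (ee (m * ((l:ℂ)^2 * τ + 2 * l * z)) * Gs c τ ((z + l * τ + μ) / p))) := by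
    apply HasSum.mul_left
    apply hasSum_sum
    intro b _
    exact (h.hasSum hτ _).mul_left _
  have h2 : ∀ x : ℤ × ℤ, (p:ℂ)⁻¹ * ∑ μ ∈ Finset.Icc (-(k:ℤ)) k,
       (ee (m * ((l:ℂ)^2 * τ + 2 * l * z)) * (c x * ee ((x.1:ℂ) * τ + (x.2:ℂ) * ((z + l * τ + μ) / p)))) =
       if (p:ℤ) ∣ x.2 then c x * ee (m * ((l:ℂ)^2 * τ + 2 * l * z) + (x.1:ℂ) * τ + (x.2:ℂ) * ((z + l * τ)/p)) else 0 := by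
    intro x
    have e : ∀ μ : ℤ, (ee (m * ((l:ℂ)^2 * τ + 2 * l * z)) * (c x * ee ((x.1:ℂ) * τ + (x.2:ℂ) * ((z + l * τ + μ) / p)))) =
       c x * ee (m * ((l:ℂ)^2 * τ + 2 * l * z) + (x.1:ℂ) * τ + (x.2:ℂ) * ((z + l * τ)/p)) * ee ((x.2:ℂ) * (μ:ℂ) / p) := by
      intro b
      rw [mul_left_comm, mul_assoc (c x), ← ee_add, ← ee_add]; congr 2; ring
    simp_rw [e]
    rw [← Finset.mul_sum]
    have := sum_ee_Icc k x.2
    rw [← hpk] at this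
    rw [this]
    split_ifs
    · field_simp
    · simp
  simp_rw [h2] at h1
  have inj : Function.Injective (fun x : ℤ × ℤ => (x.1 - x.2 * l + m * l^2, (p:ℤ) * (x.2 - 2 * m * l))) := by
    rintro ⟨a, b⟩ ⟨a', b'⟩ hh; simp [hp.ne'] at hh
    obtain ⟨h1, h2⟩ := hh
    subst h2; simp at h1; simp [h1]
  rw [← inj.hasSum_iff] at h1
  · convert h1 using 1
    funext x
    simp only [Function.comp, dvd_mul_right, if_true]
    congr 2; push_cast; field_simp; ring
  · rintro ⟨a, b⟩ hx
    rw [if_neg]; rintro ⟨s, hs⟩; apply hx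
    refine ⟨(a + s * l + m * l^2, s + 2 * m * l), ?_⟩
    simp at hs
    simp [hs]; ring

lemma Wc_FS {m k : ℕ} {c : ℤ × ℤ → ℂ} (h : FS (m * (2 * k + 1)^2) c) : FS m (Wc m k c) := by
  refine ⟨fun τ z hτ => (Wc_hasSum h hτ z).summable, fun τ z hτ => ?_⟩
  have hτ0 := ne_zero_of_im hτ
  have e1 : Gs (Wc m k c) τ z = _ := (Wc_hasSum h hτ z).tsum_eq
  have e2 : Gs (Wc m k c) (-1/τ) (z/τ) = _ := (Wc_hasSum h (im_neg_inv hτ) (z/τ)).tsum_eq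
  rw [e1, e2]
  obtain ⟨p, hpk⟩ : ∃ p : ℕ, p = 2 * k + 1 := ⟨_, rfl⟩
  have hp : 0 < p := by omega
  have hp' : (p:ℂ) ≠ 0 := by exact_mod_cast hp.ne'
  simp only [← hpk] at h ⊢
  rw [← Finset.mul_sum, ← Finset.mul_sum]
  rw [mul_left_comm]; congr 1
  rw [Finset.sum_comm, Finset.mul_sum]
  apply Finset.sum_congr rfl
  intro μ _
  rw [Finset.mul_sum]
  apply Finset.sum_nbij' (fun x : ℤ => -x) (fun x : ℤ => -x)
  · intro x hx; simp at hx ⊢; omega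
  · intro x hx; simp at hx ⊢; omega
  · intro x hx; simp
  · intro x hx; simp
  · intro l _
    have a1 : (z / τ + l * (-1/τ) + μ) / p = ((z + μ * τ + (-l : ℤ)) / p) / τ := by
      push_cast; field_simp; ring
    rw [a1, h.S _ _ hτ]
    have a2 : ee (m * ((l:ℂ)^2 * (-1/τ) + 2 * l * (z/τ))) * ee ((m * p^2 : ℕ) * ((z + μ * τ + (-l:ℤ)) / p)^2/τ)
      = ee (m * z^2/τ) * ee (m * ((μ:ℂ)^2 * τ + 2 * μ * z)) := by
      rw [← ee_add, ← ee_add]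
      apply ee_congr (-(2 * m * l * μ))
      push_cast; field_simp; ring
    linear_combination τ * Gs c τ ((z + μ * τ + (-l:ℤ)) / p) * a2

def cf (m : ℕ) (C : ℤ → ℤ → ℂ) : ℤ × ℤ → ℂ := fun x => C (4 * m * x.1 - x.2^2) x.2

structure JS (m : ℕ) (C : ℤ → ℤ → ℂ) : Prop where
  per : ∀ Δ l : ℤ, C Δ (l + 2 * m) = C Δ l
  supp : ∀ Δ l : ℤ, ¬ (4 * (m : ℤ)) ∣ (Δ + l ^ 2) → C Δ l = 0
  og : ∀ Δ l : ℤ, Δ < -1 → C Δ l = 0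
  fs : FS m (cf m C)

lemma Gs_add {c d : ℤ × ℤ → ℂ} {τ z : ℂ}
   (hc : Summable fun p : ℤ × ℤ => c p * ee ((p.1:ℂ) * τ + (p.2:ℂ) * z))
   (hd : Summable fun p : ℤ × ℤ => d p * ee ((p.1:ℂ) * τ + (p.2:ℂ) * z)) :
   Gs (c + d) τ z = Gs c τ z + Gs d τ z := by
  unfold Gs; rw [← hc.tsum_add hd]; simp [add_mul]
lemma Gs_smul (a : ℂ) (c : ℤ × ℤ → ℂ) (τ z : ℂ) : Gs (a • c) τ z = a * Gs c τ z := by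
  unfold Gs; rw [← tsum_mul_left]; simp [mul_assoc]
lemma FS.add {M : ℕ} {c d : ℤ × ℤ → ℂ} (hc : FS M c) (hd : FS M d) : FS M (c + d) := by
  refine ⟨fun τ z h => ?_, fun τ z h => ?_⟩
  · simpa [add_mul] using (hc.summ τ z h).add (hd.summ τ z h)
  · rw [Gs_add (hc.summ τ z h) (hd.summ τ z h),
      Gs_add (hc.summ _ _ (im_neg_inv h)) (hd.summ _ _ (im_neg_inv h)), hc.S τ z h, hd.S τ z h]; ring
lemma FS.smul {M : ℕ} {c : ℤ × ℤ → ℂ} (a : ℂ) (hc : FS M c) : FS M (a • c) := by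
  refine ⟨fun τ z h => ?_, fun τ z h => ?_⟩
  · simpa [mul_assoc] using (hc.summ τ z h).mul_left a
  · rw [Gs_smul, Gs_smul, hc.S τ z h]; ring
lemma FS.zero {M : ℕ} : FS M 0 := by
  refine ⟨fun τ z h => ?_, fun τ z h => ?_⟩
  · simp
  · simp [Gs]

lemma FS.odd {M : ℕ} {c : ℤ × ℤ → ℂ} (h : FS M c) (n r : ℤ) : c (n, -r) = - c (n, r) := by
  have e : ∀ τ z : ℂ, 0 < τ.im → HasSum (fun p : ℤ × ℤ => c (p.1, -p.2) * ee ((p.1:ℂ) * τ + (p.2:ℂ) * z))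
      (Gs c τ (-z)) := by
    intro τ z hτ
    have := h.hasSum hτ (-z)
    rw [← (Equiv.prodCongr (Equiv.refl ℤ) (Equiv.neg ℤ)).hasSum_iff] at this
    convert this using 1
    funext p; simp [Prod.map]
  have h0 := Gs_unique (c + fun p : ℤ × ℤ => c (p.1, -p.2))
    (fun τ z hτ => by simpa [add_mul] using (h.summ τ z hτ).add (e τ z hτ).summable)
    (fun τ z hτ => by
      rw [Gs_add (h.summ τ z hτ) (e τ z hτ).summable]
      have e1 : Gs (fun p : ℤ × ℤ => c (p.1, -p.2)) τ z = _ := (e τ z hτ).tsum_eq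
      have e2 := h.modular hτ (z := z) (a := -1) (b := 0) (c' := 0) (d := -1) (by norm_num)
      simp [ee_zero] at e2
      have e3 : z / -1 = -z := by ring
      rw [e3] at e2
      rw [e1, e2]; ring)
  have := congrFun h0 (n, r)
  simp at this
  linear_combination this

namespace JS
variable {m : ℕ} {C : ℤ → ℤ → ℂ}
lemma per' (h : JS m C) (Δ : ℤ) {l l' : ℤ} (hd : (2 * (m:ℤ)) ∣ l - l') : C Δ l = C Δ l' := by
  obtain ⟨k, hk⟩ := hd
  obtain rfl : l = l' + k * (2 * m) := by linarith
  exact (Function.Periodic.int_mul (f := C Δ) (c := 2 * (m:ℤ)) (fun x => h.per Δ x) k) l'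

lemma odd (h : JS m C) (Δ l : ℤ) : C Δ (-l) = - C Δ l := by
  by_cases hd : (4 * (m : ℤ)) ∣ (Δ + l ^ 2)
  · obtain ⟨n, hn⟩ := hd
    have := h.fs.odd n l
    simp only [cf, neg_sq] at this
    have e : 4 * (m:ℤ) * n - l^2 = Δ := by linarith
    rwa [e] at this
  · rw [h.supp _ _ hd, h.supp _ _ (by simpa using hd), neg_zero]
end JS

def VV (m : ℕ) : Submodule ℂ (ℤ → ℤ → ℂ) where
  carrier := {C | JS m C ∧ ∀ Δ l : ℤ, Δ < 0 → C Δ l = 0}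
  add_mem' := by
    rintro C D ⟨hC, hC'⟩ ⟨hD, hD'⟩
    refine ⟨⟨fun Δ l => ?_, fun Δ l h => ?_, fun Δ l h => ?_, hC.fs.add hD.fs⟩, fun Δ l h => ?_⟩
    · simp [hC.per, hD.per]
    · simp [hC.supp _ _ h, hD.supp _ _ h]
    · simp [hC.og _ _ h, hD.og _ _ h]
    · simp [hC' _ _ h, hD' _ _ h]
  zero_mem' := ⟨⟨by simp, by simp, by simp, FS.zero⟩, by simp⟩
  smul_mem' := by
    rintro a C ⟨hC, hC'⟩
    refine ⟨⟨fun Δ l => ?_, fun Δ l h => ?_, fun Δ l h => ?_, hC.fs.smul a⟩, fun Δ l h => ?_⟩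
    · simp [hC.per]
    · simp [hC.supp _ _ h]
    · simp [hC.og _ _ h]
    · simp [hC' _ _ h]

def pinv (m p : ℕ) : ℤ := (((p : ZMod (2 * m))⁻¹).val : ℤ)

lemma pinv_spec {m p : ℕ} (hm : 0 < m) (hc : Nat.Coprime p (2 * m)) : (2 * (m:ℤ)) ∣ p * pinv m p - 1 := by
  have : NeZero (2 * m) := ⟨by omega⟩
  have e : ((2 * m : ℕ) : ℤ) ∣ p * pinv m p - 1 := by
    rw [← ZMod.intCast_zmod_eq_zero_iff_dvd]
    unfold pinv
    push_cast
    have := ZMod.coe_mul_inv_eq_one p hc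
    rw [ZMod.natCast_zmod_val, this, sub_self]
  simpa using e

/-- Hecke operator on coefficients -/
def TT (m p : ℕ) (C : ℤ → ℤ → ℂ) : ℤ → ℤ → ℂ := fun Δ R =>
  p * C (p^2 * Δ) (p * R) + (jacobiSym (-Δ) p : ℂ) * C Δ R +
    if (p:ℤ)^2 ∣ Δ then C (Δ / p^2) (pinv m p * R) else 0

lemma sum_Icc_zmod (k : ℕ) (g : ZMod (2 * k + 1) → ℂ) :
    ∑ l ∈ Finset.Icc (-(k:ℤ)) k, g (l : ZMod (2 * k + 1)) = ∑ x, g x := by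
  have : NeZero (2 * k + 1) := ⟨by omega⟩
  rw [sum_Icc_shift k (fun l => g (l : ZMod (2 * k + 1))),
    sum_range_zmod (2 * k + 1) (fun j => g (((j:ℤ) - k : ℤ) : ZMod (2 * k + 1)))]
  push_cast
  simp only [ZMod.natCast_zmod_val]
  exact (Equiv.subRight (k : ZMod (2 * k + 1))).sum_comp g

lemma sum_Icc_affine {m k p : ℕ} [NeZero p] (hp : p.Prime) (hpk : p = 2 * k + 1) (hc : Nat.Coprime p (2 * m)) (R : ℤ)
    (g : ZMod p → ℂ) :
    ∑ l ∈ Finset.Icc (-(k:ℤ)) k, g ((R - 2 * m * l : ℤ) : ZMod p) = ∑ x, g x := by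
  subst hpk
  have : Fact (2 * k + 1).Prime := ⟨hp⟩
  have h0 : (2 * m : ZMod (2 * k + 1)) ≠ 0 := by
    intro h
    have : ((2 * m : ℕ) : ZMod (2 * k + 1)) = 0 := by push_cast; exact h
    rw [ZMod.natCast_eq_zero_iff] at this
    have := Nat.dvd_gcd dvd_rfl this
    rw [hc] at this
    exact hp.one_lt.ne' (Nat.dvd_one.mp this)
  have := sum_Icc_zmod k (fun x => g (R - 2 * m * x))
  push_cast
  rw [this]
  have hb : Function.Bijective (fun x : ZMod (2 * k + 1) => (R:ZMod (2 * k + 1)) - 2 * m * x) := by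
    apply Finite.injective_iff_bijective.mp
    intro a b hab
    simp only [sub_right_inj] at hab
    exact mul_left_cancel₀ h0 hab
  exact hb.sum_comp g

lemma TT_eq {m k p : ℕ} (hm : 0 < m) (hp : p.Prime) (hpk : p = 2 * k + 1) (hc : Nat.Coprime p (2 * m))
    {C : ℤ → ℤ → ℂ} (hC : JS m C) :
    Wc m k (Vc p (Vc p (cf m C))) = cf m (TT m p C) + ((p:ℂ) + 1) • cf m C := by
  have hpf : Fact p.Prime := ⟨hp⟩
  have hp0 : (p:ℤ) ≠ 0 := by exact_mod_cast hp.ne_zero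
  have hpz : Prime (p:ℤ) := Nat.prime_iff_prime_int.mp hp
  have hpi := pinv_spec hm hc
  have hc2 : IsCoprime (p:ℤ) (2 * m) := by
    have := Nat.isCoprime_iff_coprime.mpr hc; simpa using this
  have hc4 : IsCoprime (p:ℤ) (4 * m) := by
    have h4 : (4 * (m:ℤ)) = 2 * (2 * m) := by ring
    rw [h4]; exact (IsCoprime.of_mul_right_left hc2).mul_right hc2
  funext ⟨N, R⟩
  obtain ⟨D, hD⟩ : ∃ D : ℤ, D = 4 * m * N - R^2 := ⟨_, rfl⟩
  -- per-lambda
  have key : ∀ l : ℤ, Vc p (Vc p (cf m C)) (N - R * l + m * l^2, (2 * k + 1 : ℕ) * (R - 2 * m * l)) =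
      C (p^2 * D) (p * R) + C D R + (if (((R - 2 * m * l : ℤ) : ZMod p))^2 = ((-D : ℤ) : ZMod p) then C D R else 0)
      + (if ((R - 2 * m * l : ℤ) : ZMod p) = 0 then (if (p:ℤ)^2 ∣ D then C (D / p^2) (pinv m p * R) else 0) else 0) := by
    intro l
    rw [← hpk]
    obtain ⟨n', hn'⟩ : ∃ n' : ℤ, n' = N - R * l + m * l^2 := ⟨_, rfl⟩
    obtain ⟨s, hs⟩ : ∃ s : ℤ, s = R - 2 * m * l := ⟨_, rfl⟩
    have hDs : 4 * m * n' - s^2 = D := by rw [hn', hs, hD]; ring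
    rw [← hn', ← hs]
    have hsR : C D s = C D R := hC.per' D ⟨-l, by rw [hs]; ring⟩
    have hsR2 : C (p^2 * D) (p * s) = C (p^2 * D) (p * R) := hC.per' _ ⟨-l * p, by rw [hs]; ring⟩
    have i1 : (((s : ℤ) : ZMod p))^2 = ((-D : ℤ) : ZMod p) ↔ (p:ℤ) ∣ n' := by
      have : (((s : ℤ) : ZMod p))^2 = ((-D : ℤ) : ZMod p) ↔ (((4 * m) * n' : ℤ) : ZMod p) = 0 := by
        have : (4 * m * n' : ℤ) = s^2 - (-D) := by linarith
        rw [this]; push_cast; rw [sub_eq_zero]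
      rw [this, ZMod.intCast_zmod_eq_zero_iff_dvd]
      exact ⟨fun h => hc4.dvd_of_dvd_mul_left h, fun h => dvd_mul_of_dvd_right h _⟩
    have i2 : ((s : ℤ) : ZMod p) = 0 ↔ (p:ℤ) ∣ s := by rw [ZMod.intCast_zmod_eq_zero_iff_dvd]
    have i3 : (p:ℤ) ∣ s → ((p:ℤ)^2 ∣ D ↔ (p:ℤ)^2 ∣ n') := by
      intro h
      have h2 : (p:ℤ)^2 ∣ s^2 := pow_dvd_pow_of_dvd h 2
      rw [← hDs, dvd_sub_left h2]
      exact ⟨fun h => (hc4.pow_left (m := 2)).dvd_of_dvd_mul_left h, fun h => dvd_mul_of_dvd_right h _⟩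
    rw [if_congr i1 rfl rfl, if_congr i2 rfl rfl]
    simp only [Vc, cf, dvd_mul_right, and_true, if_true, and_self,
      Int.mul_ediv_cancel_left _ hp0]
    have e1 : 4 * (m:ℤ) * (p * (p * n')) - (p * s)^2 = p^2 * D := by rw [← hDs]; ring
    rw [e1, hDs, hsR, hsR2]
    by_cases h1 : (p:ℤ) ∣ n'
    · rw [if_pos h1, if_pos h1, Int.mul_ediv_cancel' h1, hDs, hsR]
      by_cases h2 : (p:ℤ) ∣ s
      · simp only [h2, and_true, if_true]
        have i4 : (p:ℤ) ∣ n' / p ↔ (p:ℤ)^2 ∣ D := by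
          rw [i3 h2]
          obtain ⟨t, rfl⟩ := h1
          rw [Int.mul_ediv_cancel_left _ hp0, pow_two, mul_dvd_mul_iff_left hp0]
        rw [if_congr i4 rfl rfl]
        by_cases h3 : (p:ℤ)^2 ∣ D
        · rw [if_pos h3, if_pos h3]
          obtain ⟨t, ht⟩ := (i3 h2).mp h3
          obtain ⟨u, hu⟩ := h2
          have e2 : n' / p / p = t := by
            rw [ht, pow_two, mul_assoc, Int.mul_ediv_cancel_left _ hp0, Int.mul_ediv_cancel_left _ hp0]
          have e3 : s / p = u := by rw [hu, Int.mul_ediv_cancel_left _ hp0]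
          have e4 : D / p^2 = 4 * m * t - u^2 := by
            rw [← hDs, ht, hu]
            have : 4 * (m:ℤ) * (p^2 * t) - (p * u)^2 = p^2 * (4 * m * t - u^2) := by ring
            rw [this, Int.mul_ediv_cancel_left _ (pow_ne_zero 2 hp0)]
          rw [e2, e3, e4]
          have e5 : C (4 * m * t - u^2) u = C (4 * m * t - u^2) (pinv m p * R) := by
            apply hC.per'
            have hR : R = p * u + 2 * m * l := by rw [← hu, hs]; ring
            have : u - pinv m p * R = -(p * pinv m p - 1) * u - 2 * m * (pinv m p * l) := by rw [hR]; ring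
            rw [this]
            exact dvd_sub (dvd_mul_of_dvd_left (hpi.neg_right) _) (dvd_mul_right _ _)
          rw [e5]; ring
        · rw [if_neg h3, if_neg h3]; ring
      · simp [h2]
    · have h3 : (p:ℤ) ∣ s → ¬ (p:ℤ)^2 ∣ D := by
        intro h2 h3
        exact h1 (dvd_trans (dvd_pow_self _ two_ne_zero) ((i3 h2).mp h3))
      rw [if_neg h1, if_neg h1]
      by_cases h2 : (p:ℤ) ∣ s
      · simp [h2, h3 h2]
      · simp [h2]
  simp only [Wc, key, Finset.sum_add_distrib]
  rw [sum_Icc_affine hp hpk hc R (fun x => if x^2 = ((-D : ℤ) : ZMod p) then C D R else 0),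
    sum_Icc_affine hp hpk hc R (fun x => if x = 0 then (if (p:ℤ)^2 ∣ D then C (D / p^2) (pinv m p * R) else 0) else 0)]
  have hp2 : p ≠ 2 := by omega
  have hcard := legendreSym.card_sqrts p hp2 (-D)
  have s1 : ∑ x : ZMod p, (if x^2 = ((-D : ℤ) : ZMod p) then C D R else 0) = ((jacobiSym (-D) p : ℂ) + 1) * C D R := by
    rw [← Finset.sum_filter, Finset.sum_const, nsmul_eq_mul]
    congr 1
    rw [jacobiSym.legendreSym.to_jacobiSym] at hcard
    have h2 : ((Finset.filter (fun x : ZMod p => x^2 = ((-D : ℤ) : ZMod p)) Finset.univ).card : ℤ) = jacobiSym (-D) p + 1 := by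
      rw [← hcard]; congr 2; ext x; simp
    exact_mod_cast h2
  rw [s1]
  simp only [Finset.sum_const, Finset.sum_ite_eq', Finset.mem_univ, if_true, Int.card_Icc]
  have hcd : ((k:ℤ) + 1 - -(k:ℤ)).toNat = p := by omega
  rw [hcd]
  simp only [Pi.add_apply, Pi.smul_apply, cf, TT, smul_eq_mul, nsmul_eq_mul, ← hD]
  ring

lemma jacobi_neg_periodic_aux (p : ℕ) (D t : ℤ) (h : (p:ℤ)^2 * t = D) (hp : p.Prime) :
    jacobiSym (-D) p = 0 := by
  have : Fact p.Prime := ⟨hp⟩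
  rw [← jacobiSym.legendreSym.to_jacobiSym, legendreSym.eq_zero_iff, ZMod.intCast_zmod_eq_zero_iff_dvd]
  rw [← h]; exact ⟨-(p * t), by ring⟩

lemma TT_mem {m p : ℕ} (hm : 0 < m) (hp : p.Prime) (hc : Nat.Coprime p (2 * m))
    {C : ℤ → ℤ → ℂ} (hC : C ∈ VV m) : TT m p C ∈ VV m := by
  obtain ⟨hC, hh⟩ := hC
  have hp0 : (0:ℤ) < (p:ℤ) := by exact_mod_cast hp.pos
  have hodd : ∃ k, p = 2 * k + 1 := by
    rcases hp.eq_two_or_odd' with h | h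
    · subst h; exfalso
      have := Nat.Coprime.coprime_mul_right_right hc; norm_num at this
    · exact h
  obtain ⟨k, hpk⟩ := hodd
  have hc2 : IsCoprime (p:ℤ) (2 * m) := by
    have := Nat.isCoprime_iff_coprime.mpr hc; simpa using this
  have hc4 : IsCoprime (4 * (m:ℤ)) ((p:ℤ)^2) := by
    have h4 : (4 * (m:ℤ)) = 2 * (2 * m) := by ring
    rw [h4]; exact ((IsCoprime.of_mul_right_left hc2).mul_right hc2).symm.pow_right
  have hpi := pinv_spec hm hc
  have h1 : ∀ Δ l : ℤ, Δ < 0 → TT m p C Δ l = 0 := by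
    intro Δ l h
    have a1 : (p:ℤ)^2 * Δ < 0 := by nlinarith [pow_pos hp0 2]
    have a2 : Δ / (p:ℤ)^2 < 0 := Int.ediv_neg_of_neg_of_pos h (pow_pos hp0 2)
    simp [TT, hh _ _ a1, hh _ _ h, hh _ _ a2]
  refine ⟨⟨fun Δ l => ?_, fun Δ l h => ?_, fun Δ l h => h1 _ _ (by omega), ?_⟩, h1⟩
  · simp only [TT]
    rw [hC.per, hC.per' (l := p * (l + 2 * m)) (l' := p * l) _ ⟨p, by ring⟩,
      hC.per' (l := pinv m p * (l + 2 * m)) (l' := pinv m p * l) _ ⟨pinv m p, by ring⟩]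
  · simp only [TT]
    rw [hC.supp _ _ h, hC.supp]
    · simp only [mul_zero, add_zero, zero_add]
      split_ifs with h2
      · obtain ⟨t, rfl⟩ := h2
        rw [Int.mul_ediv_cancel_left _ (pow_pos hp0 2).ne', hC.supp]
        intro h3; apply h
        obtain ⟨a, ha⟩ := hpi
        obtain ⟨b, hb⟩ := h3
        refine ⟨p^2 * b - l^2 * a * (p * pinv m p + 1) + l^2 * a * (p * pinv m p + 1) - l^2 * (a * (m * a + 1)), ?_⟩
        have h5 : ((p:ℤ) * pinv m p)^2 = (1 + 2 * m * a)^2 := by rw [← ha]; ring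
        linear_combination (p:ℤ)^2 * hb - l^2 * h5
      · rfl
    · intro h3; apply h
      have : (p:ℤ)^2 * Δ + (p * l)^2 = (p:ℤ)^2 * (Δ + l^2) := by ring
      rw [this] at h3
      exact hc4.dvd_of_dvd_mul_left h3
  · have e := TT_eq hm hp hpk hc hC
    have f1 := Vc_FS (Vc_FS hC.fs hp) hp
    have e2 : m * p * p = m * (2 * k + 1)^2 := by rw [← hpk]; ring
    rw [e2] at f1
    have f2 := Wc_FS f1
    have : cf m (TT m p C) = Wc m k (Vc p (Vc p (cf m C))) + (-((p:ℂ) + 1)) • cf m C := by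
      rw [e]; module
    rw [this]
    exact f2.add (hC.fs.smul _)

lemma jac_sq {p q : ℕ} (hpq : Nat.Coprime p q) (D : ℤ) :
    jacobiSym (-((p:ℤ)^2 * D)) q = jacobiSym (-D) q := by
  have : -((p:ℤ)^2 * D) = (p:ℤ)^2 * (-D) := by ring
  rw [this, jacobiSym.mul_left, jacobiSym.sq_one', one_mul]
  simpa using hpq

lemma TT_comm {m p q : ℕ} (hp : p.Prime) (hq : q.Prime) (hpq : p ≠ q)
    (C : ℤ → ℤ → ℂ) : TT m p (TT m q C) = TT m q (TT m p C) := by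
  have hc := (Nat.coprime_primes hp hq).mpr hpq
  have hp0 : (p:ℤ)^2 ≠ 0 := pow_ne_zero 2 (by exact_mod_cast hp.ne_zero)
  have hq0 : (q:ℤ)^2 ≠ 0 := pow_ne_zero 2 (by exact_mod_cast hq.ne_zero)
  have hcz : IsCoprime ((p:ℤ)^2) ((q:ℤ)^2) := (Nat.isCoprime_iff_coprime.mpr hc).pow
  funext D R
  have d1 : (q:ℤ)^2 ∣ p^2 * D ↔ (q:ℤ)^2 ∣ D :=
    ⟨fun h => hcz.symm.dvd_of_dvd_mul_left h, fun h => dvd_mul_of_dvd_right h _⟩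
  have d2 : (p:ℤ)^2 ∣ q^2 * D ↔ (p:ℤ)^2 ∣ D :=
    ⟨fun h => hcz.dvd_of_dvd_mul_left h, fun h => dvd_mul_of_dvd_right h _⟩
  simp only [TT, jac_sq hc, jac_sq hc.symm, if_congr d1 rfl rfl, if_congr d2 rfl rfl]
  have r1 : (q:ℤ) * (p * R) = p * (q * R) := by ring
  have r2 : pinv m q * (p * R) = p * (pinv m q * R) := by ring
  have r3 : pinv m p * (q * R) = q * (pinv m p * R) := by ring
  have r4 : pinv m p * (pinv m q * R) = pinv m q * (pinv m p * R) := by ring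
  have r5 : (q:ℤ)^2 * (p^2 * D) = p^2 * (q^2 * D) := by ring
  rw [r1, r2, r3, r4, r5]
  by_cases h1 : (p:ℤ)^2 ∣ D
  · obtain ⟨t, rfl⟩ := h1
    have e1 : (q:ℤ)^2 * (p^2 * t) / p^2 = q^2 * t := by
      rw [mul_left_comm, Int.mul_ediv_cancel_left _ hp0]
    have d3 : (q:ℤ)^2 ∣ p^2 * t ↔ (q:ℤ)^2 ∣ t :=
      ⟨fun h => hcz.symm.dvd_of_dvd_mul_left h, fun h => dvd_mul_of_dvd_right h _⟩
    rw [e1]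
    simp only [Int.mul_ediv_cancel_left _ hp0, dvd_mul_right, if_true, jac_sq hc, d3]
    by_cases h2 : (q:ℤ)^2 ∣ t
    · obtain ⟨s, rfl⟩ := h2
      have e2 : (p:ℤ)^2 * (q^2 * s) / q^2 = p^2 * s := by
        rw [mul_left_comm, Int.mul_ediv_cancel_left _ hq0]
      have e3 : (p:ℤ)^2 * (p^2 * (q^2 * s)) / q^2 = p^2 * (p^2 * s) := by
        have : (p:ℤ)^2 * (p^2 * (q^2 * s)) = q^2 * (p^2 * (p^2 * s)) := by ring
        rw [this, Int.mul_ediv_cancel_left _ hq0]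
      simp only [e2, e3, Int.mul_ediv_cancel_left _ hq0, Int.mul_ediv_cancel_left _ hp0,
        dvd_mul_right, if_true, jac_sq hc.symm]
      have : jacobiSym (-(p^2 * s)) p = jacobiSym (-(p^2 * (q^2 * s))) p := by
        rw [← jac_sq hc.symm (p^2 * s)]; congr 2; ring
      rw [this]; ring
    · simp only [h2, if_false]; ring
  · simp only [h1, if_false]
    by_cases h2 : (q:ℤ)^2 ∣ D
    · obtain ⟨s, rfl⟩ := h2
      have e3 : (p:ℤ)^2 * (q^2 * s) / q^2 = p^2 * s := by
        rw [mul_left_comm, Int.mul_ediv_cancel_left _ hq0]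
      have d3 : ¬ (p:ℤ)^2 ∣ s := fun h => h1 (dvd_mul_of_dvd_right h _)
      simp only [e3, Int.mul_ediv_cancel_left _ hq0,
        dvd_mul_right, if_true, jac_sq hc.symm, d3, if_false]
      ring
    · simp only [h2, if_false]; ring

def TTl (m p : ℕ) : (ℤ → ℤ → ℂ) →ₗ[ℂ] (ℤ → ℤ → ℂ) where
  toFun := TT m p
  map_add' C D := by
    funext x y; simp only [TT, Pi.add_apply]
    split_ifs <;> ring
  map_smul' a C := by
    funext x y; simp only [TT, Pi.smul_apply, smul_eq_mul, RingHom.id_apply]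
    split_ifs <;> ring

/-- set of good primes -/
def GP (m p : ℕ) : Prop := p.Prime ∧ 2 * m < p ∧ 2 < p

lemma GP.coprime {m p : ℕ} (hm : 0 < m) (h : GP m p) : Nat.Coprime p (2 * m) := by
  rw [Nat.Prime.coprime_iff_not_dvd h.1]
  intro hd
  have := Nat.le_of_dvd (by omega) hd
  have := h.2.1; omega

/-- A nonzero finite-dimensional `VV m` has a nonzero simultaneous eigenspace -/
lemma exists_eigen {m : ℕ} (hm : 0 < m) [FiniteDimensional ℂ (VV m)] (hne : VV m ≠ ⊥) :
    ∃ U : Submodule ℂ (ℤ → ℤ → ℂ), U ≤ VV m ∧ U ≠ ⊥ ∧ 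
      ∀ p, GP m p → ∃ ν : ℂ, ∀ C ∈ U, TT m p C = ν • C := by
  let S : Set ℕ := {d | ∃ U : Submodule ℂ (ℤ → ℤ → ℂ), U ≤ VV m ∧ U ≠ ⊥ ∧
    (∀ p, GP m p → ∀ C ∈ U, TT m p C ∈ U) ∧ Module.finrank ℂ U = d}
  have hS : S.Nonempty := ⟨_, VV m, le_rfl, hne, fun p hp C hC => TT_mem hm hp.1 (hp.coprime hm) hC, rfl⟩
  obtain ⟨U, hU, hU0, hst, hd⟩ := Nat.sInf_mem hS
  have hfin : FiniteDimensional ℂ U := Submodule.finiteDimensional_of_le hU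
  refine ⟨U, hU, hU0, fun p hp => ?_⟩
  have : Nontrivial U := (Submodule.nontrivial_iff_ne_bot).mpr hU0
  let f : Module.End ℂ U := (TTl m p).restrict (fun C hC => hst p hp C hC)
  obtain ⟨ν, hν⟩ := Module.End.exists_eigenvalue f
  refine ⟨ν, ?_⟩
  let U' : Submodule ℂ (ℤ → ℤ → ℂ) := (Module.End.eigenspace f ν).map U.subtype
  have hU' : U' ≤ U := Submodule.map_subtype_le _ _
  have memU' : ∀ C, C ∈ U' ↔ C ∈ U ∧ TT m p C = ν • C := by
    intro C
    constructor
    · rintro ⟨⟨D, hD⟩, hD', rfl⟩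
      refine ⟨hD, ?_⟩
      have := Module.End.mem_eigenspace_iff.mp hD'
      exact congrArg Subtype.val this
    · rintro ⟨hC, hC'⟩
      refine ⟨⟨C, hC⟩, ?_, rfl⟩
      exact Module.End.mem_eigenspace_iff.mpr (Subtype.ext hC')
  have hU'0 : U' ≠ ⊥ := by
    obtain ⟨v, hv⟩ := hν.exists_hasEigenvector
    intro h
    have : (v : ℤ → ℤ → ℂ) ∈ U' := ⟨v, hv.1, rfl⟩
    rw [h, Submodule.mem_bot] at this
    exact hv.2 (Subtype.ext this)
  have hmin : sInf S ≤ Module.finrank ℂ U' := Nat.sInf_le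
    ⟨U', hU'.trans hU, hU'0, fun q hq C hC => by
      rw [memU'] at hC ⊢
      refine ⟨hst q hq C hC.1, ?_⟩
      by_cases hpq : p = q
      · subst hpq
        rw [hC.2]
        rw [show TT m p (ν • C) = ν • TT m p C from (TTl m p).map_smul ν C, hC.2]
      · rw [TT_comm hp.1 hq.1 hpq, hC.2]
        exact (TTl m q).map_smul ν C, rfl⟩
  have heq : U' = U := Submodule.eq_of_le_of_finrank_le hU' (by rw [hd]; exact hmin)
  intro C hC
  rw [← heq] at hC
  exact ((memU' C).mp hC).2

open Cardinal in
lemma padic_card (p : ℕ) [Fact p.Prime] : #(PadicAlgCl p) = 𝔠 := by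
  have h1 : #ℚ_[p] ≤ 𝔠 := by
    have a : #ℚ_[p] ≤ #(CauSeq ℚ (padicNorm p)) := Cardinal.mk_quotient_le
    have b : #(CauSeq ℚ (padicNorm p)) ≤ #(ℕ → ℚ) := Cardinal.mk_subtype_le _
    have c : #(ℕ → ℚ) = 𝔠 := by simp
    exact (a.trans b).trans c.le
  have h2 : 𝔠 ≤ #ℚ_[p] := continuum_le_cardinal_of_nontriviallyNormedField _
  apply le_antisymm
  · have := Algebra.IsAlgebraic.cardinalMk_le_max ℚ_[p] (PadicAlgCl p)
    exact this.trans (max_le h1 Cardinal.aleph0_le_continuum)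
  · exact h2.trans (Cardinal.mk_le_of_injective (FaithfulSMul.algebraMap_injective ℚ_[p] (PadicAlgCl p)))

structure PN (p : ℕ) (N : AbsoluteValue ℂ ℝ) : Prop where
  na : ∀ x y, N (x + y) ≤ max (N x) (N y)
  lt : N p < 1
  int : ∀ n : ℤ, N n ≤ 1

lemma exists_PN (p : ℕ) (hp : p.Prime) : ∃ N : AbsoluteValue ℂ ℝ, PN p N := by
  have : Fact p.Prime := ⟨hp⟩
  have e : Nonempty (ℂ ≃ PadicAlgCl p) := by
    rw [← Cardinal.eq, padic_card, Cardinal.mk_complex]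
  have : IsAlgClosed (PadicAlgCl p) := by unfold PadicAlgCl; infer_instance
  obtain ⟨e⟩ := e
  obtain ⟨f⟩ := IsAlgClosed.ringEquiv_of_equiv_of_charZero (K := ℂ) (L := PadicAlgCl p)
    (by rw [Cardinal.mk_complex]; exact Cardinal.aleph0_lt_continuum) ⟨e⟩
  refine ⟨(NormedField.toAbsoluteValue (PadicAlgCl p)).comp (f := (f : ℂ →+* PadicAlgCl p)) f.injective, ?_, ?_, ?_⟩
  · intro x y
    change ‖f (x + y)‖ ≤ max ‖f x‖ ‖f y‖
    rw [map_add]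
    exact PadicAlgCl.isNonarchimedean p (f x) (f y)
  · have e1 : ‖(p : PadicAlgCl p)‖ = ‖(p : ℚ_[p])‖ := by
      rw [← PadicAlgCl.norm_extends]; simp
    have : ‖(p : PadicAlgCl p)‖ < 1 := by
      rw [e1]; exact Padic.norm_p_lt_one
    change ‖f (p:ℂ)‖ < 1
    rw [map_natCast]; exact this
  · intro n
    change ‖f (n:ℂ)‖ ≤ 1
    rw [map_intCast]
    exact (PadicAlgCl.isNonarchimedean p).apply_intCast_le_one (f := NormedField.toAbsoluteValue (PadicAlgCl p)) (n := n)

namespace PN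
variable {p : ℕ} {N : AbsoluteValue ℂ ℝ}
lemma pos (_h : PN p N) (hp : p.Prime) : 0 < N p := N.pos (by exact_mod_cast hp.ne_zero)
lemma unit (h : PN p N) (hp : p.Prime) {n : ℤ} (hn : ¬ (p:ℤ) ∣ n) : N n = 1 := by
  apply le_antisymm (h.int n)
  by_contra hlt
  push Not at hlt
  have hc : IsCoprime (p:ℤ) n := by
    exact (Prime.coprime_iff_not_dvd (Nat.prime_iff_prime_int.mp hp)).mpr hn
  obtain ⟨a, b, hab⟩ := hc
  have e : (1:ℂ) = a * p + b * n := by exact_mod_cast hab.symm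
  have h1 : N 1 ≤ max (N (a * p)) (N (b * n)) := by rw [e]; exact h.na _ _
  rw [map_one, map_mul, map_mul] at h1
  have a1 := h.int a
  have a2 := h.int b
  have a3 := h.lt
  have : N a * N p < 1 := by nlinarith [N.nonneg (a:ℂ), N.nonneg (p:ℂ)]
  have : N b * N n < 1 := by nlinarith [N.nonneg (b:ℂ), N.nonneg (n:ℂ)]
  rcases le_max_iff.mp h1 with h | h <;> linarith
lemma sum_le (h : PN p N) {ι : Type*} (s : Finset ι) (f : ι → ℂ) {B : ℝ} (hB : 0 ≤ B)
    (hf : ∀ i ∈ s, N (f i) ≤ B) : N (∑ i ∈ s, f i) ≤ B := by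
  induction s using Finset.induction_on with
  | empty => simpa using hB
  | insert a s ha ih =>
    rw [Finset.sum_insert ha]
    exact (h.na _ _).trans (max_le (hf a (by simp)) (ih (fun i hi => hf i (by simp [hi]))))
lemma sub (h : PN p N) (x y : ℂ) : N (x - y) ≤ max (N x) (N y) := by
  rw [sub_eq_add_neg]; simpa using h.na x (-y)
end PN

lemma hasSum_cg {ι : Type*} {f g : ι → ℂ} {a b : ℂ} (h : HasSum f a) (e : ∀ n, g n = f n) (e2 : b = a) : HasSum g b := by
  obtain rfl : g = f := funext e
  rw [e2]; exact h

structure PS (m : ℕ) (C : ℤ → ℤ → ℂ) : Prop where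
  per : ∀ Δ l : ℤ, C Δ (l + 2 * m) = C Δ l
  supp : ∀ Δ l : ℤ, ¬ (4 * (m : ℤ)) ∣ (Δ + l ^ 2) → C Δ l = 0
  summ : ∀ τ z : ℂ, 0 < τ.im → Summable fun p : ℤ × ℤ => cf m C p * ee ((p.1:ℂ) * τ + (p.2:ℂ) * z)

lemma JS.ps {m : ℕ} {C : ℤ → ℤ → ℂ} (h : JS m C) : PS m C := ⟨h.per, h.supp, h.fs.summ⟩

def hh (m : ℕ) (C : ℤ → ℤ → ℂ) (l : ℤ) (τ : ℂ) : ℂ := ∑' Δ : ℤ, C Δ l * ee (Δ / (4 * m) * τ)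

lemma PS.per2 {m : ℕ} {C : ℤ → ℤ → ℂ} (h : PS m C) (Δ l k : ℤ) : C Δ (l + k * (2 * m)) = C Δ l :=
  (Function.Periodic.int_mul (f := C Δ) (c := 2 * (m:ℤ)) (fun x => h.per Δ x) k) l

lemma PS.hh_per {m : ℕ} {C : ℤ → ℤ → ℂ} (h : PS m C) (l k : ℤ) (τ : ℂ) : hh m C (l + k * (2 * m)) τ = hh m C l τ := by
  unfold hh; simp only [h.per2]

lemma hasSum_mul4 {m : ℕ} (hm : 0 < m) {C : ℤ → ℤ → ℂ} (h : PS m C) (r : ℤ) (τ : ℂ) (hτ : 0 < τ.im) :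
    HasSum (fun n : ℤ => cf m C (n, r) * ee (n * τ)) (ee ((r:ℂ)^2 / (4 * m) * τ) * hh m C r τ) ∧
    Summable (fun Δ : ℤ => C Δ r * ee (Δ / (4 * m) * τ)) := by
  have hm' : (m:ℂ) ≠ 0 := by exact_mod_cast hm.ne'
  have hi : Function.Injective (fun n : ℤ => 4 * (m:ℤ) * n - r^2) := by
    intro a b hab
    have : (4 * (m:ℤ)) * (a - b) = 0 := by simp only at hab; linarith
    have h4 : (4 * (m:ℤ)) ≠ 0 := by positivity
    rcases mul_eq_zero.mp this with h | h
    · exact absurd h h4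
    · linarith
  have hs : Summable (fun n : ℤ => cf m C (n, r) * ee (n * τ)) := by
    have := (h.summ τ 0 hτ).comp_injective (i := fun n : ℤ => (n, r)) (fun a b h => by simpa using h)
    simpa [Function.comp_def] using this
  have key : ∀ n : ℤ, cf m C (n, r) * ee (n * τ) =
      ee ((r:ℂ)^2 / (4 * m) * τ) * ((fun Δ : ℤ => C Δ r * ee (Δ / (4 * m) * τ)) (4 * (m:ℤ) * n - r^2)) := by
    intro n
    simp only [cf]
    have : ee (n * τ) = ee ((r:ℂ)^2 / (4 * m) * τ) * ee (((4 * (m:ℤ) * n - r^2 : ℤ):ℂ) / (4 * m) * τ) := by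
      rw [← ee_add]; congr 1; push_cast; field_simp; ring
    rw [this]; ring
  have hr : ∀ x ∉ Set.range (fun n : ℤ => 4 * (m:ℤ) * n - r^2), (fun Δ : ℤ => C Δ r * ee (Δ / (4 * m) * τ)) x = 0 := by
    intro x hx
    simp only
    rw [h.supp, zero_mul]
    rintro ⟨k, hk⟩
    exact hx ⟨k, by simp only; linarith⟩
  have hs2 : Summable (fun Δ : ℤ => C Δ r * ee (Δ / (4 * m) * τ)) := by
    rw [← hi.summable_iff hr]
    simp_rw [key] at hs
    exact (summable_mul_left_iff (ee_ne _)).mp hs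
  refine ⟨?_, hs2⟩
  have h1 := (hi.hasSum_iff hr).mpr hs2.hasSum
  have := h1.mul_left (ee ((r:ℂ)^2 / (4 * m) * τ))
  simp only [Function.comp_def] at this
  simp_rw [key]
  exact this

lemma hh_summable {m : ℕ} (hm : 0 < m) {C : ℤ → ℤ → ℂ} (h : PS m C) (r : ℤ) (τ : ℂ) (hτ : 0 < τ.im) :
    Summable (fun Δ : ℤ => C Δ r * ee (Δ / (4 * m) * τ)) := (hasSum_mul4 hm h r τ hτ).2

lemma Gs_hasSum {m : ℕ} (hm : 0 < m) {C : ℤ → ℤ → ℂ} (h : PS m C) (τ z : ℂ) (hτ : 0 < τ.im) :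
    HasSum (fun r : ℤ => hh m C r τ * ee ((r:ℂ)^2 / (4 * m) * τ + r * z)) (Gs (cf m C) τ z) := by
  have h1 := (h.summ τ z hτ).hasSum
  rw [← (Equiv.prodComm ℤ ℤ).hasSum_iff] at h1
  have := h1.prod_fiberwise (g := fun r : ℤ => hh m C r τ * ee ((r:ℂ)^2 / (4 * m) * τ + r * z)) (by
    intro r
    have := (hasSum_mul4 hm h r τ hτ).1.mul_right (ee (r * z))
    refine hasSum_cg this (fun n => ?_) ?_
    · simp [ee_add]; ring
    · rw [ee_add]; ring)
  exact this

/-- split over residues -/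
lemma hasSum_residue {N : ℕ} [NeZero N] (f : ℤ → ℂ) (a : ℂ) (hf : HasSum f a) :
    a = ∑ l ∈ Finset.range N, ∑' k : ℤ, f (l + k * N) := by
  rw [← (Int.divModEquiv N).symm.hasSum_iff] at hf
  rw [← (Equiv.prodComm (Fin N) ℤ).hasSum_iff] at hf
  have hs : ∀ l : Fin N, Summable fun k : ℤ => f (k * N + (l:ℕ)) := by
    intro l
    have := hf.summable.comp_injective (i := fun k : ℤ => (l, k)) (fun a b h => by simpa using h)
    exact this
  have := hf.prod_fiberwise (fun l => (hs l).hasSum)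
  rw [(this.unique (hasSum_fintype _)), Finset.sum_range]
  congr 1; funext l; congr 1; funext k; rw [add_comm]

lemma theta_summable {m : ℕ} (hm : 0 < m) (τ z : ℂ) (hτ : 0 < τ.im) :
    Summable (fun n : ℤ => ee ((n:ℂ)^2 / (4 * m) * τ + n * z)) := by
  have hm' : (m:ℂ) ≠ 0 := by exact_mod_cast hm.ne'
  have h2 : 0 < (τ / (2 * m)).im := by
    have := im_pos_div_nat hτ (p := 2 * m) (by omega) 0 (by simp)
    simpa using this
  have := (summable_jacobiTheta₂_term_iff z (τ / (2 * m))).mpr h2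
  convert this using 1
  funext n
  unfold ee jacobiTheta₂_term; congr 1; field_simp; ring

lemma Gs_theta {m : ℕ} (hm : 0 < m) {C : ℤ → ℤ → ℂ} (h : PS m C) (τ z : ℂ) (hτ : 0 < τ.im) :
    Gs (cf m C) τ z = ∑ l ∈ Finset.range (2 * m), hh m C l τ * jTheta m l τ z := by
  have : NeZero (2 * m) := ⟨by omega⟩
  rw [hasSum_residue (N := 2 * m) _ _ (Gs_hasSum hm h τ z hτ)]
  apply Finset.sum_congr rfl
  intro l _
  unfold jTheta
  rw [← tsum_mul_left]
  congr 1; funext k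
  have := h.hh_per l k τ
  push_cast at this ⊢
  rw [this]
  congr 2; ring

def kap (m : ℕ) (τ : ℂ) : ℂ := (-I * (τ / (2 * m))) ^ (1 / 2 : ℂ)

lemma kap_sq (m : ℕ) (τ : ℂ) : kap m τ ^ 2 = -I * (τ / (2 * m)) := by
  unfold kap
  rw [← Complex.cpow_nat_mul]; norm_num

lemma kap_ne {m : ℕ} (hm : 0 < m) (τ : ℂ) (hτ : 0 < τ.im) : kap m τ ≠ 0 := by
  intro h
  have := kap_sq m τ
  rw [h] at this
  have hm' : (m:ℂ) ≠ 0 := by exact_mod_cast hm.ne'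
  have := ne_zero_of_im hτ
  simp_all

lemma jTheta_S {m : ℕ} (hm : 0 < m) (l : ℤ) (τ z : ℂ) (hτ : 0 < τ.im) :
    jTheta m l (-1/τ) (z/τ) = kap m τ * ee (m * z^2/τ) *
      ∑' n : ℤ, ee (-(n * l) / (2 * m)) * ee ((n:ℂ)^2 / (4 * m) * τ + n * z) := by
  have hm' : (m:ℂ) ≠ 0 := by exact_mod_cast hm.ne'
  have ht := ne_zero_of_im hτ
  have hk := kap_ne hm τ hτ
  have e := jacobiTheta₂_functional_equation (z - l / (2 * m)) (τ / (2 * m))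
  have e1 : jacobiTheta₂ (z - l / (2 * m)) (τ / (2 * m)) =
      ∑' n : ℤ, ee (-(n * l) / (2 * m)) * ee ((n:ℂ)^2 / (4 * m) * τ + n * z) := by
    unfold jacobiTheta₂; congr 1; funext n
    rw [← ee_add]; unfold ee jacobiTheta₂_term; congr 1; field_simp; ring
  have e2 : jTheta m l (-1/τ) (z/τ) = ee (-(l:ℂ)^2 / (4 * m * τ) + l * z / τ) *
      jacobiTheta₂ ((z - l / (2 * m)) / (τ / (2 * m))) (-1 / (τ / (2 * m))) := by
    unfold jTheta jacobiTheta₂; rw [← tsum_mul_left]; congr 1; funext n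
    have : jacobiTheta₂_term n ((z - l / (2 * m)) / (τ / (2 * m))) (-1 / (τ / (2 * m))) =
      ee (n * ((z - l / (2 * m)) / (τ / (2 * m))) + n^2/2 * (-1 / (τ / (2 * m)))) := by
      unfold ee jacobiTheta₂_term; congr 1; ring
    rw [this, ← ee_add]; congr 1; field_simp; ring
  have e3 : cexp (-Real.pi * I * (z - l / (2 * m)) ^ 2 / (τ / (2 * m))) =
      (ee (m * z^2/τ))⁻¹ * ee (l * z / τ) * ee (-(l:ℂ)^2 / (4 * m * τ)) := by
    rw [← ee_neg, ← ee_add, ← ee_add]; unfold ee; congr 1; field_simp; ring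
  rw [← e1, e2, e, e3]
  change _ = kap m τ * _ * (1 / kap m τ * _ * _)
  have := ee_ne (m * z^2/τ)
  rw [ee_add]; field_simp

/-- the weight-one-half S law -/
def StarL (m : ℕ) (C : ℤ → ℤ → ℂ) : Prop := ∀ τ : ℂ, 0 < τ.im → ∀ r : ℤ,
  kap m τ * ∑ l ∈ Finset.range (2 * m), ee (-(r * l) / (2 * m)) * hh m C l (-1/τ) = τ * hh m C r τ

lemma Gs_S {m : ℕ} (hm : 0 < m) {C : ℤ → ℤ → ℂ} (h : PS m C) (τ z : ℂ) (hτ : 0 < τ.im) :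
    HasSum (fun n : ℤ => (kap m τ * ee (m * z^2/τ) * ∑ l ∈ Finset.range (2 * m), ee (-(n * l) / (2 * m)) * hh m C l (-1/τ)) *
      ee ((n:ℂ)^2 / (4 * m) * τ + n * z)) (Gs (cf m C) (-1/τ) (z/τ)) := by
  rw [Gs_theta hm h _ _ (im_neg_inv hτ)]
  have hs : ∀ l : ℤ, Summable (fun n : ℤ => ee (-(n * l) / (2 * m)) * ee ((n:ℂ)^2 / (4 * m) * τ + n * z)) := by
    intro l
    convert theta_summable hm τ (z - l / (2 * m)) hτ using 1
    funext n
    rw [← ee_add]; congr 1; ring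
  have := hasSum_sum (s := Finset.range (2 * m)) (fun l _ =>
    ((hs l).hasSum.mul_left (hh m C l (-1/τ) * (kap m τ * ee (m * z^2/τ)))))
  refine hasSum_cg this (fun n => ?_) ?_
  · rw [Finset.mul_sum, Finset.sum_mul]
    apply Finset.sum_congr rfl; intro l _; push_cast; ring
  · apply Finset.sum_congr rfl; intro l _
    rw [jTheta_S hm _ _ _ hτ]; ring

lemma star_iff {m : ℕ} (hm : 0 < m) {C : ℤ → ℤ → ℂ} (h : PS m C) : FS m (cf m C) ↔ StarL m C := by
  constructor
  · intro hF τ hτ r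
    have hsub : ∀ z, HasSum (fun n : ℤ => (kap m τ * ∑ l ∈ Finset.range (2 * m), ee (-(n * l) / (2 * m)) * hh m C l (-1/τ)
       - τ * hh m C n τ) * ee ((n:ℂ)^2 / (4 * m) * τ) * ee (n * z)) 0 := by
      intro z
      have h1 := (Gs_S hm h τ z hτ).mul_left (ee (m * z^2/τ))⁻¹
      have h2 := (Gs_hasSum hm h τ z hτ).mul_left τ
      rw [hF.S τ z hτ] at h1
      have := h1.sub h2
      refine hasSum_cg this (fun n => ?_) ?_
      · have := ee_ne (m * z^2/τ); rw [ee_add]; field_simp; 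
      · have := ee_ne (m * z^2/τ); field_simp; ring
    have := congrFun (fourier_unique _ (by simpa [ee_zero] using (hsub 0).summable) (fun x => (hsub x).tsum_eq)) r
    have h3 := ee_ne ((r:ℂ)^2 / (4 * m) * τ)
    simp only [Pi.zero_apply, mul_eq_zero, h3, or_false] at this
    linear_combination this
  · intro hS
    refine ⟨h.summ, fun τ z hτ => ?_⟩
    apply (Gs_S hm h τ z hτ).unique
    have h2 := (Gs_hasSum hm h τ z hτ).mul_left (τ * ee (m * z^2/τ))
    refine hasSum_cg h2 (fun n => ?_) rfl
    have := hS τ hτ n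
    linear_combination ee (m * z^2/τ) * ee ((n:ℂ)^2 / (4 * m) * τ + n * z) * this

/-- sums over residues: unit change of variable and shift -/
lemma sum_range_lift {N : ℕ} [NeZero N] (g : ℤ → ℂ) (hg : ∀ l k : ℤ, g (l + k * N) = g l) (e : ZMod N ≃ ZMod N)
   (f : ℤ → ℤ) (hf : ∀ l : ℤ, ((f l : ℤ) : ZMod N) = e l) :
    ∑ l ∈ Finset.range N, g (f l) = ∑ l ∈ Finset.range N, g l := by
  have hG : ∀ l l' : ℤ, (l : ZMod N) = l' → g l = g l' := by
    intro l l' h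
    rw [ZMod.intCast_eq_intCast_iff_dvd_sub] at h
    obtain ⟨k, hk⟩ := h
    rw [show l' = l + k * N by linarith, hg]
  rw [sum_range_zmod N (fun l => g (f l)), sum_range_zmod N (fun l => g l), ← e.sum_comp (fun b => g (b.val))]
  apply Finset.sum_congr rfl
  intro x _
  apply hG
  rw [hf]; simp

lemma hh_zero {m : ℕ} (hm : 0 < m) (a : ℤ → ℂ) 
    (hs : ∀ τ : ℂ, 0 < τ.im → Summable (fun Δ : ℤ => a Δ * ee (Δ / (4 * m) * τ)))
    (h0 : ∀ τ : ℂ, 0 < τ.im → ∑' Δ : ℤ, a Δ * ee (Δ / (4 * m) * τ) = 0) : a = 0 := by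
  have hm' : (m:ℂ) ≠ 0 := by exact_mod_cast hm.ne'
  have him : ∀ x : ℝ, 0 < (4 * (m:ℂ) * (x + I)).im := by
    intro x
    have : (4 * (m:ℂ) * (x + I)).im = 4 * m := by simp
    rw [this]; positivity
  have e : ∀ (x : ℝ) (Δ : ℤ), a Δ * ee (Δ / (4 * m) * (4 * m * (x + I))) = (a Δ * ee (Δ * I)) * ee (Δ * x) := by
    intro x Δ
    rw [mul_assoc (a Δ) (ee _), ← ee_add]; congr 2; field_simp; ring
  have := fourier_unique (fun Δ => a Δ * ee (Δ * I)) (by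
    have := hs _ (him 0)
    simp_rw [e] at this
    simpa [ee_zero] using this) (fun x => by
    have := h0 _ (him x)
    simp_rw [e] at this
    exact this)
  funext Δ
  have := congrFun this Δ
  simpa [ee_ne] using this

lemma hh_inj {m : ℕ} (hm : 0 < m) {C D : ℤ → ℤ → ℂ} (hC : PS m C) (hD : PS m D) (l l' : ℤ)
    (h : ∀ τ : ℂ, 0 < τ.im → hh m C l τ = hh m D l' τ) (Δ : ℤ) : C Δ l = D Δ l' := by
  have := hh_zero hm (fun Δ => C Δ l - D Δ l') (fun τ hτ => by
      simpa [sub_mul] using (hh_summable hm hC l τ hτ).sub (hh_summable hm hD l' τ hτ))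
    (fun τ hτ => by
      have e := (hh_summable hm hC l τ hτ).tsum_sub (hh_summable hm hD l' τ hτ)
      simp only [sub_mul]; rw [e]; exact sub_eq_zero.mpr (h τ hτ))
  have := congrFun this Δ
  simpa [sub_eq_zero] using this

lemma PS.mk' {m : ℕ} (hm : 0 < m) {C : ℤ → ℤ → ℂ} (per : ∀ Δ l : ℤ, C Δ (l + 2 * m) = C Δ l)
    (supp : ∀ Δ l : ℤ, ¬ (4 * (m : ℤ)) ∣ (Δ + l ^ 2) → C Δ l = 0)
    (hs : ∀ (l : ℤ) (τ : ℂ), 0 < τ.im → Summable (fun Δ : ℤ => C Δ l * ee (Δ / (4 * m) * τ))) : PS m C := by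
  have hm' : (m:ℂ) ≠ 0 := by exact_mod_cast hm.ne'
  refine ⟨per, supp, fun τ z hτ => ?_⟩
  let B : ℤ → ℝ := fun Δ => ∑ l ∈ Finset.range (2 * m), ‖C Δ l * ee (Δ / (4 * m) * τ)‖
  have hB : Summable B := summable_sum (fun l _ => (hs l τ hτ).norm)
  have hth := (theta_summable hm τ z hτ).norm
  have hprod := hB.mul_of_nonneg hth (fun Δ => Finset.sum_nonneg (fun _ _ => norm_nonneg _)) (fun _ => norm_nonneg _)
  have hi : Function.Injective (fun x : ℤ × ℤ => ((4 * (m:ℤ) * x.1 - x.2^2, x.2) : ℤ × ℤ)) := by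
    rintro ⟨a, b⟩ ⟨c, d⟩ h
    simp only [Prod.mk.injEq] at h ⊢
    obtain ⟨h1, rfl⟩ := h
    refine ⟨?_, rfl⟩
    have h4 : (4 * (m:ℤ)) ≠ 0 := by positivity
    apply mul_left_cancel₀ h4; linarith
  apply Summable.of_norm_bounded (hprod.comp_injective hi)
  rintro ⟨n, r⟩
  simp only [Function.comp_def, cf]
  set Δ := 4 * (m:ℤ) * n - r^2 with hΔ
  have e : ee (n * τ + r * z) = ee (Δ / (4 * m) * τ) * ee ((r:ℂ)^2 / (4 * m) * τ + r * z) := by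
    rw [← ee_add, hΔ]; congr 1; push_cast; field_simp; ring
  rw [e, ← mul_assoc, norm_mul]
  apply mul_le_mul_of_nonneg_right _ (norm_nonneg _)
  have hr : C Δ r = C Δ ((r % (2 * m)).toNat : ℤ) := by
    rw [Int.toNat_of_nonneg (Int.emod_nonneg _ (by positivity))]
    have := (Function.Periodic.int_mul (f := C Δ) (c := 2 * (m:ℤ)) (fun x => per Δ x) (r / (2 * m))) (r % (2 * m))
    rw [← this]; congr 1
    have := Int.emod_add_mul_ediv r (2 * m); push_cast; linarith
  rw [hr]
  refine Finset.single_le_sum (f := fun l : ℕ => ‖C Δ l * ee (Δ / (4 * m) * τ)‖) (fun _ _ => norm_nonneg _) ?_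
  rw [Finset.mem_range]
  have := Int.emod_lt_of_pos r (b := 2 * m) (by positivity)
  omega

lemma JS.star {m : ℕ} (hm : 0 < m) {C : ℤ → ℤ → ℂ} (h : JS m C) : StarL m C := (star_iff hm h.ps).mp h.fs

lemma ee_unit_periodic {m : ℕ} (hm : 0 < m) (r l k : ℤ) :
    ee (-(r * (l + k * (2 * m))) / (2 * m)) = ee (-(r * l) / (2 * m)) := by
  have hm' : (m:ℂ) ≠ 0 := by exact_mod_cast hm.ne'
  apply ee_congr (- r * k); push_cast; field_simp; ring

/-- twist by a square root of one -/
lemma JS.twist {m : ℕ} (hm : 0 < m) {C : ℤ → ℤ → ℂ} (h : JS m C) (a : ℤ) (ha : (4 * (m:ℤ)) ∣ a^2 - 1) :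
    JS m (fun Δ l => C Δ (a * l)) := by
  have hm' : (m:ℂ) ≠ 0 := by exact_mod_cast hm.ne'
  have : NeZero (2 * m) := ⟨by omega⟩
  have hps : PS m (fun Δ l => C Δ (a * l)) := by
    apply PS.mk' hm
    · intro Δ l
      rw [show a * (l + 2 * m) = a * l + a * (2 * m) by ring, h.ps.per2]
    · intro Δ l hd
      apply h.supp
      intro hd'
      apply hd
      have : Δ + l^2 = (Δ + (a * l)^2) - (a^2 - 1) * l^2 := by ring
      rw [this]
      exact dvd_sub hd' (ha.mul_right _)
    · intro l τ hτ
      exact hh_summable hm h.ps (a * l) τ hτ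
  refine ⟨hps.per, hps.supp, fun Δ l hd => h.og _ _ hd, ?_⟩
  rw [star_iff hm hps]
  intro τ hτ r
  have e := h.star hm τ hτ (a * r)
  obtain ⟨k, hk⟩ := ha
  have ha2 : (a : ZMod (2 * m)) * a = 1 := by
    have : ((a * a : ℤ) : ZMod (2 * m)) = ((1:ℤ) : ZMod (2 * m)) := by
      rw [ZMod.intCast_eq_intCast_iff_dvd_sub]
      exact ⟨-2 * k, by push_cast; linear_combination -hk⟩
    simpa using this
  have := sum_range_lift (N := 2 * m) (fun l => ee (-((a * r : ℤ) * l) / (2 * m)) * hh m C l (-1/τ))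
    (fun l k => by
      have e1 := ee_unit_periodic hm (a * r) l k
      have e2 := h.ps.hh_per l k (-1/τ)
      push_cast at e1 e2 ⊢
      rw [e1, e2])
    ⟨fun x => a * x, fun x => a * x, fun x => by simp [← mul_assoc, ha2], fun x => by simp [← mul_assoc, ha2]⟩
    (fun l => a * l) (fun l => by simp)
  push_cast at this e
  rw [← this] at e
  change _ = τ * hh m C (a * r) τ
  rw [← e]
  congr 1
  apply Finset.sum_congr rfl
  intro l _
  congr 1
  apply ee_congr (2 * k * r * l)
  have hk' : (a:ℂ)^2 - 1 = 4 * m * k := by exact_mod_cast hk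
  push_cast; field_simp
  linear_combination r * l * hk'

/-- F1 -/
lemma JS.F1 {m : ℕ} (hm : 0 < m) {C : ℤ → ℤ → ℂ} (h : JS m C) (d e : ℕ) (hde : 2 * m = d * e)
    (hd : ∀ Δ l : ℤ, ¬ (d:ℤ) ∣ l → C Δ l = 0) (Δ l : ℤ) : C Δ (l + e) = C Δ l := by
  have hm' : (m:ℂ) ≠ 0 := by exact_mod_cast hm.ne'
  have hdz : (d:ℂ) ≠ 0 := by
    intro h0
    have : d = 0 := by exact_mod_cast h0
    subst this; simp at hde; omega
  have hdec : (2:ℂ) * m = d * e := by exact_mod_cast hde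
  have he : (e:ℂ) ≠ 0 := by
    intro h0; rw [h0, mul_zero] at hdec; simp [hm'] at hdec
  apply hh_inj hm h.ps h.ps
  intro τ hτ
  apply mul_left_cancel₀ (ne_zero_of_im hτ)
  rw [← h.star hm τ hτ, ← h.star hm τ hτ]
  congr 1
  apply Finset.sum_congr rfl
  intro r _
  by_cases hr : (d:ℤ) ∣ r
  · congr 1
    obtain ⟨k, hk⟩ := hr
    have hk' : (r:ℂ) = d * k := by exact_mod_cast hk
    apply ee_congr (-k)
    rw [hdec, hk']; push_cast; field_simp; ring
  · have : hh m C r (-1/τ) = 0 := by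
      unfold hh; simp [hd _ _ hr]
    rw [this]; simp

lemma JS.F1' {m : ℕ} (hm : 0 < m) {C : ℤ → ℤ → ℂ} (h : JS m C) (d e : ℕ) (hde : 2 * m = d * e)
    (hnd : ¬ d ∣ e)
    (hd : ∀ Δ l : ℤ, ¬ (d:ℤ) ∣ l → C Δ l = 0) : C = 0 := by
  funext Δ l
  by_cases hl : (d:ℤ) ∣ l
  · rw [← h.F1 hm d e hde hd]
    apply hd
    intro h2
    apply hnd
    have := (Int.dvd_add_right hl).mp h2
    exact_mod_cast this
  · exact hd Δ l hl

lemma JS.const {m : ℕ} (hm : 0 < m) {C : ℤ → ℤ → ℂ} (h : JS m C) (h0 : ∀ Δ l, Δ ≠ 0 → C Δ l = 0) : C = 0 := by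
  have hm' : (m:ℂ) ≠ 0 := by exact_mod_cast hm.ne'
  have e : ∀ l τ, hh m C l τ = C 0 l := by
    intro l τ
    unfold hh
    rw [tsum_eq_single 0]
    · simp [ee_zero]
    · intro b hb; simp [h0 b l hb]
  have key : ∀ (r : ℤ) (τ : ℂ), 0 < τ.im → -I * (1 / (2 * m)) * (∑ l ∈ Finset.range (2 * m), ee (-(r * l) / (2 * m)) * C 0 l)^2 = τ * C 0 r^2 := by
    intro r τ hτ
    have := h.star hm τ hτ r
    simp only [e] at this
    have h2 := congrArg (fun x => x^2) this
    simp only [mul_pow, kap_sq] at h2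
    apply mul_left_cancel₀ (ne_zero_of_im hτ)
    rw [show τ * (τ * C 0 r^2) = τ^2 * C 0 r^2 by ring, ← h2]; ring
  funext Δ l
  by_cases hΔ : Δ = 0
  · subst hΔ
    have a := key l I (by simp)
    have b := key l (2 * I) (by simp)
    have : I * C 0 l ^ 2 = 0 := by linear_combination a - b
    simpa using this
  · exact h0 Δ l hΔ

section
open scoped UpperHalfPlane ModularForm MatrixGroups

def QS (f : ℍ → ℂ) (P : PowerSeries ℂ) : Prop :=
  ∀ τ : ℍ, HasSum (fun n : ℕ => PowerSeries.coeff n P * ee (n * (τ:ℂ))) (f τ)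

lemma QS.add {f g : ℍ → ℂ} {P Q : PowerSeries ℂ} (hf : QS f P) (hg : QS g Q) : QS (f + g) (P + Q) := by
  intro τ
  exact hasSum_cg ((hf τ).add (hg τ)) (fun n => by simp [add_mul]) rfl

lemma QS.zero : QS 0 0 := by
  intro τ
  exact hasSum_cg hasSum_zero (fun n => by simp) rfl

lemma QS.one : QS 1 1 := by
  intro τ
  refine hasSum_cg (hasSum_ite_eq (0:ℕ) (1:ℂ)) (fun n => ?_) rfl
  by_cases h : n = 0 <;> simp [PowerSeries.coeff_one, h, ee_zero]

lemma QS.smul {f : ℍ → ℂ} {P : PowerSeries ℂ} (a : ℂ) (hf : QS f P) : QS (a • f) (a • P) := by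
  intro τ
  exact hasSum_cg ((hf τ).mul_left a) (fun n => by simp [mul_assoc]) rfl

lemma QS.mul {f g : ℍ → ℂ} {P Q : PowerSeries ℂ} (hf : QS f P) (hg : QS g Q) : QS (f * g) (P * Q) := by
  intro τ
  have h1 := (hf τ).summable.norm
  have h2 := (hg τ).summable.norm
  have hs := (summable_norm_sum_mul_antidiagonal_of_summable_norm h1 h2).of_norm
  have e := tsum_mul_tsum_eq_tsum_sum_antidiagonal_of_summable_norm h1 h2
  rw [(hf τ).tsum_eq, (hg τ).tsum_eq] at e
  refine hasSum_cg hs.hasSum (fun n => ?_) e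
  rw [PowerSeries.coeff_mul, Finset.sum_mul]
  refine Finset.sum_congr rfl (fun x hx => ?_)
  have : n = x.1 + x.2 := (Finset.HasAntidiagonal.mem_antidiagonal.mp hx).symm
  rw [this]; push_cast; rw [add_mul, ee_add]; ring

lemma QS.pow {f : ℍ → ℂ} {P : PowerSeries ℂ} (hf : QS f P) (n : ℕ) : QS (f ^ n) (P ^ n) := by
  induction n with
  | zero => simpa using QS.one
  | succ n ih => rw [pow_succ, pow_succ]; exact ih.mul hf

lemma QS.sum {ι : Type*} (s : Finset ι) {f : ι → ℍ → ℂ} {P : ι → PowerSeries ℂ} (hf : ∀ i ∈ s, QS (f i) (P i)) :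
    QS (∑ i ∈ s, f i) (∑ i ∈ s, P i) := by
  induction s using Finset.induction_on with
  | empty => simpa using QS.zero
  | insert a s ha ih =>
    rw [Finset.sum_insert ha, Finset.sum_insert ha]
    exact (hf a (by simp)).add (ih (fun i hi => hf i (by simp [hi])))

lemma q_eq (τ : ℍ) (n : ℕ) : Function.Periodic.qParam 1 (τ:ℂ) ^ n = ee (n * (τ:ℂ)) := by
  rw [ee_nsmul]; congr 1; simp [Function.Periodic.qParam, ee]

lemma QS.hq {f : ℍ → ℂ} {P : PowerSeries ℂ} (hf : QS f P) (τ : ℍ) :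
    HasSum (fun n : ℕ => PowerSeries.coeff n P • Function.Periodic.qParam 1 (τ:ℂ) ^ n) (f τ) :=
  hasSum_cg (hf τ) (fun n => by rw [smul_eq_mul, q_eq]) rfl

lemma QS.holo {f : ℍ → ℂ} {P : PowerSeries ℂ} (hf : QS f P) : MDifferentiable (modelWithCornersSelf ℂ ℂ) (modelWithCornersSelf ℂ ℂ) f := by
  rw [UpperHalfPlane.mdifferentiable_iff]
  intro z hz
  have hz : 0 < z.im := hz
  apply DifferentiableAt.differentiableWithinAt
  have ho : IsOpen {w : ℂ | z.im / 2 < w.im} := isOpen_lt continuous_const Complex.continuous_im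
  let w0 : ℍ := ⟨((z.im / 2 : ℝ) : ℂ) * I, by simpa using hz⟩
  have hd := differentiableOn_tsum_of_summable_norm (u := fun n : ℕ => ‖PowerSeries.coeff n P * ee (n * (w0:ℂ))‖)
    (F := fun (n : ℕ) (w : ℂ) => PowerSeries.coeff n P * ee (n * w)) (hf w0).summable.norm
    (U := {w : ℂ | z.im / 2 < w.im})
    (fun n => ((differentiable_ee.comp (differentiable_id.const_mul _)).const_mul _).differentiableOn) ho
    (fun n w hw => by
      rw [norm_mul, norm_mul]
      refine mul_le_mul_of_nonneg_left ?_ (norm_nonneg _)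
      rw [norm_ee, norm_ee]
      apply Real.exp_le_exp.mpr
      have hw : z.im / 2 < w.im := hw
      have e1 : ((n:ℂ) * w).im = n * w.im := by simp
      have e2 : ((n:ℂ) * (w0:ℂ)).im = n * (z.im/2) := by simp [w0]
      rw [e1, e2]
      have : (n:ℝ) * (z.im/2) ≤ n * w.im := mul_le_mul_of_nonneg_left hw.le (by positivity)
      nlinarith [Real.pi_pos])
  have hzm : z ∈ {w : ℂ | z.im / 2 < w.im} := by show z.im/2 < z.im; linarith
  refine (hd.differentiableAt (ho.mem_nhds hzm)).congr_of_eventuallyEq ?_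
  filter_upwards [ho.mem_nhds hzm] with w hw
  have hw' : 0 < w.im := lt_trans (by linarith) (show z.im/2 < w.im from hw)
  have := (hf ⟨w, hw'⟩).tsum_eq
  simp only [Function.comp]
  rw [UpperHalfPlane.ofComplex_apply_of_im_pos hw']
  exact this.symm

lemma QS.T {f : ℍ → ℂ} {P : PowerSeries ℂ} (hf : QS f P) (τ τ' : ℍ) (h : (τ':ℂ) = τ + 1) : f τ' = f τ := by
  refine (hf τ').unique (hasSum_cg (hf τ) (fun n => ?_) rfl)
  congr 1
  apply ee_congr n; rw [h]; push_cast; ring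

def mkMF (k : ℤ) (f : ℍ → ℂ) (P : PowerSeries ℂ) (hf : QS f P)
    (hS : ∀ τ τ' : ℍ, (τ':ℂ) = -1/τ → f τ' = (τ:ℂ)^k * f τ) : ModularForm 𝒮ℒ k := by
  have hsl : ∀ γ : Matrix.SpecialLinearGroup (Fin 2) ℤ, f ∣[k] γ = f := by
    apply SlashInvariantForm.slash_action_generators_SL2Z
    · ext τ
      have := hS τ (ModularGroup.S • τ) (by
        rw [UpperHalfPlane.modular_S_smul]; simp [neg_div])
      rw [ModularForm.SL_slash_apply, this, ModularGroup.denom_S]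
      rw [mul_comm, ← mul_assoc, ← zpow_add₀ (UpperHalfPlane.ne_zero τ)]; simp
    · ext τ
      rw [ModularForm.SL_slash_apply, hf.T τ (ModularGroup.T • τ) (by rw [UpperHalfPlane.modular_T_smul]; simp [add_comm])]
      rw [ModularGroup.denom_apply]; simp [ModularGroup.coe_T]
  exact
  { toFun := f
    slash_action_eq' := by
      rintro _ ⟨γ, rfl⟩
      exact hsl γ
    holo' := hf.holo
    bdd_at_cusps' := by
      intro c hc
      rw [OnePoint.isBoundedAt_iff_forall_SL2Z (by simpa using hc)]
      intro γ _
      rw [hsl γ]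
      exact UpperHalfPlane.isBoundedAtImInfty_of_hasSum_qExpansion one_pos hf.hq }

lemma mkMF_q (k : ℤ) (f : ℍ → ℂ) (P : PowerSeries ℂ) (hf : QS f P)
    (hS : ∀ τ τ' : ℍ, (τ':ℂ) = -1/τ → f τ' = (τ:ℂ)^k * f τ) : UpperHalfPlane.qExpansion 1 (mkMF k f P hf hS) = P := by
  ext n
  exact (ModularFormClass.qExpansion_coeff_unique (f := mkMF k f P hf hS) one_pos one_mem_strictPeriods_SL hf.hq n).symm
end

section
open scoped UpperHalfPlane ModularForm MatrixGroups

def QB (N : AbsoluteValue ℂ ℝ) (P : PowerSeries ℂ) : Prop := ∃ B : ℝ, 0 ≤ B ∧ ∀ n, N (PowerSeries.coeff n P) ≤ B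

section
variable {p : ℕ} {N : AbsoluteValue ℂ ℝ}

lemma QB.add (h : PN p N) {P Q : PowerSeries ℂ} (hP : QB N P) (hQ : QB N Q) : QB N (P + Q) := by
  obtain ⟨B, hB, h1⟩ := hP
  obtain ⟨D, hD, h2⟩ := hQ
  refine ⟨max B D, le_max_of_le_left hB, fun n => ?_⟩
  rw [map_add]
  exact (h.na _ _).trans (max_le_max (h1 n) (h2 n))

lemma QB.zero : QB N 0 := ⟨0, le_rfl, fun n => by simp⟩

lemma QB.smul {P : PowerSeries ℂ} (a : ℂ) (hP : QB N P) : QB N (a • P) := by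
  obtain ⟨B, hB, h1⟩ := hP
  refine ⟨N a * B, mul_nonneg (N.nonneg _) hB, fun n => ?_⟩
  rw [map_smul, smul_eq_mul, map_mul]
  exact mul_le_mul_of_nonneg_left (h1 n) (N.nonneg _)

lemma QB.one : QB N 1 := ⟨1, zero_le_one, fun n => by
  rw [PowerSeries.coeff_one]; split_ifs <;> simp⟩

lemma QB.neg {P : PowerSeries ℂ} (hP : QB N P) : QB N (-P) := by simpa using hP.smul (-1)

lemma QB.sub (h : PN p N) {P Q : PowerSeries ℂ} (hP : QB N P) (hQ : QB N Q) : QB N (P - Q) := by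
  rw [sub_eq_add_neg]; exact hP.add h hQ.neg

lemma QB.mul (h : PN p N) {P Q : PowerSeries ℂ} (hP : QB N P) (hQ : QB N Q) : QB N (P * Q) := by
  obtain ⟨B, hB, h1⟩ := hP
  obtain ⟨D, hD, h2⟩ := hQ
  refine ⟨B * D, mul_nonneg hB hD, fun n => ?_⟩
  rw [PowerSeries.coeff_mul]
  refine h.sum_le _ _ (mul_nonneg hB hD) (fun x _ => ?_)
  rw [map_mul]
  exact mul_le_mul (h1 _) (h2 _) (N.nonneg _) hB

lemma QB.pow (h : PN p N) {P : PowerSeries ℂ} (hP : QB N P) (n : ℕ) : QB N (P ^ n) := by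
  induction n with
  | zero => simpa using QB.one
  | succ n ih => rw [pow_succ]; exact ih.mul h hP

lemma PN.nat (h : PN p N) (n : ℕ) : N n ≤ 1 := by simpa using h.int n

lemma QS_of_MF {k : ℤ} (f : ModularForm 𝒮ℒ k) : QS f (UpperHalfPlane.qExpansion 1 f) := by
  intro τ
  exact hasSum_cg (ModularForm.hasSum_qExpansion f one_pos one_mem_strictPeriods_SL τ) (fun n => by rw [q_eq]) rfl

lemma QS.qexp_eq {F : Type*} [FunLike F ℍ ℂ] {k : ℤ} (f : F) [ModularFormClass F 𝒮ℒ k] {P : PowerSeries ℂ} (h : QS f P) :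
    UpperHalfPlane.qExpansion 1 f = P := by
  ext n
  exact (ModularFormClass.qExpansion_coeff_unique (f := f) one_pos one_mem_strictPeriods_SL h.hq n).symm

lemma QB.E (h : PN p N) {k : ℕ} (hk : 3 ≤ k) (hk2 : Even k) : QB N (UpperHalfPlane.qExpansion 1 (ModularForm.E hk)) := by
  refine ⟨max 1 (N (-(2 * k / bernoulli k))), by positivity, fun n => ?_⟩
  rw [EisensteinSeries.E_qExpansion_coeff hk hk2]
  split_ifs
  · simp
  · rw [map_mul]
    refine le_max_of_le_right (mul_le_of_le_one_right (N.nonneg _) (h.nat _))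

lemma QB.disc (h : PN p N) : QB N (UpperHalfPlane.qExpansion 1 ModularForm.discriminant) := by
  have h4 := QS_of_MF ModularForm.E₄
  have h6 := QS_of_MF ModularForm.E₆
  have hq := (((h4.pow 3).smul (1/1728)).add ((h6.pow 2).smul (-1/1728)))
  have e : UpperHalfPlane.qExpansion 1 ModularForm.discriminant = (1/1728:ℂ) • UpperHalfPlane.qExpansion 1 ModularForm.E₄ ^ 3
      + (-1/1728:ℂ) • UpperHalfPlane.qExpansion 1 ModularForm.E₆ ^ 2 := by
    refine QS.qexp_eq CuspForm.discriminant (fun τ => ?_)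
    refine hasSum_cg (hq τ) (fun n => rfl) ?_
    have := ModularForm.discriminant_eq_E₄_cube_sub_E₆_sq τ
    change ModularForm.discriminant τ = _
    rw [this]
    simp only [Pi.add_apply, Pi.smul_apply, Pi.pow_apply, smul_eq_mul]
    ring
  rw [e]
  exact (((QB.E h (by norm_num) (by decide)).pow h 3).smul _).add h (((QB.E h (by norm_num) (by decide)).pow h 2).smul _)

lemma wt_two (f : ModularForm 𝒮ℒ 2) : f = 0 := by
  have := rank_zero_iff_forall_zero.mp ModularForm.levelOne_weight_two_rank_zero
  exact this f

lemma qexp_zero : UpperHalfPlane.qExpansion 1 (0 : ℍ → ℂ) = 0 := by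
  have := ModularForm.qExpansion_smul one_pos one_mem_strictPeriods_SL 0 ModularForm.E₄
  simpa using this

lemma QB.MF (h : PN p N) (n : ℕ) : ∀ (k : ℤ), k.toNat ≤ n → ∀ f : ModularForm 𝒮ℒ k, QB N (UpperHalfPlane.qExpansion 1 f) := by
  induction n using Nat.strong_induction_on with
  | _ n ih =>
  intro k hk f
  rcases lt_or_ge k 0 with h0 | h0
  · rw [ModularFormClass.levelOne_neg_weight_eq_zero h0 f, qexp_zero]; exact QB.zero
  obtain ⟨k, rfl⟩ := Int.eq_ofNat_of_zero_le h0
  rcases Nat.even_or_odd k with he | ho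
  swap
  · rw [ModularForm.levelOne_odd_weight_eq_zero (by exact_mod_cast ho) f, FunLike.coe_zero, qexp_zero]
    exact QB.zero
  rcases Nat.eq_zero_or_pos k with rfl | hkp
  · obtain ⟨c, hc⟩ := ModularFormClass.levelOne_weight_zero_const f
    have e : UpperHalfPlane.qExpansion 1 f = c • 1 := by
      refine QS.qexp_eq f (fun τ => ?_)
      exact hasSum_cg (QS.one.smul c τ) (fun n => rfl) (by rw [hc]; simp)
    rw [e]; exact QB.one.smul c
  rcases lt_or_ge k 3 with h3 | h3
  · have : k = 2 := by obtain ⟨j, rfl⟩ := he; omega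
    subst this
    have := wt_two f
    rw [this, FunLike.coe_zero, qexp_zero]
    exact QB.zero
  · set a := PowerSeries.coeff 0 (UpperHalfPlane.qExpansion 1 f)
    let g : ModularForm 𝒮ℒ (k:ℤ) := f - a • ModularForm.E h3
    have hg : UpperHalfPlane.qExpansion 1 g = UpperHalfPlane.qExpansion 1 f - a • UpperHalfPlane.qExpansion 1 (ModularForm.E h3) := by
      have := ModularForm.qExpansion_sub one_pos one_mem_strictPeriods_SL f (a • ModularForm.E h3)
      have h2 := ModularForm.qExpansion_smul one_pos one_mem_strictPeriods_SL a (ModularForm.E h3)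
      rw [← h2]; exact this
    have hc : PowerSeries.coeff 0 (UpperHalfPlane.qExpansion 1 g) = 0 := by
      rw [hg, map_sub, map_smul, EisensteinSeries.E_qExpansion_coeff h3 he]
      simp [a]
    have e := ModularForm.qExpansion_eq_qExpansion_discriminant_mul g hc
    have hb := ih (n - 1) (by omega) ((k:ℤ) - 12) (by simp at hk ⊢; omega) (CuspForm.discriminantEquiv (g.toCuspForm hc))
    have : UpperHalfPlane.qExpansion 1 f = UpperHalfPlane.qExpansion 1 g + a • UpperHalfPlane.qExpansion 1 (ModularForm.E h3) := by
      rw [hg]; ring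
    rw [this, e]
    exact ((QB.disc h).mul h hb).add h ((QB.E h h3 he).smul a)

def E2ser : PowerSeries ℂ := PowerSeries.mk (fun n => if n = 0 then 1 else -24 * (ArithmeticFunction.sigma 1 n : ℂ))

lemma QS_E2 : QS EisensteinSeries.E2 E2ser := by
  intro τ
  refine hasSum_cg (EisensteinSeries.hasSum_qExpansion_E2 (z := τ)) (fun n => ?_) rfl
  rw [smul_eq_mul, E2ser, PowerSeries.coeff_mk, ee_nsmul, ee]

lemma QB_E2 (h : PN p N) : QB N E2ser := by
  refine ⟨1, zero_le_one, fun n => ?_⟩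
  rw [E2ser, PowerSeries.coeff_mk]
  split_ifs
  · simp
  · have := h.int (-24 * (ArithmeticFunction.sigma 1 n : ℤ))
    push_cast at this; exact this

lemma E2_S (τ τ' : ℍ) (h : (τ':ℂ) = -1/τ) :
    EisensteinSeries.E2 τ' = (τ:ℂ)^2 * EisensteinSeries.E2 τ - 6 * I / Real.pi * τ := by
  have e : τ' = ModularGroup.S • τ := by
    apply UpperHalfPlane.ext; rw [h, UpperHalfPlane.modular_S_smul]; simp [neg_div]
  have hE2 := congrFun (EisensteinSeries.E2_slash_action ModularGroup.S) τ
  rw [ModularForm.SL_slash_apply, ← e, ModularGroup.denom_S] at hE2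
  simp only [Pi.sub_apply, Pi.smul_apply, smul_eq_mul, EisensteinSeries.D2_S, riemannZeta_two] at hE2
  have ht : (τ:ℂ) ≠ 0 := UpperHalfPlane.ne_zero τ
  have hp : (Real.pi : ℂ) ≠ 0 := by exact_mod_cast Real.pi_ne_zero
  rw [zpow_neg] at hE2
  have : EisensteinSeries.E2 τ' = (τ:ℂ)^2 * (EisensteinSeries.E2 τ' * ((τ:ℂ)^(2:ℤ))⁻¹) := by
    rw [show ((τ:ℂ)^(2:ℤ)) = (τ:ℂ)^2 from by norm_cast]; field_simp
  rw [this, hE2]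
  field_simp
end
end

section
open scoped UpperHalfPlane ModularForm MatrixGroups

def Mom (m : ℕ) (C : ℤ → ℤ → ℂ) (ν n : ℕ) : ℂ :=
  ∑ r ∈ Finset.Icc (-(4 * m * n + 1) : ℤ) (4 * m * n + 1), C (4 * m * n - r^2) r * (r:ℂ)^ν

def Aser (m : ℕ) (C : ℤ → ℤ → ℂ) (ν : ℕ) : PowerSeries ℂ :=
  PowerSeries.mk (fun n => (2 * Real.pi * I)^ν / (ν.factorial : ℂ) * Mom m C ν n)

def Afun (m : ℕ) (C : ℤ → ℤ → ℂ) (ν : ℕ) (τ : ℍ) : ℂ := ∑' n : ℕ, PowerSeries.coeff n (Aser m C ν) * ee (n * (τ:ℂ))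

def Ut (m : ℕ) (C : ℤ → ℤ → ℂ) (τ : ℍ) (ν : ℕ) (x : ℤ × ℤ) : ℂ :=
  cf m C x * ee (x.1 * (τ:ℂ)) * ((2 * Real.pi * I * x.2)^ν / (ν.factorial : ℂ))

lemma exp_hasSum (w : ℂ) : HasSum (fun ν : ℕ => w^ν / (ν.factorial : ℂ)) (Complex.exp w) := by
  have := NormedSpace.expSeries_div_hasSum_exp (𝔸 := ℂ) w
  rwa [← Complex.exp_eq_exp_ℂ] at this

lemma Ut_summable {m : ℕ} {C : ℤ → ℤ → ℂ} (h : JS m C) (τ : ℍ) (z : ℂ) :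
    Summable (fun x : (ℤ × ℤ) × ℕ => Ut m C τ x.2 x.1 * z^x.2) := by
  apply Summable.of_norm
  rw [summable_prod_of_nonneg (fun x => norm_nonneg _)]
  have hn : ∀ (x : ℤ × ℤ) (ν : ℕ), ‖Ut m C τ ν x * z^ν‖ = ‖cf m C x * ee (x.1 * (τ:ℂ))‖ * ((2 * Real.pi * |(x.2:ℝ)| * ‖z‖)^ν / (ν.factorial : ℝ)) := by
    intro x ν
    have e2 : ‖((x.2:ℤ):ℂ)‖ = |(x.2:ℝ)| := by
      rw [← Complex.ofReal_intCast, Complex.norm_real, Real.norm_eq_abs]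
    simp only [Ut, norm_mul, norm_div, norm_pow, Complex.norm_natCast, e2]
    simp [abs_of_pos Real.pi_pos, mul_pow]
    ring
  have hs : ∀ x : ℤ × ℤ, HasSum (fun ν : ℕ => ‖Ut m C τ ν x * z^ν‖) (‖cf m C x * ee (x.1 * (τ:ℂ))‖ * Real.exp (2 * Real.pi * |(x.2:ℝ)| * ‖z‖)) := by
    intro x
    simp_rw [hn]
    apply HasSum.mul_left
    have := NormedSpace.expSeries_div_hasSum_exp (𝔸 := ℝ) (2 * Real.pi * |(x.2:ℝ)| * ‖z‖)
    rwa [← Real.exp_eq_exp_ℝ] at this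
  refine ⟨fun x => (hs x).summable, ?_⟩
  simp_rw [fun x => (hs x).tsum_eq]
  have s1 := (h.fs.summ τ (‖z‖ * I) τ.im_pos).norm
  have s2 := (h.fs.summ τ (-‖z‖ * I) τ.im_pos).norm
  refine Summable.of_nonneg_of_le (fun x => by positivity) (fun x => ?_) (s1.add s2)
  have k : ∀ y : ℝ, ‖cf m C x * ee (x.1 * (τ:ℂ) + x.2 * (y * I))‖ = ‖cf m C x * ee (x.1 * (τ:ℂ))‖ * Real.exp (-2 * Real.pi * (x.2 * y)) := by
    intro y
    rw [ee_add, ← mul_assoc, norm_mul, norm_ee (x.2 * (y * I))]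
    congr 2; simp
  have k1 := k ‖z‖
  have k2 := k (-‖z‖)
  push_cast at k2
  rw [k1, k2, ← mul_add]
  apply mul_le_mul_of_nonneg_left _ (norm_nonneg _)
  rcases abs_cases (x.2:ℝ) with ⟨e, _⟩ | ⟨e, _⟩ <;> rw [e]
  · have : 2 * Real.pi * x.2 * ‖z‖ = -2 * Real.pi * (x.2 * -‖z‖) := by ring
    rw [this]; linarith [Real.exp_pos (-2 * Real.pi * (x.2 * ‖z‖))]
  · have : 2 * Real.pi * -x.2 * ‖z‖ = -2 * Real.pi * (x.2 * ‖z‖) := by ring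
    rw [this]; linarith [Real.exp_pos (-2 * Real.pi * (x.2 * -‖z‖))]

lemma JS.c_neg {m : ℕ} (hm : 0 < m) {C : ℤ → ℤ → ℂ} (h : JS m C) (n r : ℤ) (hn : n < 0) : C (4 * m * n - r^2) r = 0 := by
  apply h.og
  have : (0:ℤ) < m := by exact_mod_cast hm
  nlinarith [sq_nonneg r]

lemma JS.c_big {m : ℕ} {C : ℤ → ℤ → ℂ} (h : JS m C) (n : ℕ) (r : ℤ) (hr : r ∉ Finset.Icc (-(4 * m * n + 1) : ℤ) (4 * m * n + 1)) :
    C (4 * m * n - r^2) r = 0 := by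
  apply h.og
  rw [Finset.mem_Icc, not_and_or] at hr
  have : (0:ℤ) ≤ 4 * m * n := by positivity
  rcases hr with hr | hr <;> push Not at hr <;> nlinarith

lemma Ut_hasSum {m : ℕ} (hm : 0 < m) {C : ℤ → ℤ → ℂ} (h : JS m C) (τ : ℍ) (ν : ℕ) {a : ℂ} (hs : HasSum (Ut m C τ ν) a) :
    HasSum (fun n : ℕ => PowerSeries.coeff n (Aser m C ν) * ee (n * (τ:ℂ))) a := by
  have h1 : ∀ n : ℤ, HasSum (fun r : ℤ => Ut m C τ ν (n, r)) (∑' r : ℤ, Ut m C τ ν (n, r)) := 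
    fun n => (hs.summable.comp_injective (Prod.mk_right_injective n)).hasSum
  have h2 := hs.prod_fiberwise h1
  have h3 := (Function.Injective.hasSum_iff Nat.cast_injective (f := fun n : ℤ => ∑' r : ℤ, Ut m C τ ν (n, r)) (a := a) (by
    intro n hn
    have : n < 0 := by
      by_contra h0
      push Not at h0
      exact hn ⟨n.toNat, by simp [h0]⟩
    have : ∀ r : ℤ, Ut m C τ ν (n, r) = 0 := fun r => by
      simp [Ut, cf, h.c_neg hm n r this]
    simp [this])).mpr h2
  refine hasSum_cg h3 (fun n => ?_) rfl
  simp only [Function.comp]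
  rw [tsum_eq_sum (s := Finset.Icc (-(4 * m * n + 1) : ℤ) (4 * m * n + 1)) (fun r hr => by
    have := h.c_big n r hr
    simp [Ut, cf, this])]
  rw [Aser, PowerSeries.coeff_mk, Mom, Finset.mul_sum, Finset.sum_mul]
  refine Finset.sum_congr rfl (fun r _ => ?_)
  simp only [Ut, cf, mul_pow]
  push_cast
  ring

lemma Afun_QS {m : ℕ} (hm : 0 < m) {C : ℤ → ℤ → ℂ} (h : JS m C) (ν : ℕ) : QS (Afun m C ν) (Aser m C ν) := by
  intro τ
  have h1 := (Ut_summable h τ 1)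
  have h2 : Summable (Ut m C τ ν) := by
    have := h1.comp_injective (Prod.mk_left_injective ν)
    simpa [Function.comp_def] using this
  exact (Ut_hasSum hm h τ ν h2.hasSum).summable.hasSum

lemma taylor {m : ℕ} (hm : 0 < m) {C : ℤ → ℤ → ℂ} (h : JS m C) (τ : ℍ) (z : ℂ) :
    HasSum (fun ν : ℕ => Afun m C ν τ * z^ν) (Gs (cf m C) τ z) := by
  have hs := Ut_summable h τ z
  have e : (∑' x : (ℤ × ℤ) × ℕ, Ut m C τ x.2 x.1 * z^x.2) = Gs (cf m C) τ z := by
    have h1 : ∀ x : ℤ × ℤ, HasSum (fun ν : ℕ => Ut m C τ ν x * z^ν) (cf m C x * ee (x.1 * τ + x.2 * z)) := by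
      intro x
      have := (exp_hasSum (2 * Real.pi * I * x.2 * z)).mul_left (cf m C x * ee (x.1 * (τ:ℂ)))
      refine hasSum_cg this (fun ν => ?_) ?_
      · simp only [Ut, mul_pow]; ring
      · rw [ee_add, ← mul_assoc]; congr 1; rw [ee]; ring_nf
    have h2 := hs.hasSum.prod_fiberwise h1
    exact h2.tsum_eq.symm
  have hs2 : HasSum (fun y : ℕ × (ℤ × ℤ) => Ut m C τ y.1 y.2 * z^y.1) (Gs (cf m C) τ z) := by
    have := (Equiv.prodComm ℕ (ℤ × ℤ)).hasSum_iff.mpr hs.hasSum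
    rw [e] at this
    exact this
  have h0 : ∀ ν, HasSum (fun x => Ut m C τ ν x * z^ν) (Afun m C ν τ * z^ν) := by
    intro ν
    have h2 : Summable (Ut m C τ ν) := by
      have := (Ut_summable h τ 1).comp_injective (Prod.mk_left_injective ν)
      simpa [Function.comp_def] using this
    have h3 := (Ut_hasSum hm h τ ν h2.hasSum).unique (Afun_QS hm h ν τ)
    rw [← h3]
    exact h2.hasSum.mul_right _
  exact hs2.prod_fiberwise h0
end

section
open scoped UpperHalfPlane ModularForm MatrixGroups

lemma zs_mul {a b : ℕ → ℂ} {z F G : ℂ} (hf : HasSum (fun n => a n * z^n) F) (hg : HasSum (fun n => b n * z^n) G) :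
    HasSum (fun n => (∑ x ∈ Finset.HasAntidiagonal.antidiagonal n, a x.1 * b x.2) * z^n) (F * G) := by
  have h1 := hf.summable.norm
  have h2 := hg.summable.norm
  have hs := (summable_norm_sum_mul_antidiagonal_of_summable_norm h1 h2).of_norm
  have e := tsum_mul_tsum_eq_tsum_sum_antidiagonal_of_summable_norm h1 h2
  rw [hf.tsum_eq, hg.tsum_eq] at e
  refine hasSum_cg hs.hasSum (fun n => ?_) e
  rw [Finset.sum_mul]
  refine Finset.sum_congr rfl (fun x hx => ?_)
  have : n = x.1 + x.2 := (Finset.HasAntidiagonal.mem_antidiagonal.mp hx).symm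
  rw [this, pow_add]; ring

lemma zs_unique {a b : ℕ → ℂ} {F : ℂ → ℂ} (hf : ∀ z, HasSum (fun n => a n * z^n) (F z))
    (hg : ∀ z, HasSum (fun n => b n * z^n) (F z)) (n : ℕ) : a n = b n := by
  let d : ℤ → ℂ := fun k => if 0 ≤ k then a k.toNat - b k.toNat else 0
  have key : ∀ x : ℝ, HasSum (fun k : ℤ => d k * ee (k * x)) 0 := by
    intro x
    have h1 := (hf (ee x)).sub (hg (ee x))
    rw [sub_self] at h1
    refine (Function.Injective.hasSum_iff Nat.cast_injective (f := fun k : ℤ => d k * ee (k * x)) (by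
      intro k hk
      have : ¬ 0 ≤ k := fun h0 => hk ⟨k.toNat, by simp [h0]⟩
      simp [d, this])).mp ?_
    refine hasSum_cg h1 (fun n => ?_) rfl
    simp [d, ee_nsmul, sub_mul]
  have hz := fourier_unique d (by
    have := (key 0).summable
    simpa [ee_zero] using this) (fun x => (key x).tsum_eq)
  have := congrFun hz n
  simpa [d, sub_eq_zero] using this

def kapE (m : ℕ) : ℂ := Real.pi^2 * m / 3

def Bser (m : ℕ) (i : ℕ) : PowerSeries ℂ :=
  if Even i then (kapE m ^ (i/2) / ((i/2).factorial : ℂ)) • E2ser ^ (i/2) else 0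

def Bfun (m : ℕ) (i : ℕ) : ℍ → ℂ :=
  if Even i then (kapE m ^ (i/2) / ((i/2).factorial : ℂ)) • EisensteinSeries.E2 ^ (i/2) else 0

lemma Bfun_QS (m i : ℕ) : QS (Bfun m i) (Bser m i) := by
  unfold Bfun Bser
  split_ifs
  · exact (QS_E2.pow _).smul _
  · exact QS.zero

lemma Bser_QB {p : ℕ} {N : AbsoluteValue ℂ ℝ} (h : PN p N) (m i : ℕ) : QB N (Bser m i) := by
  unfold Bser
  split_ifs
  · exact ((QB_E2 h).pow h _).smul _
  · exact QB.zero

lemma Bser_zero (m : ℕ) : Bser m 0 = 1 := by simp [Bser]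

lemma Bfun_zs (m : ℕ) (τ : ℍ) (z : ℂ) : HasSum (fun i => Bfun m i τ * z^i) (Complex.exp (kapE m * EisensteinSeries.E2 τ * z^2)) := by
  refine (Function.Injective.hasSum_iff (g := fun j : ℕ => 2 * j) (fun a b h => by simpa using h) (by
    intro i hi
    have : ¬ Even i := fun ⟨j, hj⟩ => hi ⟨j, by simp; omega⟩
    simp [Bfun, this])).mp ?_
  refine hasSum_cg (exp_hasSum (kapE m * EisensteinSeries.E2 τ * z^2)) (fun j => ?_) rfl
  simp [Bfun, mul_pow, ← pow_mul]
  ring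

def psif (m : ℕ) (C : ℤ → ℤ → ℂ) (ν : ℕ) : ℍ → ℂ := ∑ x ∈ Finset.HasAntidiagonal.antidiagonal ν, Bfun m x.1 * Afun m C x.2
def psis (m : ℕ) (C : ℤ → ℤ → ℂ) (ν : ℕ) : PowerSeries ℂ := ∑ x ∈ Finset.HasAntidiagonal.antidiagonal ν, Bser m x.1 * Aser m C x.2

section
variable {m : ℕ} {C : ℤ → ℤ → ℂ}

lemma psi_QS (hm : 0 < m) (h : JS m C) (ν : ℕ) : QS (psif m C ν) (psis m C ν) :=
  QS.sum _ (fun x _ => (Bfun_QS m x.1).mul (Afun_QS hm h x.2))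

lemma psi_zs (hm : 0 < m) (h : JS m C) (τ : ℍ) (z : ℂ) : HasSum (fun ν => psif m C ν τ * z^ν)
    (Complex.exp (kapE m * EisensteinSeries.E2 τ * z^2) * Gs (cf m C) τ z) := by
  refine hasSum_cg (zs_mul (Bfun_zs m τ z) (taylor hm h τ z)) (fun n => ?_) rfl
  simp [psif]

lemma psi_S (hm : 0 < m) (h : JS m C) (ν : ℕ) (τ τ' : ℍ) (ht : (τ':ℂ) = -1/τ) :
    psif m C ν τ' = (τ:ℂ)^((1 + ν : ℕ) : ℤ) * psif m C ν τ := by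
  have h0 : (τ:ℂ) ≠ 0 := UpperHalfPlane.ne_zero τ
  have hp : (Real.pi : ℂ) ≠ 0 := by exact_mod_cast Real.pi_ne_zero
  have key := zs_unique (a := fun ν => psif m C ν τ' * ((τ:ℂ)⁻¹)^ν) (b := fun ν => τ * psif m C ν τ)
    (F := fun z => τ * (Complex.exp (kapE m * EisensteinSeries.E2 τ * z^2) * Gs (cf m C) τ z))
    (fun z => by
      refine hasSum_cg (psi_zs hm h τ' (z / τ)) (fun n => ?_) ?_
      · rw [div_eq_mul_inv, mul_pow]; ring
      · rw [ht, h.fs.S τ z τ.im_pos, E2_S τ τ' ht]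
        rw [show ∀ a b c d : ℂ, d * (a * b * c) = a * ((d * b) * c) from by intros; ring, ee, ← Complex.exp_add]
        congr 3
        simp only [kapE]
        field_simp
        ring_nf) 
    (fun z => hasSum_cg ((psi_zs hm h τ z).mul_left (τ:ℂ)) (fun n => by ring) rfl) ν
  beta_reduce at key
  rw [zpow_natCast, pow_add, pow_one, mul_right_comm, ← key, inv_pow]
  field_simp

def psiM (hm : 0 < m) (h : JS m C) (ν : ℕ) : ModularForm 𝒮ℒ ((1 + ν : ℕ) : ℤ) :=
  mkMF _ (psif m C ν) (psis m C ν) (psi_QS hm h ν) (fun τ τ' ht => psi_S hm h ν τ τ' ht)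

lemma psiM_q (hm : 0 < m) (h : JS m C) (ν : ℕ) : UpperHalfPlane.qExpansion 1 (psiM hm h ν) = psis m C ν := mkMF_q _ _ _ _ _

lemma psis_QB {p : ℕ} {N : AbsoluteValue ℂ ℝ} (hN : PN p N) (hm : 0 < m) (h : JS m C) (ν : ℕ) : QB N (psis m C ν) := by
  rw [← psiM_q hm h]; exact QB.MF hN _ _ le_rfl _

lemma aser_ind (S : PowerSeries ℂ → Prop) (h0 : S 0) (hadd : ∀ P Q, S P → S Q → S (P + Q)) (hneg : ∀ P, S P → S (-P))
    (hmul : ∀ i P, S P → S (Bser m i * P)) (K : ℕ) (hpsi : ∀ ν ≤ K, S (psis m C ν)) (ν : ℕ) : ν ≤ K → S (Aser m C ν) := by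
  induction ν using Nat.strong_induction_on with
  | _ ν ih =>
  intro hν
  have e : Aser m C ν = psis m C ν + -(∑ x ∈ (Finset.HasAntidiagonal.antidiagonal ν).erase (0, ν), Bser m x.1 * Aser m C x.2) := by
    have : ((0, ν) : ℕ × ℕ) ∈ Finset.HasAntidiagonal.antidiagonal ν := by simp
    rw [psis, ← Finset.add_sum_erase _ _ this, Bser_zero]; ring
  rw [e]
  refine hadd _ _ (hpsi ν hν) (hneg _ ?_)
  refine Finset.sum_induction _ S (fun a b => hadd a b) h0 (fun x hx => hmul _ _ (ih _ ?_ ?_))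
  all_goals
    rw [Finset.mem_erase, Finset.HasAntidiagonal.mem_antidiagonal] at hx
    obtain ⟨h1, h2⟩ := hx
    have : x.1 ≠ 0 := fun h3 => h1 (Prod.ext h3 (by simp; omega))
    omega

lemma mom_of_aser (ν n : ℕ) : Mom m C ν n = (ν.factorial : ℂ) / (2 * Real.pi * I)^ν * PowerSeries.coeff n (Aser m C ν) := by
  have hp : (Real.pi : ℂ) ≠ 0 := by exact_mod_cast Real.pi_ne_zero
  have hf : (ν.factorial : ℂ) ≠ 0 := by exact_mod_cast ν.factorial_ne_zero
  rw [Aser, PowerSeries.coeff_mk]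
  field_simp [I_ne_zero]

lemma mom_bdd {p : ℕ} {N : AbsoluteValue ℂ ℝ} (hN : PN p N) (hm : 0 < m) (h : JS m C) (ν : ℕ) :
    ∃ B : ℝ, ∀ n, N (Mom m C ν n) ≤ B := by
  obtain ⟨B, _, hB⟩ := aser_ind (m := m) (C := C) (QB N) QB.zero (fun P Q => QB.add hN) (fun P => QB.neg)
    (fun i P hP => (Bser_QB hN m i).mul hN hP) ν (fun ν _ => psis_QB hN hm h ν) ν le_rfl
  refine ⟨N ((ν.factorial : ℂ) / (2 * Real.pi * I)^ν) * B, fun n => ?_⟩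
  rw [mom_of_aser, map_mul]
  exact mul_le_mul_of_nonneg_left (hB n) (N.nonneg _)

lemma mom_zero (K : ℕ) (hpsi : ∀ ν ≤ K, psis m C ν = 0) (ν : ℕ) (hν : ν ≤ K) (n : ℕ) : Mom m C ν n = 0 := by
  have := aser_ind (m := m) (C := C) (fun P => P = 0) rfl (by rintro P Q rfl rfl; simp) (by rintro P rfl; simp)
    (by rintro i P rfl; simp) K hpsi ν hν
  rw [mom_of_aser, this]; simp

lemma mom_one (hm : 0 < m) (h : JS m C) (n : ℕ) : Mom m C 1 n = 0 := by
  refine mom_zero 1 (fun ν hν => ?_) 1 le_rfl n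
  rw [← psiM_q hm h]
  interval_cases ν
  · rw [ModularForm.levelOne_odd_weight_eq_zero (by decide) (psiM hm h 0), FunLike.coe_zero, qexp_zero]
  · have := wt_two (psiM hm h 1)
    rw [this, FunLike.coe_zero, qexp_zero]

/-- the polar term vanishes -/
lemma JS.polar1 (hm : 0 < m) (h : JS m C) : C (-1) 1 = 0 := by
  have := mom_one hm h 0
  simp only [Mom] at this
  rw [show Finset.Icc (-(4 * (m:ℤ) * (0:ℕ) + 1) : ℤ) (4 * m * (0:ℕ) + 1) = {-1, 0, 1} from by
    simp; decide] at this
  have ho := h.odd (-1) 1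
  simp [ho] at this
  exact this

lemma JS.hol (hm : 0 < m) (h : JS m C) (Δ l : ℤ) (hΔ : Δ < 0) : C Δ l = 0 := by
  rcases lt_or_eq_of_le (show Δ ≤ -1 by omega) with h1 | rfl
  · exact h.og _ _ h1
  · by_cases hd : (4 * (m:ℤ)) ∣ -1 + l^2
    · have := (h.twist hm l (by rwa [sub_eq_neg_add])).polar1 hm
      simpa using this
    · exact h.supp _ _ hd
end
end

section
open scoped UpperHalfPlane ModularForm MatrixGroups

section
variable {m : ℕ} {C : ℤ → ℤ → ℂ}

lemma JS.at_m (h : JS m C) (Δ : ℤ) : C Δ m = 0 := by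
  have h1 := h.odd Δ m
  have h2 := h.per' Δ (l := -m) (l' := m) ⟨-1, by ring⟩
  rw [h1] at h2
  linear_combination -h2/2

lemma lagrange_aux {p : ℕ} {N : AbsoluteValue ℂ ℝ} (hN : PN p N) (hp : p.Prime) (hpm : 2 * m < p)
    (hm : 0 < m) (h : JS m C) {B : ℝ} (hB0 : 0 ≤ B) (hB : ∀ ν ≤ 2 * m, ∀ n, N (Mom m C ν n) ≤ B) (n : ℕ) :
    ∀ r : ℤ, N (C (4 * m * n - r^2) r) ≤ B := by
  induction n using Nat.strong_induction_on with
  | _ n ih =>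
  have hmz : (0:ℤ) < m := by exact_mod_cast hm
  have out : ∀ r : ℤ, (m:ℤ) ≤ |r| → N (C (4 * m * n - r^2) r) ≤ B := by
    have gen : ∀ (n' r r' : ℤ), n' < n → 4 * m * n' - r'^2 = 4 * m * n - r^2 → (2 * (m:ℤ)) ∣ r - r' → 
        N (C (4 * m * n - r^2) r) ≤ B := by
      intro n' r r' h1 h2 h3
      rw [h.per' _ h3, ← h2]
      rcases lt_or_ge n' 0 with h0 | h0
      · rw [h.c_neg hm n' r' h0]; simpa using hB0
      · obtain ⟨k, rfl⟩ := Int.eq_ofNat_of_zero_le h0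
        exact ih k (by exact_mod_cast h1) r'
    intro r hr
    rcases eq_or_lt_of_le hr with he | hlt
    · rcases abs_choice r with h1 | h1
      · rw [h1] at he; rw [← he, h.at_m]; simpa using hB0
      · rw [h1] at he
        rw [show r = -(m:ℤ) by linarith, h.odd, h.at_m]; simpa using hB0
    · rcases lt_abs.mp hlt with h1 | h1
      · exact gen (n - r + m) r (r - 2 * m) (by linarith) (by ring) ⟨1, by ring⟩
      · exact gen (n + r + m) r (r + 2 * m) (by linarith) (by ring) ⟨-1, by ring⟩
  intro r0
  rcases le_or_gt (m:ℤ) |r0| with h0 | h0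
  · exact out r0 h0
  by_cases hr0 : r0 ∈ Finset.Icc (-(4 * m * n + 1) : ℤ) (4 * m * n + 1)
  swap
  · rw [h.c_big n r0 hr0]; simpa using hB0
  let P : Polynomial ℤ := ∏ s ∈ (Finset.Ioo (-(m:ℤ)) m).erase r0, (Polynomial.X - Polynomial.C s)
  have hr0m : r0 ∈ Finset.Ioo (-(m:ℤ)) m := by rw [Finset.mem_Ioo]; exact abs_lt.mp h0
  have hdeg : P.natDegree < 2 * m + 1 := by
    rw [Polynomial.natDegree_prod_of_monic _ _ (fun s _ => Polynomial.monic_X_sub_C s)]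
    simp only [Polynomial.natDegree_X_sub_C, Finset.sum_const, smul_eq_mul, mul_one]
    have : ((Finset.Ioo (-(m:ℤ)) m).erase r0).card ≤ (Finset.Ioo (-(m:ℤ)) m).card := Finset.card_le_card (Finset.erase_subset _ _)
    rw [Int.card_Ioo] at this; omega
  have hP0 : N ((P.eval r0 : ℤ) : ℂ) = 1 := by
    apply hN.unit hp
    rw [Polynomial.eval_prod, Prime.dvd_finsetProd_iff (Nat.prime_iff_prime_int.mp hp)]
    rintro ⟨s, hs, hd⟩
    rw [Finset.mem_erase, Finset.mem_Ioo] at hs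
    simp only [Polynomial.eval_sub, Polynomial.eval_X, Polynomial.eval_C] at hd
    rw [Finset.mem_Ioo] at hr0m
    have := Int.eq_zero_of_abs_lt_dvd hd (by rw [abs_lt]; constructor <;> omega)
    exact hs.1 (by omega)
  have hPs : ∀ s ∈ Finset.Ioo (-(m:ℤ)) m, s ≠ r0 → P.eval s = 0 := by
    intro s hs hne
    rw [Polynomial.eval_prod]
    exact Finset.prod_eq_zero (Finset.mem_erase.mpr ⟨hne, hs⟩) (by simp)
  have hsum : ∑ r ∈ Finset.Icc (-(4 * m * n + 1) : ℤ) (4 * m * n + 1), C (4 * m * n - r^2) r * ((P.eval r : ℤ) : ℂ)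
      = ∑ j ∈ Finset.range (2 * m + 1), (P.coeff j : ℂ) * Mom m C j n := by
    simp only [Mom, Finset.mul_sum]
    rw [Finset.sum_comm]
    refine Finset.sum_congr rfl (fun r _ => ?_)
    rw [Polynomial.eval_eq_sum_range' hdeg]
    push_cast
    rw [Finset.mul_sum]
    exact Finset.sum_congr rfl (fun j _ => by ring)
  have hle : N (∑ r ∈ Finset.Icc (-(4 * m * n + 1) : ℤ) (4 * m * n + 1), C (4 * m * n - r^2) r * ((P.eval r : ℤ) : ℂ)) ≤ B := by
    rw [hsum]
    refine hN.sum_le _ _ hB0 (fun j hj => ?_)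
    rw [map_mul]
    calc _ ≤ 1 * B := mul_le_mul (hN.int _) (hB j (by rw [Finset.mem_range] at hj; omega) n) (N.nonneg _) zero_le_one
      _ = B := one_mul B
  rw [← Finset.add_sum_erase _ _ hr0] at hle
  set R := ∑ r ∈ (Finset.Icc (-(4 * m * n + 1) : ℤ) (4 * m * n + 1)).erase r0, C (4 * m * n - r^2) r * ((P.eval r : ℤ) : ℂ) with hR
  have hRle : N R ≤ B := by
    refine hN.sum_le _ _ hB0 (fun r hr => ?_)
    rw [Finset.mem_erase] at hr
    rcases le_or_gt (m:ℤ) |r| with h1 | h1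
    · rw [map_mul]
      calc _ ≤ B * 1 := mul_le_mul (out r h1) (hN.int _) (N.nonneg _) hB0
        _ = B := mul_one B
    · rw [hPs r (by rw [Finset.mem_Ioo]; exact abs_lt.mp h1) hr.1]; simpa using hB0
  have := (hN.sub (C (4 * m * n - r0^2) r0 * ((P.eval r0 : ℤ) : ℂ) + R) R).trans (max_le hle hRle)
  rwa [add_sub_cancel_right, map_mul, hP0, mul_one] at this

lemma lagrange {p : ℕ} {N : AbsoluteValue ℂ ℝ} (hN : PN p N) (hp : p.Prime) (hpm : 2 * m < p)
    (hm : 0 < m) (h : JS m C) {B : ℝ} (hB0 : 0 ≤ B) (hB : ∀ ν ≤ 2 * m, ∀ n, N (Mom m C ν n) ≤ B) (Δ l : ℤ) :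
    N (C Δ l) ≤ B := by
  by_cases hd : (4 * (m:ℤ)) ∣ Δ + l^2
  · obtain ⟨k, hk⟩ := hd
    have e : Δ = 4 * m * k - l^2 := by linarith
    rw [e]
    rcases lt_or_ge k 0 with h0 | h0
    · rw [h.c_neg hm k l h0]; simpa using hB0
    · obtain ⟨k, rfl⟩ := Int.eq_ofNat_of_zero_le h0
      exact lagrange_aux hN hp hpm hm h hB0 hB k l
  · rw [h.supp _ _ hd]; simpa using hB0

lemma coeff_bdd {p : ℕ} {N : AbsoluteValue ℂ ℝ} (hN : PN p N) (hp : p.Prime) (hpm : 2 * m < p)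
    (hm : 0 < m) (h : JS m C) : ∃ B : ℝ, ∀ Δ l, N (C Δ l) ≤ B := by
  choose B hB using fun ν => mom_bdd hN hm h ν
  have hB' : ∀ ν, 0 ≤ B ν := fun ν => (N.nonneg _).trans (hB ν 0)
  refine ⟨∑ ν ∈ Finset.range (2 * m + 1), B ν, lagrange hN hp hpm hm h (Finset.sum_nonneg (fun _ _ => hB' _)) (fun ν hν n => (hB ν n).trans ?_)⟩
  exact Finset.single_le_sum (fun i _ => hB' i) (Finset.mem_range.mpr (by omega))

lemma JS.eq_zero_of_mom (hm : 0 < m) (h : JS m C) (h0 : ∀ ν ≤ 2 * m, ∀ n, Mom m C ν n = 0) : C = 0 := by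
  obtain ⟨p, hle, hp⟩ := Nat.exists_infinite_primes (2 * m + 1)
  obtain ⟨N, hN⟩ := exists_PN p hp
  funext Δ l
  have := lagrange hN hp (by omega) hm h le_rfl (fun ν hν n => by rw [h0 ν hν n]; simp) Δ l
  exact N.eq_zero.mp (le_antisymm this (N.nonneg _))
end

lemma Mom_lin (m ν n : ℕ) (C D : ℤ → ℤ → ℂ) (a : ℂ) : Mom m (C + a • D) ν n = Mom m C ν n + a * Mom m D ν n := by
  simp only [Mom, Finset.mul_sum, ← Finset.sum_add_distrib]
  exact Finset.sum_congr rfl (fun r _ => by simp; ring)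

lemma Aser_lin (m ν : ℕ) (C D : ℤ → ℤ → ℂ) (a : ℂ) : Aser m (C + a • D) ν = Aser m C ν + a • Aser m D ν := by
  ext n
  simp [Aser, Mom_lin]; ring

lemma psis_lin (m ν : ℕ) (C D : ℤ → ℤ → ℂ) (a : ℂ) : psis m (C + a • D) ν = psis m C ν + a • psis m D ν := by
  simp only [psis, Finset.smul_sum, ← Finset.sum_add_distrib]
  exact Finset.sum_congr rfl (fun x _ => by rw [Aser_lin, mul_add, mul_smul_comm])

def qlin (k : ℤ) : ModularForm 𝒮ℒ k →ₗ[ℂ] PowerSeries ℂ where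
  toFun f := UpperHalfPlane.qExpansion 1 f
  map_add' f g := ModularForm.qExpansion_add one_pos one_mem_strictPeriods_SL f g
  map_smul' a f := ModularForm.qExpansion_smul one_pos one_mem_strictPeriods_SL a f

lemma finVV {m : ℕ} (hm : 0 < m) : FiniteDimensional ℂ (VV m) := by
  let W : Fin (2 * m + 1) → Submodule ℂ (PowerSeries ℂ) := fun ν => LinearMap.range (qlin ((1 + ν : ℕ) : ℤ))
  have e0 : ∀ (ν : ℕ), psis m 0 ν = 0 := fun ν => by
    have := psis_lin m ν 0 0 (-1)
    simpa using this
  let F : VV m →ₗ[ℂ] ((ν : Fin (2 * m + 1)) → W ν) :=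
    { toFun := fun C ν => ⟨psis m C.1 ν, ⟨psiM hm C.2.1 ν, psiM_q hm C.2.1 ν⟩⟩
      map_add' := fun C D => by
        funext ν; apply Subtype.ext
        have := psis_lin m ν C.1 D.1 1
        simpa using this
      map_smul' := fun a C => by
        funext ν; apply Subtype.ext
        have := psis_lin m ν 0 C.1 a
        simpa [e0] using this }
  apply FiniteDimensional.of_injective F
  rw [← LinearMap.ker_eq_bot, LinearMap.ker_eq_bot']
  intro C hC
  apply Subtype.ext
  refine C.2.1.eq_zero_of_mom hm (fun ν hν n => mom_zero (2 * m) (fun ν' hν' => ?_) ν hν n)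
  have := congrFun hC ⟨ν', by omega⟩
  exact congrArg Subtype.val this
end

lemma sqfree_jac (a : ℕ) (ha : Squarefree a) (h1 : a ≠ 1) (K : ℕ) : ∃ p, p.Prime ∧ K < p ∧ jacobiSym a p = -1 := by
  have ha0 : a ≠ 0 := ha.ne_zero
  by_cases hq : ∃ q, q.Prime ∧ q ∣ a ∧ q ≠ 2
  · obtain ⟨q, hq, ⟨a', rfl⟩, h2⟩ := hq
    have hodd : Odd q := hq.odd_of_ne_two h2
    have : Fact q.Prime := ⟨hq⟩
    have ha' : a' ≠ 0 := fun h => by simp [h] at ha0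
    have hc : Nat.Coprime q a' := Nat.coprime_of_squarefree_mul ha
    have hc4 : Nat.Coprime (4 * a') q := by
      refine Nat.Coprime.mul_left ?_ hc.symm
      exact (Nat.Coprime.pow_left 2 (Nat.coprime_two_left.mpr hodd) : Nat.Coprime (2^2) q)
    obtain ⟨u, hu⟩ := FiniteField.exists_nonsquare (F := ZMod q) (by rw [ZMod.ringChar_zmod_n]; exact h2)
    obtain ⟨x, hx1, hx2⟩ := Nat.chineseRemainder hc4 1 u.val
    have hu0 : u ≠ 0 := fun h => hu (by rw [h]; exact ⟨0, by simp⟩)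
    have hxc : x.Coprime (4 * a' * q) := by
      refine Nat.Coprime.mul_right ?_ ?_
      · rw [Nat.Coprime, Nat.ModEq.gcd_eq hx1]; simp
      · rw [Nat.coprime_comm, hq.coprime_iff_not_dvd, ← ZMod.natCast_eq_zero_iff]
        rw [(ZMod.natCast_eq_natCast_iff _ _ _).mpr hx2, ZMod.natCast_zmod_val]
        exact hu0
    obtain ⟨p, hpK, hp, hmod⟩ := Nat.forall_exists_prime_gt_and_modEq (max K 2) (q := 4 * a' * q) (by have := hq.ne_zero; positivity) hxc
    refine ⟨p, hp, lt_of_le_of_lt (le_max_left _ _) hpK, ?_⟩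
    have hp2 : p ≠ 2 := by have := lt_of_le_of_lt (le_max_right _ _) hpK; omega
    have hpo : Odd p := hp.odd_of_ne_two hp2
    have m1 : p ≡ 1 [MOD 4 * a'] := (hmod.of_mul_right q).trans hx1
    have m2 : p ≡ u.val [MOD q] := (hmod.of_mul_left _).trans hx2
    push_cast
    rw [jacobiSym.mul_left]
    have e1 : jacobiSym (a':ℤ) p = 1 := by
      rw [jacobiSym.mod_right _ hpo, Int.natAbs_natCast, m1, Nat.mod_eq_of_lt (by omega), jacobiSym.one_right]
    have e2 : jacobiSym (q:ℤ) p = -1 := by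
      rw [jacobiSym.quadratic_reciprocity_one_mod_four' hodd (by
        have : p ≡ 1 [MOD 4] := m1.of_mul_right a'
        exact this)]
      apply ZMod.nonsquare_iff_jacobiSym_eq_neg_one.mpr
      have : ((p:ℤ) : ZMod q) = u := by
        rw [Int.cast_natCast, (ZMod.natCast_eq_natCast_iff _ _ _).mpr m2, ZMod.natCast_zmod_val]
      rw [this]; exact hu
    rw [e1, e2]; norm_num
  · push Not at hq
    have h2 : a = 2 := by
      obtain ⟨q, hqp, hqa⟩ := Nat.exists_prime_and_dvd h1
      have := hq q hqp hqa
      subst this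
      obtain ⟨b, rfl⟩ := hqa
      have hb : b = 1 := by
        by_contra hb
        obtain ⟨r, hr, hrb⟩ := Nat.exists_prime_and_dvd hb
        have := hq r hr (dvd_mul_of_dvd_right hrb _)
        subst this
        have := ha 2 (Nat.mul_dvd_mul_left 2 hrb)
        norm_num at this
      rw [hb]
    subst h2
    obtain ⟨p, hpK, hp, hmod⟩ := Nat.forall_exists_prime_gt_and_modEq (max K 2) (q := 8) (a := 5) (by norm_num) (by norm_num)
    refine ⟨p, hp, lt_of_le_of_lt (le_max_left _ _) hpK, ?_⟩
    have hp2 : p ≠ 2 := by have := lt_of_le_of_lt (le_max_right _ _) hpK; omega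
    have := jacobiSym.at_two (hp.odd_of_ne_two hp2)
    push_cast
    rw [this]
    have e : (p : ZMod 8) = (5:ℕ) := (ZMod.natCast_eq_natCast_iff _ _ _).mpr hmod
    rw [e]; decide

lemma sq_of_jac (n : ℕ) (hn : 0 < n) (K : ℕ) (h : ∀ p : ℕ, p.Prime → K < p → jacobiSym n p = 1) : IsSquare n := by
  obtain ⟨a, b, hab, hs⟩ := Nat.sq_mul_squarefree n
  by_cases h1 : a = 1
  · rw [← hab, h1, mul_one]; exact ⟨b, sq b⟩
  obtain ⟨p, hp, hK, hj⟩ := sqfree_jac a hs h1 (K + n)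
  have := h p hp (by omega)
  have hb : (b:ℤ).gcd p = 1 := by
    rw [Int.gcd_natCast_natCast, ← Nat.coprime_iff_gcd_eq_one, Nat.coprime_comm]
    refine (hp.coprime_iff_not_dvd).mpr (fun hd => ?_)
    have : p ∣ n := by rw [← hab, sq, mul_assoc]; exact dvd_mul_of_dvd_left hd _
    have := Nat.le_of_dvd hn this
    omega
  rw [← hab] at this
  push_cast at this
  rw [jacobiSym.mul_left, jacobiSym.sq_one' hb, hj] at this
  norm_num at this

section
variable {m : ℕ} {C : ℤ → ℤ → ℂ}

lemma rec_bdd {p : ℕ} (hp : p.Prime) {N : AbsoluteValue ℂ ℝ} (hN : PN p N) (x : ℕ → ℂ) (ν χ : ℂ) (B : ℝ)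
    (hB : ∀ n, N (x n) ≤ B) (h0 : x 0 ≠ 0) (hχ : χ^2 = 1) (e0 : p * x 1 + χ * x 0 = ν * x 0)
    (e1 : ∀ n, p * x (n + 2) + x n = ν * x (n + 1)) : ν = χ * (p + 1) := by
  have hp0 : (p:ℂ) ≠ 0 := by exact_mod_cast hp.ne_zero
  have hNp := hN.pos hp
  obtain ⟨s, hs⟩ := IsAlgClosed.exists_pow_nat_eq ((ν/p)^2 - 4/p) (n := 2) (by norm_num)
  have hex : ∃ β γ : ℂ, β + γ = ν / p ∧ p * (β * γ) = 1 ∧ 1 < N β := by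
    have a1 : (ν/p + s)/2 + (ν/p - s)/2 = ν / p := by ring
    have a2 : p * ((ν/p + s)/2 * ((ν/p - s)/2)) = 1 := by
      have : (ν/p + s)/2 * ((ν/p - s)/2) = 1 / p := by
        rw [show (ν/p + s)/2 * ((ν/p - s)/2) = ((ν/p)^2 - s^2)/4 by ring, hs]; ring
      rw [this]; field_simp
    by_cases hb : 1 < N ((ν/p + s)/2)
    · exact ⟨_, _, a1, a2, hb⟩
    · refine ⟨_, _, (add_comm _ _).trans a1, by rw [mul_comm ((ν/p - s)/2)]; exact a2, ?_⟩
      push Not at hb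
      by_contra hc
      push Not at hc
      have := congrArg N a2
      rw [map_mul, map_mul, map_one] at this
      have h3 := mul_le_one₀ hb (N.nonneg _) hc
      have := hN.lt
      nlinarith
  obtain ⟨β, γ, hsum, hprod, hβ⟩ := hex
  have hν : ν = p * (β + γ) := by rw [hsum]; field_simp
  have step : ∀ n, x (n + 2) - γ * x (n + 1) = β * (x (n + 1) - γ * x n) := by
    intro n
    apply mul_left_cancel₀ hp0
    have := e1 n
    rw [hν] at this
    linear_combination this + x n * hprod
  have hpow : ∀ n, x (n + 1) - γ * x n = β^n * (x 1 - γ * x 0) := by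
    intro n
    induction n with
    | zero => simp
    | succ n ih => rw [step, ih]; ring
  have hy : x 1 - γ * x 0 = 0 := by
    by_contra hy
    have hyp : 0 < N (x 1 - γ * x 0) := N.pos hy
    have hB0 : 0 ≤ B := (N.nonneg _).trans (hB 0)
    have hb : ∀ n, N β ^ n * N (x 1 - γ * x 0) ≤ max B (N γ * B) := by
      intro n
      rw [← map_pow, ← map_mul, ← hpow]
      refine (hN.sub _ _).trans (max_le_max (hB _) ?_)
      rw [map_mul]; exact mul_le_mul_of_nonneg_left (hB _) (N.nonneg _)
    obtain ⟨n, hn⟩ := pow_unbounded_of_one_lt (max B (N γ * B) / N (x 1 - γ * x 0)) hβ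
    rw [div_lt_iff₀ hyp] at hn
    linarith [hb n]
  have hx1 : x 1 = γ * x 0 := by linear_combination hy
  have h3 : χ = p * β := by
    apply mul_right_cancel₀ h0
    rw [hx1, hν] at e0
    linear_combination e0
  have hχ0 : χ ≠ 0 := fun h => by rw [h] at hχ; norm_num at hχ
  have h4 : γ = χ := by
    apply mul_left_cancel₀ hχ0
    have : χ * γ = 1 := by rw [h3]; linear_combination hprod
    rw [this, ← sq, hχ]
  rw [hν, h4, mul_add, ← h3]; ring

lemma padic_step (hm : 0 < m) (h : JS m C) {p : ℕ} (hp : GP m p) {ν : ℂ} (hν : TT m p C = ν • C) (Δ R : ℤ)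
    (hd : ¬ (p:ℤ) ∣ Δ) (hC : C Δ R ≠ 0) : ν = (jacobiSym (-Δ) p : ℂ) * (p + 1) := by
  obtain ⟨N, hN⟩ := exists_PN p hp.1
  obtain ⟨B, hB⟩ := coeff_bdd hN hp.1 hp.2.1 hm h
  have hpi : Prime (p:ℤ) := Nat.prime_iff_prime_int.mp hp.1
  have hp0 : (p:ℤ) ≠ 0 := hpi.ne_zero
  have hpt := fun Δ R => congrFun (congrFun hν Δ) R
  simp only [TT, Pi.smul_apply, smul_eq_mul] at hpt
  have hgcd : (-Δ).gcd p = 1 := by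
    have := (Prime.coprime_iff_not_dvd hpi).mpr hd
    rw [Int.isCoprime_iff_gcd_eq_one] at this
    rw [Int.neg_gcd, Int.gcd_comm]; exact this
  refine rec_bdd hp.1 hN (fun n => C ((p:ℤ)^(2*n) * Δ) ((p:ℤ)^n * R)) ν (jacobiSym (-Δ) p) B (fun n => hB _ _) (by simpa using hC)
    ?_ ?_ ?_
  · have := jacobiSym.sq_one hgcd
    exact_mod_cast this
  · have := hpt Δ R
    rw [if_neg (fun h2 => hd (dvd_trans (dvd_pow_self _ two_ne_zero) h2))] at this
    simpa using this
  · intro n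
    have := hpt ((p:ℤ)^(2*(n+1)) * Δ) ((p:ℤ)^(n+1) * R)
    have hj : jacobiSym (-((p:ℤ)^(2*(n+1)) * Δ)) p = 0 := by
      have : Fact p.Prime := ⟨hp.1⟩
      rw [← jacobiSym.legendreSym.to_jacobiSym, legendreSym.eq_zero_iff]
      simp
    have hdv : (p:ℤ)^(2*(n+1)) * Δ = (p:ℤ)^2 * ((p:ℤ)^(2*n) * Δ) := by ring
    rw [hj, if_pos (by rw [hdv]; exact dvd_mul_right _ _), hdv, Int.mul_ediv_cancel_left _ (pow_ne_zero 2 hp0)] at this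
    have e : C ((p:ℤ)^(2*n) * Δ) (pinv m p * ((p:ℤ)^(n+1) * R)) = C ((p:ℤ)^(2*n) * Δ) ((p:ℤ)^n * R) := by
      apply h.per'
      have h1 := pinv_spec hm (hp.coprime hm)
      rw [show pinv m p * ((p:ℤ)^(n+1) * R) - (p:ℤ)^n * R = (p * pinv m p - 1) * ((p:ℤ)^n * R) by ring]
      exact dvd_mul_of_dvd_left h1 _
    rw [e] at this
    simp only [Int.cast_zero, zero_mul, add_zero] at this
    rw [show (p:ℤ)^(2*(n+2)) * Δ = (p:ℤ)^2 * ((p:ℤ)^2 * ((p:ℤ)^(2*n) * Δ)) by ring,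
      show (p:ℤ)^(n+2) * R = p * ((p:ℤ)^(n+1) * R) by ring, show (p:ℤ)^(2*(n+1)) * Δ = (p:ℤ)^2 * ((p:ℤ)^(2*n) * Δ) by ring]
    exact this

lemma supp_sq (hm : 0 < m) (h : JS m C) (hT : ∀ p, GP m p → ∃ ν : ℂ, TT m p C = ν • C) (Δ R Δ' R' : ℤ)
    (h0 : 0 < Δ) (h0' : 0 < Δ') (hC : C Δ R ≠ 0) (hC' : C Δ' R' ≠ 0) : IsSquare (Δ * Δ') := by
  have key := sq_of_jac (Δ * Δ').toNat (by have := mul_pos h0 h0'; omega) (2 * m + 2 + Δ.toNat + Δ'.toNat) (fun p hp hK => by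
    obtain ⟨ν, hν⟩ := hT p ⟨hp, by omega, by omega⟩
    have d1 : ¬ (p:ℤ) ∣ Δ := fun hd => by have := Int.le_of_dvd h0 hd; omega
    have d2 : ¬ (p:ℤ) ∣ Δ' := fun hd => by have := Int.le_of_dvd h0' hd; omega
    have e1 := padic_step hm h ⟨hp, by omega, by omega⟩ hν Δ R d1 hC
    have e2 := padic_step hm h ⟨hp, by omega, by omega⟩ hν Δ' R' d2 hC'
    have hp1 : (p:ℂ) + 1 ≠ 0 := by exact_mod_cast p.succ_ne_zero
    have e3 : jacobiSym (-Δ) p = jacobiSym (-Δ') p := by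
      have := mul_right_cancel₀ hp1 (e1.symm.trans e2)
      exact_mod_cast this
    rw [Int.toNat_of_nonneg (mul_pos h0 h0').le, ← neg_mul_neg, jacobiSym.mul_left, ← e3, ← sq]
    apply jacobiSym.sq_one
    have := (Prime.coprime_iff_not_dvd (Nat.prime_iff_prime_int.mp hp)).mpr d1
    rw [Int.isCoprime_iff_gcd_eq_one] at this
    rw [Int.neg_gcd, Int.gcd_comm]; exact this)
  obtain ⟨b, hb⟩ := key
  refine ⟨b, ?_⟩
  rw [← Int.toNat_of_nonneg (mul_pos h0 h0').le, hb]; push_cast; ring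
end

lemma lim_hh {m : ℕ} (hm : 0 < m) (a : ℤ → ℂ) (Δ1 : ℤ) (h0 : ∀ Δ < Δ1, a Δ = 0)
    (hs : Summable (fun Δ : ℤ => a Δ * ee (Δ / (4 * m) * I))) :
    Tendsto (fun y : ℝ => (Real.exp (2 * Real.pi * (Δ1 / (4 * m) * y)) : ℂ) * ∑' Δ : ℤ, a Δ * ee (Δ / (4 * m) * (y * I))) atTop (𝓝 (a Δ1)) := by
  have hm' : (0:ℝ) < 4 * m := by positivity
  have hterm : ∀ (y : ℝ) (Δ : ℤ), (Real.exp (2 * Real.pi * (Δ1 / (4 * m) * y)) : ℂ) * (a Δ * ee (Δ / (4 * m) * (y * I)))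
      = a Δ * (Real.exp (-(2 * Real.pi * (((Δ:ℝ) - Δ1) / (4 * m))) * y) : ℂ) := by
    intro y Δ
    rw [ee]
    push_cast
    rw [mul_left_comm, ← Complex.exp_add]
    congr 2
    have hI : I * I = -1 := I_mul_I
    linear_combination (2 * Real.pi * (Δ / (4 * m)) * y) * hI
  have key : Tendsto (fun y : ℝ => ∑' Δ : ℤ, a Δ * (Real.exp (-(2 * Real.pi * (((Δ:ℝ) - Δ1) / (4 * m))) * y) : ℂ)) atTop
      (𝓝 (∑' Δ : ℤ, if Δ = Δ1 then a Δ1 else 0)) := by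
    refine tendsto_tsum_of_dominated_convergence (bound := fun Δ => ‖(Real.exp (2 * Real.pi * (Δ1 / (4 * m) * 1)) : ℂ) * (a Δ * ee (Δ / (4 * m) * ((1:ℝ) * I)))‖) ?_ ?_ ?_
    · have := (hs.mul_left (Real.exp (2 * Real.pi * (Δ1 / (4 * m) * 1)) : ℂ)).norm
      simpa using this
    · intro Δ
      rcases lt_trichotomy Δ Δ1 with h | h | h
      · simp [h0 Δ h, h.ne]
      · subst h; simp
      · rw [if_neg h.ne']
        have h1 : 0 < 2 * Real.pi * (((Δ:ℝ) - Δ1) / (4 * m)) := by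
          have : (0:ℝ) < (Δ:ℝ) - Δ1 := by exact_mod_cast sub_pos.mpr h
          have := Real.pi_pos
          positivity
        have h2 : Tendsto (fun y : ℝ => Real.exp (-(2 * Real.pi * (((Δ:ℝ) - Δ1) / (4 * m))) * y)) atTop (𝓝 0) := by
          refine Real.tendsto_exp_atBot.comp ?_
          exact tendsto_id.const_mul_atTop_of_neg (by linarith)
        have h3 := (Complex.continuous_ofReal.tendsto 0).comp h2
        have h4 := h3.const_mul (a Δ)
        simpa using h4
    · filter_upwards [eventually_ge_atTop (1:ℝ)] with y hy Δ
      rw [hterm, norm_mul, norm_mul]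
      rcases lt_or_ge Δ Δ1 with h | h
      · simp [h0 Δ h]
      · refine mul_le_mul_of_nonneg_left ?_ (norm_nonneg _)
        rw [Complex.norm_real, Complex.norm_real, Real.norm_of_nonneg (Real.exp_pos _).le, Real.norm_of_nonneg (Real.exp_pos _).le]
        apply Real.exp_le_exp.mpr
        have h1 : 0 ≤ 2 * Real.pi * (((Δ:ℝ) - Δ1) / (4 * m)) := by
          have : (0:ℝ) ≤ (Δ:ℝ) - Δ1 := by exact_mod_cast sub_nonneg.mpr h
          have := Real.pi_pos
          positivity
        nlinarith
  rw [tsum_ite_eq] at key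
  refine key.congr (fun y => ?_)
  rw [← tsum_mul_left]
  exact tsum_congr (fun Δ => (hterm y Δ).symm)

section
variable {m : ℕ} {C : ℤ → ℤ → ℂ}

def vv (m : ℕ) (C : ℤ → ℤ → ℂ) (τ : ℂ) : Fin (2 * m) → ℂ := fun l => hh m C ((l:ℕ):ℤ) τ

def Smat (m : ℕ) : Matrix (Fin (2 * m)) (Fin (2 * m)) ℂ := fun r l => ee (-(((r:ℕ):ℂ) * ((l:ℕ):ℂ)) / (2 * m))

lemma vv_S (hm : 0 < m) (h : JS m C) (τ : ℂ) (hτ : 0 < τ.im) :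
    ∃ s : ℂ, s^2 = -I / (2 * m * τ) ∧ vv m C τ = s • (Smat m).mulVecLin (vv m C (-1/τ)) := by
  have h0 := ne_zero_of_im hτ
  have hm' : (m:ℂ) ≠ 0 := by exact_mod_cast hm.ne'
  refine ⟨kap m τ / τ, ?_, ?_⟩
  · rw [div_pow, kap_sq]; field_simp
  · funext r
    have := h.star hm τ hτ ((r:ℕ):ℤ)
    simp only [vv, Pi.smul_apply, smul_eq_mul, Matrix.mulVecLin_apply, Matrix.mulVec, dotProduct, Smat]
    rw [Finset.sum_range] at this
    push_cast at this
    rw [div_mul_eq_mul_div, eq_div_iff h0, mul_comm, ← this]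

lemma vv_T {p : ℕ} (hp : 0 < p) (hm : 0 < m) 
    (H : ∀ Δ1 Δ2 l : ℤ, C Δ1 l ≠ 0 → C Δ2 l ≠ 0 → (4 * m * p : ℤ) ∣ Δ1 - Δ2) :
    ∃ D : (Fin (2 * m) → ℂ) →ₗ[ℂ] (Fin (2 * m) → ℂ), ∀ τ : ℂ, vv m C (τ + 1/p) = D (vv m C τ) := by
  have hm' : (m:ℂ) ≠ 0 := by exact_mod_cast hm.ne'
  have hp' : (p:ℂ) ≠ 0 := by exact_mod_cast hp.ne'
  have key : ∀ l : ℤ, ∃ w : ℂ, ∀ τ, hh m C l (τ + 1/p) = w * hh m C l τ := by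
    intro l
    by_cases hex : ∃ Δ0, C Δ0 l ≠ 0
    · obtain ⟨Δ0, hΔ0⟩ := hex
      refine ⟨ee (Δ0 / (4 * m) * (1/p)), fun τ => ?_⟩
      rw [hh, hh, ← tsum_mul_left]
      refine tsum_congr (fun Δ => ?_)
      by_cases hz : C Δ l = 0
      · simp [hz]
      obtain ⟨k, hk⟩ := H Δ Δ0 l hz hΔ0
      rw [mul_left_comm, ← ee_add]
      congr 1
      apply ee_congr k
      have hk' : (Δ:ℂ) = Δ0 + 4 * m * p * k := by
        have : (Δ:ℤ) = Δ0 + 4 * m * p * k := by linarith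
        exact_mod_cast this
      rw [hk']; field_simp; ring
    · push Not at hex
      refine ⟨0, fun τ => ?_⟩
      simp [hh, hex]
  choose w hw using key
  refine ⟨(Matrix.diagonal (fun l : Fin (2 * m) => w ((l:ℕ):ℤ))).mulVecLin, fun τ => ?_⟩
  funext l
  simp only [vv, hw, Matrix.mulVecLin_apply, Matrix.mulVec_diagonal]

lemma vv_chain {p : ℕ} (hp : 0 < p) (hm : 0 < m) (h : JS m C)
    (H : ∀ Δ1 Δ2 l : ℤ, C Δ1 l ≠ 0 → C Δ2 l ≠ 0 → (4 * m * p : ℤ) ∣ Δ1 - Δ2) :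
    ∃ L : (Fin (2 * m) → ℂ) →ₗ[ℂ] (Fin (2 * m) → ℂ), ∀ τ : ℂ, 0 < τ.im →
      vv m C (τ / p^2) = L (vv m C τ) ∨ vv m C (τ / p^2) = - L (vv m C τ) := by
  have hm' : (m:ℂ) ≠ 0 := by exact_mod_cast hm.ne'
  have hp' : (p:ℂ) ≠ 0 := by exact_mod_cast hp.ne'
  obtain ⟨D, hD⟩ := vv_T hp hm H
  have hDn : ∀ (n : ℕ) (τ : ℂ), vv m C (τ + n/p) = (D^n) (vv m C τ) := by
    intro n
    induction n with
    | zero => intro τ; simp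
    | succ n ih =>
      intro τ
      rw [pow_succ', Module.End.mul_apply, ← ih, ← hD]
      congr 1; push_cast; ring
  obtain ⟨c0, hc0⟩ := IsAlgClosed.exists_pow_nat_eq ((-I / (2 * m))^3 * p : ℂ) (n := 2) (by norm_num)
  let M := (Smat m).mulVecLin
  refine ⟨c0 • (D ∘ₗ M ∘ₗ (D^(p^2)) ∘ₗ M ∘ₗ D ∘ₗ M), fun τ hτ => ?_⟩
  have hτ0 := ne_zero_of_im hτ
  have hτp : τ - p ≠ 0 := fun h => by
    have : τ = p := by linear_combination h
    rw [this] at hτ; simp at hτ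
  have i1 : 0 < ((τ - p) / p^2).im := by
    have : (τ - p) / (p:ℂ)^2 = (τ + ((-p:ℝ):ℂ)) / ((p^2:ℕ):ℂ) := by push_cast; ring
    rw [this, Complex.div_natCast_im]
    simp only [Complex.add_im, Complex.ofReal_im, add_zero]
    positivity
  have e2 : -1 / ((τ - p) / p^2) = (-(p * τ) / (τ - p)) + ((p^2:ℕ):ℂ) / p := by
    push_cast; field_simp; ring
  have i2 : 0 < (-(p * τ) / (τ - p)).im := by
    have := im_neg_inv i1
    rw [e2] at this
    have e : (((p^2:ℕ):ℂ) / p).im = 0 := by rw [Complex.div_natCast_im, Complex.natCast_im]; simp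
    rwa [Complex.add_im, e, add_zero] at this
  have e3 : -1 / (-(p * τ) / (τ - p)) = -1/τ + 1/p := by field_simp; ring
  have i3 := im_neg_inv hτ
  have e4 : -1 / (-1/τ) = τ := by field_simp
  obtain ⟨s1, q1, r1⟩ := vv_S hm h _ i1
  obtain ⟨s2, q2, r2⟩ := vv_S hm h _ i2
  obtain ⟨s3, q3, r3⟩ := vv_S hm h _ i3
  rw [e2, hDn] at r1
  rw [e3, hD] at r2
  rw [e4] at r3
  have tot : vv m C (τ / p^2) = (s1 * s2 * s3) • (D ∘ₗ M ∘ₗ (D^(p^2)) ∘ₗ M ∘ₗ D ∘ₗ M) (vv m C τ) := by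
    have : τ / (p:ℂ)^2 = (τ - p) / p^2 + 1/p := by field_simp; ring
    rw [this, hD, r1, r2, r3]
    simp only [map_smul, LinearMap.comp_apply, smul_smul, mul_assoc]
    rfl
  have hsq : (s1 * s2 * s3)^2 = c0^2 := by
    rw [hc0, mul_pow, mul_pow, q1, q2, q3]
    field_simp
    try ring
  rcases sq_eq_sq_iff_eq_or_eq_neg.mp hsq with e | e
  · left; rw [tot, e]; rfl
  · right; rw [tot, e, neg_smul]; rfl

lemma growth {p : ℕ} (hp : 2 ≤ p) (hm : 0 < m) (h : JS m C) (hol : ∀ Δ l : ℤ, Δ < 0 → C Δ l = 0)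
    (H : ∀ Δ1 Δ2 l : ℤ, C Δ1 l ≠ 0 → C Δ2 l ≠ 0 → (4 * m * p : ℤ) ∣ Δ1 - Δ2) (Δ l : ℤ) (hΔ : 0 < Δ) : C Δ l = 0 := by
  by_contra hne
  have hp0 : (0:ℝ) < p := by positivity
  obtain ⟨L, hL⟩ := vv_chain (by omega) hm h H
  -- least positive exponent
  have hex : ∃ n : ℕ, 0 < n ∧ ∃ l : ℤ, C n l ≠ 0 := ⟨Δ.toNat, by omega, l, by rwa [Int.toNat_of_nonneg hΔ.le]⟩
  obtain ⟨hn0, l1, hl1⟩ := Nat.find_spec hex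
  set n := Nat.find hex
  have hmin : ∀ (k : ℕ), 0 < k → k < n → ∀ l, C k l = 0 := by
    intro k hk hkn l
    by_contra hc
    exact Nat.find_min hex hkn ⟨hk, l, hc⟩
  let V0 : Fin (2 * m) → ℂ := fun l => C 0 ((l:ℕ):ℤ)
  let V1 : Fin (2 * m) → ℂ := fun l => C n ((l:ℕ):ℤ)
  have hV1 : V1 ≠ 0 := by
    intro hz
    apply hl1
    have hr : C n l1 = C n (((l1 % (2 * m)).toNat : ℕ) : ℤ) := by
      apply h.per'
      rw [Int.toNat_of_nonneg (Int.emod_nonneg _ (by positivity))]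
      exact Int.dvd_self_sub_emod
    rw [hr]
    have hlt := Int.emod_lt_of_pos l1 (b := 2 * m) (by positivity)
    exact congrFun hz ⟨(l1 % (2 * m)).toNat, by omega⟩
  have hII : 0 < (I:ℂ).im := by simp
  let A : ℝ := 2 * Real.pi * (n / (4 * m))
  have hA : 0 < A := by have := Real.pi_pos; positivity
  have lim0 : Tendsto (fun y : ℝ => vv m C (y * I)) atTop (𝓝 V0) := by
    rw [tendsto_pi_nhds]
    intro l
    have := lim_hh hm (fun Δ => C Δ ((l:ℕ):ℤ)) 0 (fun Δ hΔ => hol _ _ hΔ) (hh_summable hm h.ps _ I hII)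
    simpa [vv, hh, V0] using this
  have lim1 : Tendsto (fun y : ℝ => (Real.exp (A * y) : ℂ) • (vv m C (y * I) - V0)) atTop (𝓝 V1) := by
    rw [tendsto_pi_nhds]
    intro l
    let a : ℤ → ℂ := fun Δ => if Δ = 0 then 0 else C Δ ((l:ℕ):ℤ)
    have haeq : ∀ (y : ℝ) (Δ : ℤ), a Δ * ee (Δ / (4 * m) * (y * I)) = C Δ ((l:ℕ):ℤ) * ee (Δ / (4 * m) * (y * I)) - 
        (if Δ = 0 then C 0 ((l:ℕ):ℤ) else 0) := by
      intro y Δ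
      by_cases hz : Δ = 0
      · subst hz; simp [a, ee_zero]
      · simp [a, hz]
    have hsub : ∀ y : ℝ, 0 < y → HasSum (fun Δ : ℤ => a Δ * ee (Δ / (4 * m) * (y * I))) (hh m C ((l:ℕ):ℤ) (y * I) - C 0 ((l:ℕ):ℤ)) := by
      intro y hy
      have h1 := (hh_summable hm h.ps ((l:ℕ):ℤ) (y * I) (by simpa using hy)).hasSum.sub (hasSum_ite_eq (0:ℤ) (C 0 ((l:ℕ):ℤ)))
      exact hasSum_cg h1 (fun Δ => haeq y Δ) rfl
    have := lim_hh hm a n (fun Δ hΔ => by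
      rcases lt_trichotomy Δ 0 with hz | hz | hz
      · simp [a, hz.ne, hol _ _ hz]
      · simp [a, hz]
      · simp only [a, if_neg hz.ne']
        have := hmin Δ.toNat (by omega) (by omega) ((l:ℕ):ℤ)
        rwa [Int.toNat_of_nonneg hz.le] at this) (by simpa using (hsub 1 one_pos).summable)
    have ha : a n = V1 l := by simp only [a, V1]; rw [if_neg (by exact_mod_cast hn0.ne')]
    rw [ha] at this
    refine this.congr' ?_
    filter_upwards [eventually_gt_atTop 0] with y hy
    rw [(hsub y hy).tsum_eq]
    simp only [Pi.smul_apply, Pi.sub_apply, vv, V0, smul_eq_mul, A]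
    congr 3
    push_cast; ring
  have hdiv : Tendsto (fun y : ℝ => y / (p:ℝ)^2) atTop atTop := tendsto_id.atTop_div_const (by positivity)
  let L' := LinearMap.toContinuousLinearMap L
  -- choose a sign
  have hfreq : ∃ K : (Fin (2 * m) → ℂ) →L[ℂ] (Fin (2 * m) → ℂ), ∃ᶠ y : ℝ in atTop, vv m C ((y / (p:ℝ)^2 : ℝ) * I) = K (vv m C (y * I)) := by
    have hev : ∀ᶠ y : ℝ in atTop, vv m C ((y / (p:ℝ)^2 : ℝ) * I) = L' (vv m C (y * I)) ∨ vv m C ((y / (p:ℝ)^2 : ℝ) * I) = (-L') (vv m C (y * I)) := by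
      filter_upwards [eventually_gt_atTop 0] with y hy
      have := hL (y * I) (by simpa using hy)
      rw [show (y * I) / (p:ℂ)^2 = ((y / (p:ℝ)^2 : ℝ) * I : ℂ) by push_cast; ring] at this
      exact this
    rcases frequently_or_distrib.mp hev.frequently with h1 | h1
    · exact ⟨_, h1⟩
    · exact ⟨_, h1⟩
  obtain ⟨K, hK⟩ := hfreq
  have hV0 : V0 = K V0 := by
    by_contra hc
    have t1 := lim0.comp hdiv
    have t2 := (K.continuous.tendsto V0).comp lim0
    have := (t1.sub t2).eventually_ne (sub_ne_zero.mpr hc)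
    obtain ⟨y, hy1, hy2⟩ := (hK.and_eventually this).exists
    exact hy2 (sub_eq_zero.mpr hy1)
  have t1 := (lim1.comp hdiv).norm
  have t2 : Tendsto (fun y : ℝ => ‖K‖ * (Real.exp (-(A * (1 - 1/(p:ℝ)^2)) * y) * ‖(Real.exp (A * y) : ℂ) • (vv m C (y * I) - V0)‖)) atTop (𝓝 0) := by
    have hneg : -(A * (1 - 1/(p:ℝ)^2)) < 0 := by
      have hp2 : (2:ℝ) ≤ p := by exact_mod_cast hp
      have : 1 / (p:ℝ)^2 < 1 := by rw [div_lt_one (by positivity)]; nlinarith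
      have : 0 < A * (1 - 1/(p:ℝ)^2) := mul_pos hA (by linarith)
      linarith
    have h2 : Tendsto (fun y : ℝ => Real.exp (-(A * (1 - 1/(p:ℝ)^2)) * y)) atTop (𝓝 0) :=
      Real.tendsto_exp_atBot.comp (tendsto_id.const_mul_atTop_of_neg hneg)
    have := (h2.mul lim1.norm).const_mul ‖K‖
    simpa using this
  have hpos : 0 < ‖V1‖ := norm_pos_iff.mpr hV1
  have ev1 := t1.eventually (lt_mem_nhds (half_lt_self hpos))
  have ev2 := t2.eventually (gt_mem_nhds (half_pos hpos))
  obtain ⟨y, hy, h1, h2⟩ := (hK.and_eventually (ev1.and ev2)).exists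
  have hle : ‖vv m C ((y / (p:ℝ)^2 : ℝ) * I) - V0‖ ≤ ‖K‖ * ‖vv m C (y * I) - V0‖ := by
    nth_rewrite 1 [hV0]
    rw [hy, ← map_sub]; exact K.le_opNorm _
  simp only [Function.comp, norm_smul, Complex.norm_real, Real.norm_of_nonneg (Real.exp_pos _).le] at h1 h2
  rw [← mul_assoc (Real.exp _), ← Real.exp_add, show -(A * (1 - 1/(p:ℝ)^2)) * y + A * y = A * (y / (p:ℝ)^2) by field_simp; ring] at h2
  have := mul_le_mul_of_nonneg_left hle (Real.exp_pos (A * (y / (p:ℝ)^2))).le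
  nlinarith
end

lemma pow_dvd_of_sq {p : ℕ} (hp : p.Prime) (K : ℕ) (l : ℤ) (h : (p:ℤ)^K ∣ l^2) : (p:ℤ)^((K+1)/2) ∣ l := by
  haveI := Fact.mk hp
  rw [padicValInt_dvd_iff] at h ⊢
  rcases h with h | h
  · left; exact pow_eq_zero_iff (two_ne_zero) |>.mp h
  · by_cases h0 : l = 0
    · left; exact h0
    right
    rw [pow_two, padicValInt.mul h0 h0] at h
    omega

lemma odd_split {p : ℕ} (hp : p.Prime) (K : ℕ) (Δ l : ℤ) (ho : Δ = 0 ∨ Odd (padicValInt p Δ))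
    (h : (p:ℤ)^K ∣ Δ + l^2) : (p:ℤ)^K ∣ Δ ∧ (p:ℤ)^K ∣ l^2 := by
  haveI := Fact.mk hp
  suffices hs : (p:ℤ)^K ∣ Δ from ⟨hs, (Int.dvd_add_right hs).mp h⟩
  rcases ho with h0 | ⟨a, ha⟩
  · simp [h0]
  by_contra hc
  have hne : Δ ≠ 0 := by rintro rfl; simp at hc
  have hlt : 2 * a + 1 < K := by
    by_contra hk
    exact hc ((padicValInt_dvd_iff _ _).mpr (Or.inr (by omega)))
  have d1 : (p:ℤ)^(2*a+2) ∣ Δ + l^2 := (pow_dvd_pow _ (by omega)).trans h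
  have d2 : (p:ℤ)^(2*a+1) ∣ Δ := (padicValInt_dvd_iff _ _).mpr (Or.inr ha.ge)
  have d3 : (p:ℤ)^(2*a+1) ∣ l^2 := (Int.dvd_add_right d2).mp ((pow_dvd_pow _ (by omega)).trans d1)
  have d4 := pow_dvd_of_sq hp _ _ d3
  rw [show (2*a+1+1)/2 = a+1 by omega] at d4
  have d5 : (p:ℤ)^(2*a+2) ∣ l^2 := by
    have := pow_dvd_pow_of_dvd d4 2
    rwa [← pow_mul, show (a+1)*2 = 2*a+2 by ring] at this
  have d6 := (Int.dvd_add_left d5).mp d1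
  rw [padicValInt_dvd_iff] at d6
  rcases d6 with d6 | d6
  · exact hne d6
  · omega

lemma exists_odd_prime (n : ℕ) (hn : 0 < n) (hs : ¬ IsSquare n) : ∃ p : ℕ, p.Prime ∧ Odd (padicValNat p n) := by
  obtain ⟨a, b, hab, hsq⟩ := Nat.sq_mul_squarefree n
  have ha : a ≠ 1 := by
    rintro rfl
    exact hs ⟨b, by rw [← hab]; ring⟩
  obtain ⟨p, hp, hpa⟩ := Nat.exists_prime_and_dvd ha
  haveI := Fact.mk hp
  have ha0 : a ≠ 0 := by rintro rfl; simp at hab; omega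
  have hb0 : b ≠ 0 := by rintro rfl; simp at hab; omega
  refine ⟨p, hp, b.factorization p, ?_⟩
  rw [← hab, ← Nat.factorization_def _ hp, Nat.factorization_mul (pow_ne_zero 2 hb0) ha0, Nat.factorization_pow]
  have h1 := hsq.natFactorization_le_one p
  have h2 := hp.factorization_pos_of_dvd ha0 hpa
  simp only [Finsupp.add_apply, Finsupp.smul_apply, smul_eq_mul]
  omega

lemma two_sq (i : ℕ) : ∀ n l : ℤ, (2:ℤ)^(2*i) ∣ n^2 + l^2 → (2:ℤ)^i ∣ n ∧ (2:ℤ)^i ∣ l := by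
  induction i with
  | zero => intro n l _; simp
  | succ i ih =>
    intro n l h
    have h4 : (4:ℤ) ∣ n^2 + l^2 := (show (4:ℤ) ∣ 2^(2*(i+1)) from ⟨2^(2*i), by ring⟩).trans h
    have hpar : Even n ∧ Even l := by
      rcases Int.even_or_odd' n with ⟨a, rfl | rfl⟩ <;> rcases Int.even_or_odd' l with ⟨b, rfl | rfl⟩
      · simp
      · ring_nf at h4; omega
      · ring_nf at h4; omega
      · ring_nf at h4; omega
    obtain ⟨⟨a, rfl⟩, ⟨b, rfl⟩⟩ := hpar
    have : (2:ℤ)^(2*i) ∣ a^2 + b^2 := by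
      have e1 : (2:ℤ)^(2*(i+1)) = 4 * 2^(2*i) := by ring
      have e2 : (a+a)^2 + (b+b)^2 = 4 * (a^2+b^2) := by ring
      rw [e1, e2] at h
      exact Int.dvd_of_mul_dvd_mul_left (by norm_num) h
    obtain ⟨h1, h2⟩ := ih a b this
    rw [pow_succ, ← mul_two, ← mul_two]
    exact ⟨mul_dvd_mul_right h1 2, mul_dvd_mul_right h2 2⟩

lemma not_dvd_pow {p k j m' : ℕ} (hp : p.Prime) (hm' : ¬ p ∣ m') (hj : k < 2 * j) (hjk : j ≤ k) :
    ¬ p^j ∣ p^(k-j) * m' := by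
  intro h
  have : p^(k-j) * p ∣ p^(k-j) * m' := by
    rw [← pow_succ]; exact (pow_dvd_pow _ (by omega)).trans h
  exact hm' (Nat.dvd_of_mul_dvd_mul_left (pow_pos hp.pos _) this)

section
variable {m : ℕ} {C : ℤ → ℤ → ℂ}

lemma case_odd (hm : 0 < m) (h : JS m C) (hol : ∀ Δ l : ℤ, Δ < 0 → C Δ l = 0) (p : ℕ) (hp : p.Prime)
    (ho : ∀ Δ l : ℤ, C Δ l ≠ 0 → Δ = 0 ∨ Odd (padicValInt p Δ)) (Δ0 R0 : ℤ) (hΔ0 : 0 < Δ0) : C Δ0 R0 = 0 := by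
  haveI := Fact.mk hp
  obtain ⟨k, m', hm', hk⟩ := Nat.exists_eq_pow_mul_and_not_dvd (n := 2 * m) (by omega) p hp.ne_one
  have hdv : ∀ Δ l : ℤ, C Δ l ≠ 0 → (4 * m : ℤ) ∣ Δ + l^2 := fun Δ l hc => by
    by_contra hd; exact hc (h.supp Δ l hd)
  have main : ∀ K j : ℕ, ((p:ℤ)^K ∣ 4 * m) → j = (K+1)/2 → k < 2 * j → j ≤ k → C = 0 := by
    intro K j hK hj h1 h2
    refine h.F1' hm (p^j) (p^(k-j) * m') ?_ (not_dvd_pow hp hm' h1 h2) ?_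
    · rw [hk, ← mul_assoc, ← pow_add, Nat.add_sub_cancel' h2]
    · intro Δ l hl
      by_contra hc
      apply hl
      push_cast
      rw [hj]
      exact pow_dvd_of_sq hp K l (odd_split hp K Δ l (ho Δ l hc) (hK.trans (hdv Δ l hc))).2
  have hk4 : (4 * m : ℤ) = 2 * ((p:ℤ)^k * m') := by
    have : ((2 * m : ℕ) : ℤ) = ((p^k*m' : ℕ) : ℤ) := by rw [hk]
    push_cast at this; linarith
  by_cases hp2 : p = 2
  · subst hp2
    have hk1 : 1 ≤ k := by
      by_contra hk0
      have : k = 0 := by omega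
      subst this
      apply hm'
      exact ⟨m, by simpa using hk.symm⟩
    rw [main (k+1) ((k+1+1)/2) ⟨m', by rw [hk4]; push_cast; ring⟩ rfl (by omega) (by omega)]; rfl
  rcases Nat.even_or_odd' k with ⟨i, hi | hi⟩
  · -- k even
    refine growth hp.two_le hm h hol ?_ Δ0 R0 hΔ0
    have hpk : ∀ Δ l : ℤ, C Δ l ≠ 0 → (p:ℤ)^(k+1) ∣ Δ := by
      intro Δ l hc
      have h1 := (odd_split hp k Δ l (ho Δ l hc) ((show (p:ℤ)^k ∣ 4 * m from ⟨2 * m', by rw [hk4]; ring⟩).trans (hdv Δ l hc))).1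
      rcases ho Δ l hc with h0 | ⟨a, ha⟩
      · simp [h0]
      rw [padicValInt_dvd_iff] at h1 ⊢
      rcases h1 with h1 | h1
      · left; exact h1
      · right; omega
    intro Δ1 Δ2 l c1 c2
    have d1 : (p:ℤ)^(k+1) ∣ Δ1 - Δ2 := dvd_sub (hpk _ _ c1) (hpk _ _ c2)
    have d2 : (4 * m : ℤ) ∣ Δ1 - Δ2 := by
      have := dvd_sub (hdv _ _ c1) (hdv _ _ c2)
      rwa [add_sub_add_right_eq_sub] at this
    have hcop : IsCoprime ((p:ℤ)^(k+1)) (2 * m' : ℤ) := by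
      apply IsCoprime.pow_left
      have : Nat.Coprime p (2 * m') := by
        rw [Nat.Prime.coprime_iff_not_dvd hp]
        intro hd
        rcases hp.dvd_mul.mp hd with hd | hd
        · exact hp2 ((Nat.prime_dvd_prime_iff_eq hp Nat.prime_two).mp hd)
        · exact hm' hd
      exact_mod_cast Nat.isCoprime_iff_coprime.mpr this
    have d3 : (2 * m' : ℤ) ∣ Δ1 - Δ2 := (show (2 * m' : ℤ) ∣ 4 * m from ⟨(p:ℤ)^k, by rw [hk4]; ring⟩).trans d2
    have := hcop.mul_dvd d1 d3
    rwa [show (4 * m * p : ℤ) = (p:ℤ)^(k+1) * (2 * m') by rw [hk4]; ring]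
  · rw [main k ((k+1)/2) ⟨2 * m', by rw [hk4]; ring⟩ rfl (by omega) (by omega)]; rfl

lemma case_sq (hm : 0 < m) (h : JS m C) (hs : ∀ Δ l : ℤ, C Δ l ≠ 0 → IsSquare Δ) : C = 0 := by
  obtain ⟨k, m', hm', hk⟩ := Nat.exists_eq_pow_mul_and_not_dvd (n := 2 * m) (by omega) 2 (by norm_num)
  have hk1 : 1 ≤ k := by
    by_contra hk0
    have : k = 0 := by omega
    subst this
    apply hm'
    exact ⟨m, by simpa using hk.symm⟩
  have hk4 : (4 * m : ℤ) = 2^(k+1) * m' := by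
    have : ((2 * m : ℕ) : ℤ) = ((2^k*m' : ℕ) : ℤ) := by rw [hk]
    push_cast at this; rw [pow_succ]; linarith
  have hdv : ∀ Δ l : ℤ, C Δ l ≠ 0 → (2:ℤ)^(k+1) ∣ Δ + l^2 := fun Δ l hc => by
    by_contra hd; exact hc (h.supp Δ l (fun h4 => hd ((show (2:ℤ)^(k+1) ∣ 4 * m from ⟨m', hk4⟩).trans h4)))
  have hdiv : ∀ i : ℕ, 2 * i ≤ k + 1 → ∀ Δ l : ℤ, C Δ l ≠ 0 → ∃ n : ℤ, Δ = n^2 ∧ (2:ℤ)^i ∣ n ∧ (2:ℤ)^i ∣ l := by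
    intro i hi Δ l hc
    obtain ⟨n, hn⟩ := hs Δ l hc
    have hn' : Δ = n^2 := by rw [hn]; ring
    refine ⟨n, hn', two_sq i n l ?_⟩
    rw [← hn']
    exact (pow_dvd_pow _ hi).trans (hdv Δ l hc)
  rcases Nat.even_or_odd' k with ⟨i, hi | hi⟩
  · have hd : ∀ Δ l : ℤ, ¬ ((2^i : ℕ):ℤ) ∣ l → C Δ l = 0 := by
      intro Δ l hl
      by_contra hc
      obtain ⟨n, -, -, h2⟩ := hdiv i (by omega) Δ l hc
      exact hl (by exact_mod_cast h2)
    have hF := h.F1 hm (2^i) (2^i*m') (by rw [hk, hi]; ring) hd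
    funext Δ l
    by_contra hc
    have hc : C Δ l ≠ 0 := hc
    have hc' : C Δ (l + (2^i*m':ℕ)) ≠ 0 := by rwa [hF]
    obtain ⟨n, hn, ⟨a, ha⟩, ⟨b, hb⟩⟩ := hdiv i (by omega) Δ l hc
    have d1 := hdv _ _ hc
    have d2 := hdv _ _ hc'
    have key : ∀ x : ℤ, (2:ℤ)^(k+1) ∣ ((2:ℤ)^i * a)^2 + ((2:ℤ)^i * x)^2 → (2:ℤ) ∣ a^2 + x^2 := by
      intro x hx
      rw [show (2:ℤ)^(k+1) = 2^(2*i) * 2 by rw [hi, pow_succ], show ((2:ℤ)^i * a)^2 + ((2:ℤ)^i * x)^2 = 2^(2*i) * (a^2+x^2) by ring] at hx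
      exact Int.dvd_of_mul_dvd_mul_left (by positivity) hx
    rw [hn, ha, hb] at d1 d2
    have k1 := key b d1
    have k2 := key (b + m') (by convert d2 using 2; push_cast; ring)
    have hmo : ¬ (2:ℤ) ∣ m' := by exact_mod_cast hm'
    have : (2:ℤ) ∣ (a^2+(b+m')^2) - (a^2 + b^2) - 2 * (b * m') := dvd_sub (dvd_sub k2 k1) (dvd_mul_right _ _)
    rw [show (a^2+(b+m')^2) - (a^2 + b^2) - 2 * (b * m') = (m':ℤ)^2 by ring] at this
    exact hmo (Int.prime_two.dvd_of_dvd_pow this)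
  · refine h.F1' hm (2^(i+1)) (2^(k-(i+1)) * m') ?_ (not_dvd_pow Nat.prime_two hm' (by omega) (by omega)) ?_
    · rw [hk, ← mul_assoc, ← pow_add, Nat.add_sub_cancel' (by omega)]
    · intro Δ l hl
      by_contra hc
      obtain ⟨n, -, -, h2⟩ := hdiv (i+1) (by omega) Δ l hc
      exact hl (by exact_mod_cast h2)

lemma arith_final (hm : 0 < m) (h : JS m C) (hol : ∀ Δ l : ℤ, Δ < 0 → C Δ l = 0)
    (hsq : ∀ Δ R Δ' R' : ℤ, 0 < Δ → 0 < Δ' → C Δ R ≠ 0 → C Δ' R' ≠ 0 → IsSquare (Δ * Δ')) : C = 0 := by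
  by_cases hex : ∃ Δ0 R0 : ℤ, 0 < Δ0 ∧ C Δ0 R0 ≠ 0
  · obtain ⟨Δ0, R0, hpos, hne⟩ := hex
    have hcases : ∀ Δ l : ℤ, C Δ l ≠ 0 → Δ = 0 ∨ 0 < Δ := by
      intro Δ l hc
      rcases lt_trichotomy Δ 0 with h1 | h1 | h1
      · exact absurd (hol _ _ h1) hc
      · exact Or.inl h1
      · exact Or.inr h1
    by_cases hS : IsSquare Δ0
    · apply case_sq hm h
      intro Δ l hc
      rcases hcases Δ l hc with h0 | h0
      · exact ⟨0, by simp [h0]⟩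
      obtain ⟨s, hs⟩ := hsq Δ l Δ0 R0 h0 hpos hc hne
      obtain ⟨t, ht⟩ := hS
      have ht0 : t ≠ 0 := by rintro rfl; simp at ht; omega
      have hdvd : t ∣ s := by
        rw [← Int.pow_dvd_pow_iff (n := 2) two_ne_zero]
        exact ⟨Δ, by rw [pow_two, pow_two, ← hs, ht]; ring⟩
      obtain ⟨u, rfl⟩ := hdvd
      refine ⟨u, ?_⟩
      have : Δ * (t*t) = (u * u) * (t * t) := by rw [ht] at hs; rw [hs]; ring
      exact mul_right_cancel₀ (mul_ne_zero ht0 ht0) this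
    · exfalso
      obtain ⟨p, hp, hodd⟩ := exists_odd_prime Δ0.toNat (by omega) (by
        rintro ⟨r, hr⟩
        apply hS
        refine ⟨r, ?_⟩
        rw [← Int.toNat_of_nonneg hpos.le, hr]; push_cast; rfl)
      haveI := Fact.mk hp
      have hodd' : Odd (padicValInt p Δ0) := by
        rw [padicValInt]
        convert hodd using 2
        omega
      refine hne (case_odd hm h hol p hp ?_ Δ0 R0 hpos)
      intro Δ l hc
      rcases hcases Δ l hc with h0 | h0
      · exact Or.inl h0
      right
      obtain ⟨s, hs⟩ := hsq Δ l Δ0 R0 h0 hpos hc hne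
      have hs0 : s ≠ 0 := by
        rintro rfl
        have : 0 < Δ * Δ0 := mul_pos h0 hpos
        simp [hs] at this
      have := congrArg (padicValInt p) hs
      rw [padicValInt.mul h0.ne' hpos.ne', padicValInt.mul hs0 hs0] at this
      obtain ⟨a, ha⟩ := hodd'
      rw [Nat.odd_iff]
      omega
  · push Not at hex
    apply h.const hm
    intro Δ l hΔ
    rcases lt_or_gt_of_ne hΔ with h1 | h1
    · exact hol _ _ h1
    · exact hex Δ l h1

lemma VV_bot (hm : 0 < m) : VV m = ⊥ := by
  by_contra hne
  haveI := finVV hm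
  obtain ⟨U, hU, hU0, hT⟩ := exists_eigen hm hne
  obtain ⟨C, hC, hC0⟩ := (Submodule.ne_bot_iff U).mp hU0
  obtain ⟨h, hol⟩ : JS m C ∧ ∀ Δ l : ℤ, Δ < 0 → C Δ l = 0 := hU hC
  apply hC0
  refine arith_final hm h hol (supp_sq hm h ?_)
  intro p hp
  obtain ⟨ν, hν⟩ := hT p hp
  exact ⟨ν, hν C hC⟩
end

/-- Theorem: there are no nonzero weak Jacobi forms of weight 1 and index `m` with optimal
growth: any such form vanishes identically on `ℍ × ℂ`. -/
theorem no_weight_one_optimal_growth (m : ℕ) (hm : 0 < m) (φ : EllFormData m)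
    (hmod : ModularLaw 1 m φ.toFun) (hweak : IsWeakC m φ.coeff)
    (hOG : IsOGC φ.coeff) :
    ∀ τ z : ℂ, 0 < τ.im → φ.toFun τ z = 0 := by
  have hG : ∀ τ z : ℂ, 0 < τ.im → Gs (cf m φ.coeff) τ z = φ.toFun τ z := fun τ z hτ =>
    (φ.expansion τ z hτ).tsum_eq
  have h : JS m φ.coeff := by
    refine ⟨φ.periodic, φ.support, hOG, ⟨fun τ z hτ => (φ.expansion τ z hτ).summable, fun τ z hτ => ?_⟩⟩
    rw [hG _ _ (im_neg_inv hτ), hG _ _ hτ]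
    have := hmod τ hτ z 0 (-1) 1 0 (by norm_num)
    simpa using this
  have hmem : φ.coeff ∈ VV m := ⟨h, fun Δ l hΔ => h.hol hm Δ l hΔ⟩
  rw [VV_bot hm, Submodule.mem_bot] at hmem
  intro τ z hτ
  rw [← hG τ z hτ]
  simp [Gs, cf, hmem]
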